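/- arXiv:1411.5891 — 4 statements merged into one kernel-verified Lean document; each statement's English description precedes it below -/
import Mathlib

section
/- Let H be a complex separable Hilbert space of dimension at least 3. A surjective map Φ : B_s(H) → B_s(H) satisfies W(AB − BA) = W(Φ(A)Φ(B) − Φ(B)Φ(A)) for all A, B ∈ B_s(H) if and only if there exist a unitary operator U on H, a scalar ε ∈ {1, −1}, a subset S ⊆ D(H), and a functional f : B_s(H) → ℝ such that Φ(A) = ε·U A U* + f(A)·I whenever A ∈ B_s(H) \ S, and Φ(A) = −ε·U A U* + f(A)·I whenever A ∈ S. -/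
open scoped InnerProductSpace

noncomputable def numRange {H : Type*} [NormedAddCommGroup H] [InnerProductSpace ℂ H]
    (T : H →L[ℂ] H) : Set ℂ :=
  {z | ∃ x : H, ‖x‖ = 1 ∧ ⟪x, T x⟫_ℂ = z}

/-- `D(H)`: the set of real linear combinations of an orthogonal projection and the identity. -/
def DSet (H : Type*) [NormedAddCommGroup H] [InnerProductSpace ℂ H] [CompleteSpace H] :
    Set (H →L[ℂ] H) :=
  {A | ∃ (P : H →L[ℂ] H) (α δ : ℝ), IsSelfAdjoint P ∧ P * P = P ∧
    A = (α : ℂ) • P + (δ : ℂ) • 1}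

/-!
Preserving `W([A, B])` preserves commutativity, the norm of commutators, and membership in `D(H)`,
since `A ∈ D(H)` exactly when `W([A, B]) = -W([A, B])` for all `B`. Up to real affine changes,
rank-one projections are singled out by commutation and membership in `D(H)`, so `Φ` induces a map
on rays. As `‖[A, |x⟩⟨x|]‖²` is the variance `‖x‖² ‖A x‖² - |⟨x, A x⟩|²`, this ray map carries the
variances of `A` to those of `Φ(A)`. It therefore preserves transition probabilities, and Wigner's
theorem implements it by a unitary or antiunitary `V`. Operators with equal variances agree up to
sign and a real constant, so `Φ(A) = ±V A V⁻¹ + f(A)`.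

Off `D(H)` the sign is locally constant, because some `W([A, B])` is asymmetric and asymmetry is an
open condition; a connectedness argument on rotation generators makes it globally constant. If `V`
were antiunitary, any two of `A`, `B`, `A + B` would have opposite signs whenever `W([A, B])` is
asymmetric.
-/

open InnerProductSpace (rankOne)
open scoped Pointwise Topology

section Quadratic

variable {E : Type*} [NormedAddCommGroup E] [InnerProductSpace ℂ E]

lemma inner_self_eq_ofReal_norm_sq (x : E) : ⟪x, x⟫_ℂ = ((‖x‖ ^ 2 : ℝ) : ℂ) := by
  rw [inner_self_eq_norm_sq_to_K]; norm_cast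

lemma exists_forall_mem_apply_eq_smul {A : E →ₗ[ℂ] E} {M : Submodule ℂ E}
    (h : ∀ x ∈ M, ∃ c : ℂ, A x = c • x) : ∃ c : ℂ, ∀ x ∈ M, A x = c • x := by
  have hM : ∀ x ∈ M, A x ∈ M := fun x hx => by
    obtain ⟨c, hc⟩ := h x hx
    exact hc ▸ M.smul_mem c hx
  obtain ⟨c, hc⟩ := LinearMap.exists_eq_smul_id_of_forall_notLinearIndependent
    (f := A.restrict hM) fun x hli => by
      obtain ⟨c, hc⟩ := h x x.2
      have := (LinearIndependent.pair_iff.1 hli c (-1) (Subtype.ext (by simp [hc]))).2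
      simp at this
  exact ⟨c, fun x hx => congrArg Subtype.val (LinearMap.congr_fun hc ⟨x, hx⟩)⟩

lemma exists_smul_one_of_forall_apply_eq_smul {A : E →L[ℂ] E} (h : ∀ x, ∃ c : ℂ, A x = c • x) :
    ∃ c : ℂ, A = c • 1 := by
  obtain ⟨c, hc⟩ := exists_forall_mem_apply_eq_smul (A := (A : E →ₗ[ℂ] E)) (M := ⊤) fun x _ => h x
  exact ⟨c, ContinuousLinearMap.ext fun x => hc x trivial⟩

lemma apply_eq_smul_add_smul_of_not_linearIndependent {A : E →ₗ[ℂ] E} {x : E}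
    (hx : LinearIndependent ℂ ![A x, x]) (h : ¬LinearIndependent ℂ ![A (A x), A x, x]) :
    ∃ α β : ℂ, A (A x) = α • A x + β • x := by
  have hmem : A (A x) ∈ Submodule.span ℂ (Set.range ![A x, x]) := by
    by_contra hmem
    exact h (linearIndependent_finCons.2 ⟨hx, hmem⟩)
  rw [Matrix.range_cons, Matrix.range_cons, Matrix.range_empty, Set.union_empty,
    Set.singleton_union, Submodule.mem_span_pair] at hmem
  obtain ⟨α, β, h⟩ := hmem
  exact ⟨α, β, h.symm⟩

-- The relation satisfied by `x + y` splits along `M ⊕ Mᗮ`, and its `M`-part determines it.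
lemma apply_apply_eq_of_mem_orthogonal {A : E →ₗ[ℂ] E} {M : Submodule ℂ E}
    (hM : ∀ m ∈ M, A m ∈ M) (hM' : ∀ m ∈ Mᗮ, A m ∈ Mᗮ)
    {x y : E} (hxM : x ∈ M) (hyM : y ∈ Mᗮ) {α β : ℂ} (hx : LinearIndependent ℂ ![A x, x])
    (hαβ : A (A x) = α • A x + β • x)
    (hdep : ¬LinearIndependent ℂ ![A (A (x + y)), A (x + y), x + y]) :
    A (A y) = α • A y + β • y := by
  have split : ∀ a b c : ℂ, a • A (A (x + y)) + b • A (x + y) + c • (x + y) = 0 →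
      a • A (A x) + b • A x + c • x = 0 ∧ a • A (A y) + b • A y + c • y = 0 := by
    intro a b c h
    have hsum : (a • A (A x) + b • A x + c • x) + (a • A (A y) + b • A y + c • y) = 0 := by
      rw [← h]; simp only [map_add]; module
    have hm : a • A (A x) + b • A x + c • x ∈ M :=
      M.add_mem (M.add_mem (M.smul_mem _ (hM _ (hM _ hxM))) (M.smul_mem _ (hM _ hxM)))
        (M.smul_mem _ hxM)
    have hm' : a • A (A y) + b • A y + c • y ∈ Mᗮ :=
      Mᗮ.add_mem (Mᗮ.add_mem (Mᗮ.smul_mem _ (hM' _ (hM' _ hyM))) (Mᗮ.smul_mem _ (hM' _ hyM)))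
        (Mᗮ.smul_mem _ hyM)
    have hzero := Submodule.disjoint_def.1 M.orthogonal_disjoint _ hm
      (by rw [eq_neg_of_add_eq_zero_left hsum]; exact Mᗮ.neg_mem hm')
    exact ⟨hzero, by rwa [hzero, zero_add] at hsum⟩
  have hxy : LinearIndependent ℂ ![A (x + y), x + y] :=
    LinearIndependent.pair_iff.2 fun s t h =>
      LinearIndependent.pair_iff.1 hx s t (by simpa using (split 0 s t (by simpa using h)).1)
  obtain ⟨α', β', h⟩ := apply_eq_smul_add_smul_of_not_linearIndependent hxy hdep
  obtain ⟨hx', hy'⟩ := split 1 (-α') (-β') (by rw [h]; module)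
  obtain ⟨hα, hβ⟩ := LinearIndependent.pair_iff.1 hx (α - α') (β - β') (by
    rw [← hx', hαβ]; module)
  rw [sub_eq_zero.1 hα, sub_eq_zero.1 hβ, ← sub_eq_zero, ← hy']
  module

lemma exists_apply_apply_eq_of_forall_not_linearIndependent {A : E →L[ℂ] E}
    (hA : A.IsSymmetric) (h : ∀ x, ¬LinearIndependent ℂ ![A (A x), A x, x]) :
    ∃ α β : ℂ, ∀ x, A (A x) = α • A x + β • x := by
  by_cases hscalar : ∀ x, ∃ c : ℂ, A x = c • x
  · obtain ⟨c, rfl⟩ := exists_smul_one_of_forall_apply_eq_smul hscalar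
    exact ⟨c, 0, fun x => by simp⟩
  push Not at hscalar
  obtain ⟨x, hx⟩ := hscalar
  have hli : LinearIndependent ℂ ![A x, x] := by
    rw [LinearIndependent.pair_symm_iff, LinearIndependent.pair_iff']
    · exact fun c hc => hx c hc.symm
    · rintro rfl; exact hx 0 (by simp)
  obtain ⟨α, β, hαβ⟩ :=
    apply_eq_smul_add_smul_of_not_linearIndependent (A := (A : E →ₗ[ℂ] E)) hli (h x)
  rw [A.coe_coe] at hαβ
  set M : Submodule ℂ E := Submodule.span ℂ {A x, x}
  have hAM : ∀ m ∈ M, A m ∈ M := by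
    intro m hm
    obtain ⟨a, b, rfl⟩ := Submodule.mem_span_pair.1 hm
    refine Submodule.mem_span_pair.2 ⟨a * α + b, a * β, ?_⟩
    simp only [map_add, map_smul, hαβ]
    module
  have hAM' : ∀ m ∈ Mᗮ, A m ∈ Mᗮ :=
    LinearMap.IsSymmetric.orthogonalComplement_mem_invtSubmodule hA (p := M) hAM
  have : FiniteDimensional ℂ M := FiniteDimensional.span_of_finite ℂ (by simp)
  refine ⟨α, β, fun y => ?_⟩
  obtain ⟨m, hm, n, hn, rfl⟩ := M.exists_add_mem_mem_orthogonal y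
  have hn' : A (A n) = α • A n + β • n :=
    apply_apply_eq_of_mem_orthogonal (A := (A : E →ₗ[ℂ] E)) hAM hAM'
      (Submodule.subset_span (by simp)) hn hli hαβ (h (x + n))
  obtain ⟨a, b, rfl⟩ := Submodule.mem_span_pair.1 hm
  simp only [map_add, map_smul, hαβ, hn']
  module

end Quadratic

section DSet

variable {H : Type*} [NormedAddCommGroup H] [InnerProductSpace ℂ H] [CompleteSpace H]

lemma isSelfAdjoint_ofReal_smul {A : H →L[ℂ] H} (hA : IsSelfAdjoint A) (r : ℝ) :
    IsSelfAdjoint ((r : ℂ) • A) :=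
  IsSelfAdjoint.smul (Complex.conj_ofReal r) hA

lemma inner_apply_left {A : H →L[ℂ] H} (hA : IsSelfAdjoint A) (x y : H) :
    ⟪A x, y⟫_ℂ = ⟪x, A y⟫_ℂ :=
  hA.isSymmetric x y

lemma ofReal_smul_one_mem_DSet (r : ℝ) : (r : ℂ) • (1 : H →L[ℂ] H) ∈ DSet H :=
  ⟨0, 0, r, .zero _, by simp, by simp⟩

lemma isSelfAdjoint_of_mem_DSet {A : H →L[ℂ] H} (hA : A ∈ DSet H) : IsSelfAdjoint A := by
  obtain ⟨P, α, δ, hP, -, rfl⟩ := hA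
  exact (isSelfAdjoint_ofReal_smul hP α).add (isSelfAdjoint_ofReal_smul (.one _) δ)

lemma exists_ofReal_smul_one {c : ℂ} (hc : IsSelfAdjoint (c • (1 : H →L[ℂ] H))) :
    ∃ r : ℝ, c • (1 : H →L[ℂ] H) = (r : ℂ) • 1 := by
  rcases subsingleton_or_nontrivial H with _ | _
  · exact ⟨0, Subsingleton.elim _ _⟩
  refine ⟨c.re, ?_⟩
  rw [isSelfAdjoint_iff, star_smul, star_one] at hc
  rw [Complex.conj_eq_iff_re.1 (smul_left_injective ℂ one_ne_zero hc)]

lemma mem_DSet_of_sq_eq_smul_one {T : H →L[ℂ] H} (hT : IsSelfAdjoint T) {c : ℝ}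
    (h : T * T = (c : ℂ) • 1) (a : ℝ) : T + (a : ℂ) • 1 ∈ DSet H := by
  have hnorm : ∀ x, ‖T x‖ ^ 2 = c * ‖x‖ ^ 2 := by
    intro x
    have h' : ⟪T x, T x⟫_ℂ = c * ⟪x, x⟫_ℂ := by
      rw [inner_apply_left hT, ← mul_apply_eq_comp, h]
      simp
    rw [inner_self_eq_ofReal_norm_sq, inner_self_eq_ofReal_norm_sq] at h'
    exact_mod_cast h'
  rcases le_or_gt c 0 with hc | hc
  · have : T = 0 := by
      ext x
      have : ‖T x‖ ^ 2 ≤ 0 := hnorm x ▸ mul_nonpos_of_nonpos_of_nonneg hc (sq_nonneg _)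
      simpa using le_antisymm this (sq_nonneg _)
    rw [this, zero_add]
    exact ofReal_smul_one_mem_DSet a
  · have hs : ((√c : ℝ) : ℂ) ≠ 0 := by exact_mod_cast (Real.sqrt_pos.2 hc).ne'
    have hs2 : (c : ℂ) = √c * √c := by exact_mod_cast (Real.mul_self_sqrt hc.le).symm
    refine ⟨((1 / 2 : ℝ) : ℂ) • (1 + (((√c)⁻¹ : ℝ) : ℂ) • T), 2 * √c, a - √c,
      isSelfAdjoint_ofReal_smul ((IsSelfAdjoint.one _).add (isSelfAdjoint_ofReal_smul hT _)) _,
      ?_, ?_⟩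
    · simp only [mul_smul_comm, smul_mul_assoc, mul_add, add_mul, one_mul, mul_one, h, hs2]
      push_cast
      match_scalars <;> field_simp <;> ring
    · push_cast
      match_scalars <;> field_simp
      ring

lemma mem_DSet_of_mul_self {A : H →L[ℂ] H} (hA : IsSelfAdjoint A) {a b : ℝ}
    (h : A * A = (a : ℂ) • A + (b : ℂ) • 1) : A ∈ DSet H := by
  have hT : IsSelfAdjoint (A - ((a / 2 : ℝ) : ℂ) • 1) :=
    hA.sub (isSelfAdjoint_ofReal_smul (.one _) _)
  have := mem_DSet_of_sq_eq_smul_one hT (c := b + a ^ 2 / 4) (by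
    simp only [mul_sub, sub_mul, mul_smul_comm, smul_mul_assoc, one_mul, mul_one, h]
    push_cast
    match_scalars <;> ring) (a / 2)
  rwa [sub_add_cancel] at this

theorem mem_DSet_iff {A : H →L[ℂ] H} :
    A ∈ DSet H ↔ IsSelfAdjoint A ∧ ∃ a b : ℝ, A * A = (a : ℂ) • A + (b : ℂ) • 1 := by
  refine ⟨fun hA => ⟨isSelfAdjoint_of_mem_DSet hA, ?_⟩, fun ⟨hA, a, b, h⟩ =>
    mem_DSet_of_mul_self hA h⟩
  obtain ⟨P, α, δ, -, hP, rfl⟩ := hA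
  refine ⟨α + 2 * δ, -(δ * (α + δ)), ?_⟩
  simp only [mul_add, add_mul, mul_smul_comm, smul_mul_assoc, one_mul, mul_one, hP]
  push_cast
  module

-- If `A` is not scalar, taking adjoints in the quadratic relation forces `α` and `β` to be real.
lemma mem_DSet_of_mul_self_complex {A : H →L[ℂ] H} (hA : IsSelfAdjoint A) {α β : ℂ}
    (h : A * A = α • A + β • 1) : A ∈ DSet H := by
  by_cases hscalar : ∃ c : ℂ, A = c • 1
  · obtain ⟨c, rfl⟩ := hscalar
    obtain ⟨r, hr⟩ := exists_ofReal_smul_one hA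
    exact hr ▸ ofReal_smul_one_mem_DSet r
  have hstar : A * A = star α • A + star β • 1 := by
    simpa [star_add, star_smul, star_mul, hA.star_eq] using congrArg star h
  have hdiff : (α - star α) • A = (star β - β) • (1 : H →L[ℂ] H) := by
    rw [sub_smul, sub_smul, sub_eq_sub_iff_add_eq_add, ← h, hstar, add_comm]
  have hα : star α = α := by
    by_contra hα
    exact hscalar ⟨(α - star α)⁻¹ * (star β - β), by
      rw [mul_smul, ← hdiff, inv_smul_smul₀ (sub_ne_zero.2 (Ne.symm hα))]⟩
  have hβ : IsSelfAdjoint (β • (1 : H →L[ℂ] H)) := by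
    rw [hα, sub_self, zero_smul, eq_comm, sub_smul, sub_eq_zero] at hdiff
    rw [isSelfAdjoint_iff, star_smul, star_one, hdiff]
  obtain ⟨b, hb⟩ := exists_ofReal_smul_one hβ
  exact mem_DSet_of_mul_self hA (a := α.re) (b := b)
    (by rw [Complex.conj_eq_iff_re.1 hα, ← hb, h])

theorem exists_linearIndependent_of_notMem_DSet {A : H →L[ℂ] H} (hA : IsSelfAdjoint A)
    (hD : A ∉ DSet H) : ∃ x, LinearIndependent ℂ ![A (A x), A x, x] := by
  by_contra! hdep
  obtain ⟨α, β, h⟩ := exists_apply_apply_eq_of_forall_not_linearIndependent hA.isSymmetric hdep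
  exact hD (mem_DSet_of_mul_self_complex hA (ContinuousLinearMap.ext h))

end DSet

section NumericalRange

variable {E : Type*} [NormedAddCommGroup E] [InnerProductSpace ℂ E]

lemma numRange_neg (T : E →L[ℂ] E) : numRange (-T) = -numRange T := by
  ext z
  simp only [numRange, Set.mem_neg, Set.mem_ofPred_eq, neg_apply, inner_neg_right,
    neg_eq_iff_eq_neg]

/-- The supremum of the imaginary parts of the numerical range. A commutator of self-adjoint
operators has numerical range in `iℝ`, of which this is the upper end. -/
noncomputable def upperEdge (T : E →L[ℂ] E) : ℝ :=
  sSup (Complex.im '' numRange T)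

lemma abs_im_le_norm_of_mem_numRange {T : E →L[ℂ] E} {z : ℂ} (hz : z ∈ numRange T) :
    |z.im| ≤ ‖T‖ := by
  obtain ⟨x, hx, rfl⟩ := hz
  calc |(⟪x, T x⟫_ℂ).im| ≤ ‖⟪x, T x⟫_ℂ‖ := Complex.abs_im_le_norm _
    _ ≤ ‖x‖ * ‖T x‖ := norm_inner_le_norm _ _
    _ ≤ ‖T‖ := by simpa [hx] using T.le_opNorm x

lemma bddAbove_im_numRange (T : E →L[ℂ] E) : BddAbove (Complex.im '' numRange T) :=
  ⟨‖T‖, Set.forall_mem_image.2 fun _ hz => (abs_le.1 (abs_im_le_norm_of_mem_numRange hz)).2⟩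

lemma lipschitzWith_upperEdge [Nontrivial E] :
    LipschitzWith 1 (upperEdge : (E →L[ℂ] E) → ℝ) := by
  refine LipschitzWith.of_le_add fun S T => ?_
  obtain ⟨e, he⟩ := exists_norm_eq E zero_le_one
  refine csSup_le ⟨_, ⟪e, S e⟫_ℂ, ⟨e, he, rfl⟩, rfl⟩ ?_
  rintro _ ⟨_, ⟨x, hx, rfl⟩, rfl⟩
  have hT : (⟪x, T x⟫_ℂ).im ≤ upperEdge T :=
    le_csSup (bddAbove_im_numRange T) ⟨_, ⟨x, hx, rfl⟩, rfl⟩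
  have hST := abs_le.1 (abs_im_le_norm_of_mem_numRange (T := S - T) ⟨x, hx, rfl⟩)
  rw [sub_apply, inner_sub_right, Complex.sub_im] at hST
  rw [dist_eq_norm]
  linarith [hST.2]

/-- The numerical range extends further to one side of the real axis than to the other. This is
an open condition which excludes `W(T) = -W(T)`. -/
def IsEdgeAsymmetric (T : E →L[ℂ] E) : Prop :=
  upperEdge T ≠ upperEdge (-T)

lemma isOpen_setOf_isEdgeAsymmetric [Nontrivial E] :
    IsOpen {T : E →L[ℂ] E | IsEdgeAsymmetric T} :=
  isOpen_ne_fun lipschitzWith_upperEdge.continuous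
    (lipschitzWith_upperEdge.continuous.comp continuous_neg)

lemma IsEdgeAsymmetric.numRange_ne_neg {T : E →L[ℂ] E} (hT : IsEdgeAsymmetric T) :
    numRange T ≠ -numRange T := by
  intro h
  rw [← numRange_neg] at h
  exact hT (congrArg (fun W => sSup (Complex.im '' W)) h)

lemma upperEdge_I_smul_eq {K : E →L[ℂ] E} {a : ℝ} {u : E} (hu : ‖u‖ = 1)
    (hKu : (⟪u, K u⟫_ℂ).re = a) (hle : ∀ x, ‖x‖ = 1 → (⟪x, K x⟫_ℂ).re ≤ a) :
    upperEdge (Complex.I • K) = a := by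
  refine IsGreatest.csSup_eq ⟨⟨_, ⟨u, hu, rfl⟩, ?_⟩, ?_⟩
  · simpa [inner_smul_right] using hKu
  · rintro _ ⟨_, ⟨x, hx, rfl⟩, rfl⟩
    simpa [inner_smul_right] using hle x hx

end NumericalRange

section Conjugation

variable {E F : Type*} [NormedAddCommGroup E] [InnerProductSpace ℂ E] [NormedAddCommGroup F]
  [InnerProductSpace ℂ F] {σ : ℂ →+* ℂ}

lemma eq_id_or_eq_starRingEnd (σ : ℂ →+* ℂ) [RingHomIsometric σ] :
    σ = RingHom.id ℂ ∨ σ = starRingEnd ℂ :=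
  Complex.ringHom_eq_id_or_conj_of_continuous
    (AddMonoidHomClass.isometry_of_norm σ fun _ => RingHomIsometric.norm_map).continuous

lemma inner_map_map_eq_apply_inner [RingHomIsometric σ] (V : E →ₛₗᵢ[σ] F) (x y : E) :
    ⟪V x, V y⟫_ℂ = σ ⟪x, y⟫_ℂ := by
  have hre : ∀ x y, (⟪V x, V y⟫_ℂ).re = (⟪x, y⟫_ℂ).re := fun x y => by
    have h := re_inner_eq_norm_add_mul_self_sub_norm_sub_mul_self_div_four (𝕜 := ℂ) (V x) (V y)
    rw [← map_add, ← map_sub, V.norm_map, V.norm_map] at h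
    exact h.trans
      (re_inner_eq_norm_add_mul_self_sub_norm_sub_mul_self_div_four (𝕜 := ℂ) x y).symm
  have him := hre (Complex.I • x) y
  rw [V.map_smulₛₗ, inner_smul_left, inner_smul_left] at him
  obtain rfl | rfl := eq_id_or_eq_starRingEnd σ
  · exact V.inner_map_map x y
  · refine Complex.ext (by rw [Complex.conj_re, hre]) ?_
    rw [Complex.conj_im, ← neg_eq_iff_eq_neg]
    simpa using him

variable [RingHomInvPair σ σ]

/-- The operator `V T V⁻¹`, for a unitary or antiunitary `V`. -/
noncomputable def conjugate (V : E ≃ₛₗᵢ[σ] F) (T : E →L[ℂ] E) : F →L[ℂ] F :=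
  (V : E →SL[σ] F).comp (T.comp (V.symm : F →SL[σ] E))

lemma conjugate_apply (V : E ≃ₛₗᵢ[σ] F) (T : E →L[ℂ] E) (x : F) :
    conjugate V T x = V (T (V.symm x)) := rfl

variable [RingHomIsometric σ]

lemma inner_conjugate_apply (V : E ≃ₛₗᵢ[σ] F) (T : E →L[ℂ] E) (x y : F) :
    ⟪x, conjugate V T y⟫_ℂ = σ ⟪V.symm x, T (V.symm y)⟫_ℂ := by
  rw [← inner_map_map_eq_apply_inner V.toLinearIsometry]
  simp [conjugate_apply]

lemma numRange_conjugate (V : E ≃ₛₗᵢ[σ] F) (T : E →L[ℂ] E) :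
    numRange (conjugate V T) = σ '' numRange T := by
  ext z
  constructor
  · rintro ⟨x, hx, rfl⟩
    exact ⟨_, ⟨V.symm x, by rwa [V.symm.norm_map], rfl⟩, (inner_conjugate_apply V T x x).symm⟩
  · rintro ⟨_, ⟨x, hx, rfl⟩, rfl⟩
    exact ⟨V x, by rwa [V.norm_map], by simp [inner_conjugate_apply]⟩

lemma conjugate_eq_of_mem_unitary [CompleteSpace E] (U : unitary (E →L[ℂ] E)) (T : E →L[ℂ] E) :
    conjugate (Unitary.linearIsometryEquiv U) T = U * T * star (U : E →L[ℂ] E) := rfl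

lemma numRange_unitary_conj [CompleteSpace E] {U : E →L[ℂ] E} (hU : U ∈ unitary (E →L[ℂ] E))
    (T : E →L[ℂ] E) : numRange (U * T * star U) = numRange T := by
  rw [← conjugate_eq_of_mem_unitary ⟨U, hU⟩, numRange_conjugate, RingHom.coe_id, Set.image_id]

end Conjugation

section TraceZero

lemma exists_extremal_eigenvalues {V : Type*} [NormedAddCommGroup V] [InnerProductSpace ℂ V]
    (hV : Module.finrank ℂ V = 3) {K : V →ₗ[ℂ] V} (hK : K.IsSymmetric)
    (hinj : Function.Injective K) (htr : K.trace ℂ V = 0) :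
    ∃ a b : ℝ, b < 0 ∧ 0 < a ∧ a ≠ -b ∧ (∃ u, ‖u‖ = 1 ∧ K u = (a : ℂ) • u) ∧
      (∃ v, ‖v‖ = 1 ∧ K v = (b : ℂ) • v) ∧
      ∀ x, b * ‖x‖ ^ 2 ≤ (⟪x, K x⟫_ℂ).re ∧ (⟪x, K x⟫_ℂ).re ≤ a * ‖x‖ ^ 2 := by
  have : FiniteDimensional ℂ V := Module.finite_of_finrank_eq_succ hV
  let e := hK.eigenvectorBasis hV
  let l := hK.eigenvalues hV
  have he : ∀ i, K (e i) = (l i : ℂ) • e i := hK.apply_eigenvectorBasis hV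
  have hne : ∀ i, l i ≠ 0 := by
    intro i hi
    have : K (e i) = 0 := by rw [he, hi, Complex.ofReal_zero, zero_smul]
    exact e.toBasis.ne_zero i (by simpa using hinj (this.trans (map_zero K).symm))
  have hsum : l 0 + l 1 + l 2 = 0 := by
    rw [hK.trace_eq_sum_eigenvalues hV] at htr
    rw [← Fin.sum_univ_three]
    exact Complex.ofReal_injective htr
  have h01 : l 1 ≤ l 0 := hK.eigenvalues_antitone hV (by decide)
  have h12 : l 2 ≤ l 1 := hK.eigenvalues_antitone hV (by decide)
  have hform : ∀ x, (⟪x, K x⟫_ℂ).re = ∑ i, l i * ‖⟪e i, x⟫_ℂ‖ ^ 2 := by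
    intro x
    rw [← e.sum_inner_mul_inner, Complex.re_sum]
    refine Finset.sum_congr rfl fun i _ => ?_
    rw [← hK, he, inner_smul_left, Complex.conj_ofReal, mul_left_comm, ← inner_conj_symm x,
      Complex.conj_mul', ← Complex.ofReal_pow, ← Complex.ofReal_mul, Complex.ofReal_re]
  have hnorm : ∀ x, ‖x‖ ^ 2 = ∑ i, ‖⟪e i, x⟫_ℂ‖ ^ 2 := fun x => (e.sum_sq_norm_inner_right x).symm
  refine ⟨l 0, l 2, ?_, ?_, ?_, ⟨e 0, e.norm_eq_one 0, he 0⟩, ⟨e 2, e.norm_eq_one 2, he 2⟩,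
    fun x => ?_⟩
  · exact lt_of_le_of_ne (by linarith) (hne 2)
  · exact lt_of_le_of_ne (by linarith) (hne 0).symm
  · exact fun h => hne 1 (by linarith)
  · rw [hform, hnorm, Fin.sum_univ_three, Fin.sum_univ_three]
    constructor <;>
      nlinarith [sq_nonneg ‖⟪e 0, x⟫_ℂ‖, sq_nonneg ‖⟪e 1, x⟫_ℂ‖, sq_nonneg ‖⟪e 2, x⟫_ℂ‖]

variable {H : Type*} [NormedAddCommGroup H] [InnerProductSpace ℂ H]

lemma re_inner_apply_self_of_eq_smul {T : H →L[ℂ] H} {w : H} {r : ℝ} (hw : ‖w‖ = 1)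
    (h : T w = (r : ℂ) • w) : (⟪w, T w⟫_ℂ).re = r := by
  rw [h, inner_smul_right, inner_self_eq_ofReal_norm_sq, hw]
  simp

lemma inner_apply_self_eq_inner_starProjection {K : H →L[ℂ] H} (hK : K.IsSymmetric)
    (M : Submodule ℂ H) [M.HasOrthogonalProjection] (hKM : ∀ x, K x ∈ M) (x : H) :
    ⟪x, K x⟫_ℂ = ⟪M.starProjection x, K (M.starProjection x)⟫_ℂ := by
  have hP : ∀ y, ⟪x, K y⟫_ℂ = ⟪M.starProjection x, K y⟫_ℂ := fun y => by
    rw [M.inner_starProjection_left_eq_right, M.starProjection_eq_self_iff.2 (hKM y)]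
  have hK' : ∀ y z, ⟪K y, z⟫_ℂ = ⟪y, K z⟫_ℂ := hK
  rw [hP, ← hK', ← inner_conj_symm, hP, inner_conj_symm, hK']

lemma isEdgeAsymmetric_I_smul_of_trace_eq_zero {K : H →L[ℂ] H} (hK : K.IsSymmetric)
    {M : Submodule ℂ H} (hM : Module.finrank ℂ M = 3) (hKM : ∀ x, K x ∈ M)
    (hinj : ∀ x ∈ M, K x = 0 → x = 0)
    (htr : LinearMap.trace ℂ M ((K : H →ₗ[ℂ] H).restrict fun x _ => hKM x) = 0) :
    IsEdgeAsymmetric (Complex.I • K) := by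
  have : FiniteDimensional ℂ M := Module.finite_of_finrank_eq_succ hM
  obtain ⟨a, b, hb, ha, hab, ⟨u, hu, hKu⟩, ⟨v, hv, hKv⟩, hbound⟩ :=
    exists_extremal_eigenvalues hM (hK.restrict_invariant fun x _ => hKM x)
      (LinearMap.ker_eq_bot.1 <| LinearMap.ker_eq_bot'.2 fun x hx =>
        Subtype.ext (hinj x x.2 (congrArg Subtype.val hx))) htr
  have hbound' : ∀ x, ‖x‖ = 1 → b ≤ (⟪x, K x⟫_ℂ).re ∧ (⟪x, K x⟫_ℂ).re ≤ a := by
    intro x hx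
    have hle : ‖M.starProjection x‖ ^ 2 ≤ 1 :=
      pow_le_one₀ (norm_nonneg _) (hx ▸ M.norm_starProjection_apply_le x)
    rw [inner_apply_self_eq_inner_starProjection hK M hKM]
    obtain ⟨hlow, hup⟩ := hbound ⟨M.starProjection x, M.starProjection_apply_mem x⟩
    constructor
    · exact le_trans (by simpa using mul_le_mul_of_nonpos_left hle hb.le) hlow
    · exact hup.trans (by simpa using mul_le_mul_of_nonneg_left hle ha.le)
  have hupper : upperEdge (Complex.I • K) = a :=
    upperEdge_I_smul_eq hu (re_inner_apply_self_of_eq_smul hu (congrArg Subtype.val hKu))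
      fun x hx => (hbound' x hx).2
  have hlower : upperEdge (-(Complex.I • K)) = -b := by
    rw [← smul_neg]
    refine upperEdge_I_smul_eq hv ?_ fun x hx => ?_
    · exact re_inner_apply_self_of_eq_smul hv
        (by rw [Complex.ofReal_neg, neg_smul]; exact congrArg (-Subtype.val ·) hKv)
    · rw [neg_apply, inner_neg_right, Complex.neg_re]
      exact neg_le_neg (hbound' x hx).1
  rwa [IsEdgeAsymmetric, hupper, hlower]

lemma forall_inner_eq_zero_of_linearIndependent {f₀ f₁ f₂ z : H}
    (hli : LinearIndependent ℂ ![f₂, f₁, f₀])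
    (hz : (rankOne ℂ f₂ f₀ + rankOne ℂ f₀ f₂ - (2 : ℂ) • rankOne ℂ f₁ f₁) z = 0) :
    ∀ i, ⟪![f₂, f₁, f₀] i, z⟫_ℂ = 0 := by
  have hcoeff := Fintype.linearIndependent_iff.1 hli
    ![⟪f₀, z⟫_ℂ, -(2 * ⟪f₁, z⟫_ℂ), ⟪f₂, z⟫_ℂ] (by
      simp only [Fin.sum_univ_three, Matrix.cons_val, ← hz, sub_apply, add_apply, smul_apply,
        InnerProductSpace.rankOne_apply]
      module)
  intro i
  fin_cases i
  · simpa using hcoeff 2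
  · simpa using hcoeff 1
  · simpa using hcoeff 0

lemma isEdgeAsymmetric_of_linearIndependent {f₀ f₁ f₂ : H}
    (hli : LinearIndependent ℂ ![f₂, f₁, f₀]) (htr : ⟪f₀, f₂⟫_ℂ + ⟪f₂, f₀⟫_ℂ = 2 * ⟪f₁, f₁⟫_ℂ) :
    IsEdgeAsymmetric
      (Complex.I • (rankOne ℂ f₂ f₀ + rankOne ℂ f₀ f₂ - (2 : ℂ) • rankOne ℂ f₁ f₁)) := by
  let M : Submodule ℂ H := Submodule.span ℂ (Set.range ![f₂, f₁, f₀])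
  have hmem : ∀ i, ![f₂, f₁, f₀] i ∈ M := fun i => Submodule.subset_span ⟨i, rfl⟩
  have : FiniteDimensional ℂ M := FiniteDimensional.span_of_finite ℂ (Set.finite_range _)
  let g₀ : M := ⟨f₀, hmem 2⟩
  let g₁ : M := ⟨f₁, hmem 1⟩
  let g₂ : M := ⟨f₂, hmem 0⟩
  set K : H →L[ℂ] H := rankOne ℂ f₂ f₀ + rankOne ℂ f₀ f₂ - (2 : ℂ) • rankOne ℂ f₁ f₁
  have hKM : ∀ x, K x ∈ M := fun x =>
    (⟪f₀, x⟫_ℂ • g₂ + ⟪f₂, x⟫_ℂ • g₀ - (2 : ℂ) • ⟪f₁, x⟫_ℂ • g₁).2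
  refine isEdgeAsymmetric_I_smul_of_trace_eq_zero ?_ (M := M) ?_ hKM ?_ ?_
  · intro x y
    simp only [K, ContinuousLinearMap.coe_coe, sub_apply, add_apply, smul_apply,
      InnerProductSpace.rankOne_apply, inner_sub_left, inner_sub_right, inner_add_left,
      inner_add_right, inner_smul_left, inner_smul_right, inner_conj_symm, Complex.conj_ofNat]
    ring
  · rw [finrank_span_eq_card hli, Fintype.card_fin]
  · intro z hz hKz
    have hM : M ≤ (ℂ ∙ z)ᗮ := Submodule.span_le.2 <| Set.range_subset_iff.2 fun i =>
      Submodule.mem_orthogonal_singleton_iff_inner_left.2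
        (forall_inner_eq_zero_of_linearIndependent hli hKz i)
    exact inner_self_eq_zero.1 (Submodule.mem_orthogonal_singleton_iff_inner_left.1 (hM hz))
  · have hrestrict : (K : H →ₗ[ℂ] H).restrict (fun x _ => hKM x) =
        ((rankOne ℂ g₂ g₀ + rankOne ℂ g₀ g₂ - (2 : ℂ) • rankOne ℂ g₁ g₁ : M →L[ℂ] M) :
          M →ₗ[ℂ] M) := rfl
    simp only [hrestrict, ContinuousLinearMap.toLinearMap_sub,
      ContinuousLinearMap.toLinearMap_add, ContinuousLinearMap.toLinearMap_smul,
      map_sub, map_add, map_smul, InnerProductSpace.trace_rankOne, Submodule.coe_inner, smul_eq_mul]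
    exact sub_eq_zero.2 htr

end TraceZero

section CommutatorRange

variable {H : Type*} [NormedAddCommGroup H] [InnerProductSpace ℂ H]

/-- The self-adjoint operator `i (|v⟩⟨u| - |u⟩⟨v|)`, which generates the rotations of the plane
spanned by `u` and `v`. -/
noncomputable def rotationGenerator (u v : H) : H →L[ℂ] H :=
  Complex.I • (rankOne ℂ v u - rankOne ℂ u v)

lemma rotationGenerator_apply (u v x : H) :
    rotationGenerator u v x = Complex.I • (⟪u, x⟫_ℂ • v - ⟪v, x⟫_ℂ • u) := rfl

variable [CompleteSpace H]

lemma isSelfAdjoint_rotationGenerator (u v : H) : IsSelfAdjoint (rotationGenerator u v) := by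
  simp only [isSelfAdjoint_iff, rotationGenerator, star_smul, star_sub,
    ContinuousLinearMap.star_eq_adjoint, InnerProductSpace.adjoint_rankOne, Complex.star_def,
    Complex.conj_I, neg_smul, smul_sub]
  abel

lemma lie_rotationGenerator_apply_self {A : H →L[ℂ] H} (hA : IsSelfAdjoint A) (x : H) :
    ⁅A, rotationGenerator x (A x)⁆ = Complex.I •
      (rankOne ℂ (A (A x)) x + rankOne ℂ x (A (A x)) - (2 : ℂ) • rankOne ℂ (A x) (A x)) := by
  ext z
  simp only [Ring.lie_def, sub_apply, mul_apply_eq_comp, rotationGenerator_apply, smul_apply,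
    add_apply, InnerProductSpace.rankOne_apply, map_smul, map_sub, ← inner_apply_left hA]
  module

lemma exists_isEdgeAsymmetric_lie {A : H →L[ℂ] H} (hA : IsSelfAdjoint A) (hD : A ∉ DSet H) :
    ∃ x, LinearIndependent ℂ ![x, A x] ∧ IsEdgeAsymmetric ⁅A, rotationGenerator x (A x)⁆ := by
  obtain ⟨x, hx⟩ := exists_linearIndependent_of_notMem_DSet hA hD
  refine ⟨x, LinearIndependent.pair_symm_iff.1 (linearIndependent_finSucc.1 hx).1, ?_⟩
  rw [lie_rotationGenerator_apply_self hA]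
  refine isEdgeAsymmetric_of_linearIndependent hx ?_
  rw [inner_apply_left hA, inner_apply_left hA x, two_mul]

-- The symmetry `2P - 1` attached to `A = αP + δ` conjugates `⁅A, B⁆` to its negative.
lemma numRange_lie_eq_neg_of_mem_DSet {A : H →L[ℂ] H} (hA : A ∈ DSet H) (B : H →L[ℂ] H) :
    numRange ⁅A, B⁆ = -numRange ⁅A, B⁆ := by
  obtain ⟨P, α, δ, hP, hPP, rfl⟩ := hA
  have hPP' : ∀ T, P * (P * T) = P * T := fun T => by rw [← mul_assoc, hPP]
  have hstar : star ((2 : ℂ) • P - 1) = (2 : ℂ) • P - 1 := by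
    rw [star_sub, star_smul, hP.star_eq, star_one, Complex.star_def, Complex.conj_ofNat]
  have hU : (2 : ℂ) • P - 1 ∈ unitary (H →L[ℂ] H) := by
    have : ((2 : ℂ) • P - 1) * ((2 : ℂ) • P - 1) = 1 := by
      simp only [mul_sub, sub_mul, mul_smul_comm, smul_mul_assoc, hPP, mul_one, one_mul]
      module
    rw [Unitary.mem_iff, hstar]
    exact ⟨this, this⟩
  rw [← numRange_neg, ← numRange_unitary_conj hU ⁅(α : ℂ) • P + (δ : ℂ) • 1, B⁆, hstar]
  congr 1
  simp only [Ring.lie_def, mul_sub, sub_mul, mul_add, add_mul, mul_smul_comm, smul_mul_assoc,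
    mul_assoc, hPP, hPP', mul_one, one_mul]
  module

theorem mem_DSet_iff_numRange_lie_eq_neg {A : H →L[ℂ] H} (hA : IsSelfAdjoint A) :
    A ∈ DSet H ↔ ∀ B : H →L[ℂ] H, IsSelfAdjoint B → numRange ⁅A, B⁆ = -numRange ⁅A, B⁆ := by
  refine ⟨fun h B _ => numRange_lie_eq_neg_of_mem_DSet h B, fun h => ?_⟩
  by_contra hD
  obtain ⟨x, -, hx⟩ := exists_isEdgeAsymmetric_lie hA hD
  exact hx.numRange_ne_neg (h _ (isSelfAdjoint_rotationGenerator _ _))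

end CommutatorRange

section Variance

variable {H : Type*} [NormedAddCommGroup H] [InnerProductSpace ℂ H]

/-- `‖x‖⁴` times the variance `⟨A²⟩ - ⟨A⟩²` of a self-adjoint operator `A` in the state
`x / ‖x‖`. -/
noncomputable def stateVariance (A : H →L[ℂ] H) (x : H) : ℝ :=
  ‖x‖ ^ 2 * ‖A x‖ ^ 2 - ‖⟪x, A x⟫_ℂ‖ ^ 2

lemma stateVariance_eq_zero_iff {A : H →L[ℂ] H} {x : H} :
    stateVariance A x = 0 ↔ ∃ c : ℂ, A x = c • x := by
  rw [stateVariance, sub_eq_zero, ← mul_pow, eq_comm,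
    pow_left_inj₀ (norm_nonneg _) (by positivity) two_ne_zero]
  constructor
  · intro h
    rcases eq_or_ne x 0 with rfl | hx
    · exact ⟨0, by simp⟩
    · have htfae := (norm_inner_eq_norm_tfae ℂ x (A x)).out 0 2
      exact (htfae.1 h).resolve_left hx
  · rintro ⟨c, hc⟩
    rw [hc, inner_smul_right, inner_self_eq_norm_sq_to_K, norm_smul, norm_mul, norm_pow,
      RCLike.norm_ofReal, abs_norm]
    ring

lemma stateVariance_rankOne_self (x y : H) :
    stateVariance (rankOne ℂ y y) x =
      ‖⟪x, y⟫_ℂ‖ ^ 2 * ((‖x‖ * ‖y‖) ^ 2 - ‖⟪x, y⟫_ℂ‖ ^ 2) := by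
  simp only [stateVariance, InnerProductSpace.rankOne_apply, inner_smul_right, norm_mul, norm_smul,
    norm_inner_symm y x]
  ring

lemma rotationGenerator_pow_three {u v : H} {r : ℝ} (h : ⟪u, v⟫_ℂ = r) :
    rotationGenerator u v ^ 3 = (((‖u‖ * ‖v‖) ^ 2 - r ^ 2 : ℝ) : ℂ) • rotationGenerator u v := by
  have h' : ⟪v, u⟫_ℂ = r := by rw [← inner_conj_symm, h, Complex.conj_ofReal]
  have hu := inner_self_eq_ofReal_norm_sq u
  have hv := inner_self_eq_ofReal_norm_sq v
  ext z
  simp only [pow_three, mul_apply_eq_comp, smul_apply, rotationGenerator_apply, inner_smul_right,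
    inner_sub_right, h, h', hu, hv]
  push_cast
  match_scalars <;> (ring_nf; simp only [Complex.I_pow_three]; ring)

variable [CompleteSpace H]

lemma norm_sq_rotationGenerator {u v : H} {r : ℝ} (h : ⟪u, v⟫_ℂ = r) :
    ‖rotationGenerator u v‖ ^ 2 = (‖u‖ * ‖v‖) ^ 2 - r ^ 2 := by
  set T := rotationGenerator u v
  have hT : IsSelfAdjoint T := isSelfAdjoint_rotationGenerator u v
  have hr : |r| ≤ ‖u‖ * ‖v‖ := by
    simpa [h] using norm_inner_le_norm (𝕜 := ℂ) u v
  have hpos : 0 ≤ (‖u‖ * ‖v‖) ^ 2 - r ^ 2 :=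
    sub_nonneg.2 (sq_le_sq' (neg_le_of_abs_le hr) (le_of_abs_le hr))
  rcases eq_or_ne T 0 with hT0 | hT0
  · have hvu : ⟪v, T u⟫_ℂ = Complex.I * ((‖u‖ * ‖v‖) ^ 2 - r ^ 2 : ℝ) := by
      simp only [T, rotationGenerator_apply, inner_smul_right, inner_sub_right,
        inner_self_eq_ofReal_norm_sq, ← inner_conj_symm v u, h, Complex.conj_ofReal]
      push_cast
      ring
    rw [hT0, zero_apply, inner_zero_right, eq_comm, mul_eq_zero_iff_left Complex.I_ne_zero] at hvu
    rw [hT0, norm_zero, zero_pow two_ne_zero, Complex.ofReal_eq_zero.1 hvu]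
  · have hquartic : (‖T‖ ^ 2) ^ 2 = ((‖u‖ * ‖v‖) ^ 2 - r ^ 2) * ‖T‖ ^ 2 :=
      calc (‖T‖ ^ 2) ^ 2 = ‖T ^ 2 ^ 2‖ := by rw [hT.norm_pow_two_pow]; ring
        _ = ‖T ^ 3 * T‖ := by rw [← pow_succ]; rfl
        _ = ((‖u‖ * ‖v‖) ^ 2 - r ^ 2) * ‖T‖ ^ 2 := by
          rw [rotationGenerator_pow_three h, smul_mul_assoc, norm_smul, hT.norm_mul_self,
            Complex.norm_real, Real.norm_of_nonneg hpos]
    exact mul_right_cancel₀ (pow_ne_zero 2 (norm_ne_zero_iff.2 hT0)) ((sq _).symm.trans hquartic)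

lemma I_smul_lie_rankOne_self {B : H →L[ℂ] H} (hB : IsSelfAdjoint B) (x : H) :
    Complex.I • ⁅rankOne ℂ x x, B⁆ = rotationGenerator (B x) x := by
  ext z
  simp only [Ring.lie_def, smul_apply, sub_apply, mul_apply_eq_comp, map_smul,
    InnerProductSpace.rankOne_apply, rotationGenerator_apply, inner_apply_left hB]

theorem norm_sq_lie_rankOne_self {B : H →L[ℂ] H} (hB : IsSelfAdjoint B) (x : H) :
    ‖⁅rankOne ℂ x x, B⁆‖ ^ 2 = stateVariance B x := by
  obtain ⟨r, hr⟩ : ∃ r : ℝ, ⟪x, B x⟫_ℂ = r :=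
    Complex.conj_eq_iff_real.1 (by rw [inner_conj_symm, inner_apply_left hB])
  have hr' : ⟪B x, x⟫_ℂ = r := by rw [inner_apply_left hB, hr]
  rw [← one_mul ‖_‖, ← Complex.norm_I, ← norm_smul, I_smul_lie_rankOne_self hB,
    norm_sq_rotationGenerator hr', stateVariance, hr, Complex.norm_real, Real.norm_eq_abs, sq_abs,
    mul_pow, mul_comm]

lemma commute_rankOne_self_iff {B : H →L[ℂ] H} (hB : IsSelfAdjoint B) {x : H} :
    Commute (rankOne ℂ x x) B ↔ ∃ c : ℂ, B x = c • x := by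
  rw [← stateVariance_eq_zero_iff, ← norm_sq_lie_rankOne_self hB, sq_eq_zero_iff, norm_eq_zero,
    commute_iff_lie_eq]

lemma stateVariance_smul_add_smul_one {A : H →L[ℂ] H} (hA : IsSelfAdjoint A) (a b : ℝ) (x : H) :
    stateVariance ((a : ℂ) • A + (b : ℂ) • 1) x = a ^ 2 * stateVariance A x := by
  have hlie : ⁅rankOne ℂ x x, (a : ℂ) • A + (b : ℂ) • 1⁆ = (a : ℂ) • ⁅rankOne ℂ x x, A⁆ := by
    simp only [Ring.lie_def, mul_add, add_mul, mul_smul_comm, smul_mul_assoc, mul_one, one_mul]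
    module
  have hself : IsSelfAdjoint ((a : ℂ) • A + (b : ℂ) • 1) :=
    (isSelfAdjoint_ofReal_smul hA a).add (isSelfAdjoint_ofReal_smul (.one _) b)
  rw [← norm_sq_lie_rankOne_self hself, hlie, norm_smul, mul_pow, norm_sq_lie_rankOne_self hA,
    Complex.norm_real, Real.norm_eq_abs, sq_abs]

lemma isSelfAdjoint_I_smul_lie {A B : H →L[ℂ] H} (hA : IsSelfAdjoint A) (hB : IsSelfAdjoint B) :
    IsSelfAdjoint (Complex.I • ⁅A, B⁆) := by
  rw [isSelfAdjoint_iff, Ring.lie_def, star_smul, star_sub, star_mul, star_mul, hA.star_eq,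
    hB.star_eq, Complex.star_def, Complex.conj_I, neg_smul, ← smul_neg, neg_sub]

lemma norm_le_of_numRange_subset {S T : H →L[ℂ] H} (hS : IsSelfAdjoint (Complex.I • S))
    (h : numRange S ⊆ numRange T) : ‖S‖ ≤ ‖T‖ := by
  have hnorm : ‖S‖ = ‖Complex.I • S‖ := by rw [norm_smul, Complex.norm_I, one_mul]
  rw [hnorm, ContinuousLinearMap.norm_eq_iSup_rayleighQuotient _ hS.isSymmetric]
  refine ciSup_le fun x => ?_
  rcases eq_or_ne x 0 with rfl | hx
  · simp
  have hunit : ‖((‖x‖⁻¹ : ℝ) : ℂ) • x‖ = 1 := by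
    rw [Complex.ofReal_inv]; exact norm_smul_inv_norm hx
  rw [← ContinuousLinearMap.rayleigh_smul (Complex.I • S) x
      (Complex.ofReal_ne_zero.2 (inv_ne_zero (norm_ne_zero_iff.2 hx)))]
  generalize ((‖x‖⁻¹ : ℝ) : ℂ) • x = v at hunit
  calc |(Complex.I • S).rayleighQuotient v| = |(⟪v, S v⟫_ℂ).im| := by
        rw [ContinuousLinearMap.rayleighQuotient, ContinuousLinearMap.reApplyInnerSelf_apply,
          hunit, ← inner_conj_symm, smul_apply, inner_smul_right]
        simp [-inner_conj_symm]
    _ ≤ ‖T‖ := abs_im_le_norm_of_mem_numRange (h ⟨v, hunit, rfl⟩)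

lemma norm_lie_eq_of_numRange_eq {A B C D : H →L[ℂ] H} (hA : IsSelfAdjoint A)
    (hB : IsSelfAdjoint B) (hC : IsSelfAdjoint C) (hD : IsSelfAdjoint D)
    (h : numRange ⁅A, B⁆ = numRange ⁅C, D⁆) : ‖⁅A, B⁆‖ = ‖⁅C, D⁆‖ :=
  (norm_le_of_numRange_subset (isSelfAdjoint_I_smul_lie hA hB) h.subset).antisymm
    (norm_le_of_numRange_subset (isSelfAdjoint_I_smul_lie hC hD) h.superset)

end Variance

section RankOne

variable {H : Type*} [NormedAddCommGroup H] [InnerProductSpace ℂ H]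

lemma exists_ne_zero_inner_eq_zero (hdim : 3 ≤ Module.rank ℂ H) (x y : H) :
    ∃ z ≠ 0, ⟪x, z⟫_ℂ = 0 ∧ ⟪y, z⟫_ℂ = 0 := by
  let M : Submodule ℂ H := Submodule.span ℂ {x, y}
  have : FiniteDimensional ℂ M := FiniteDimensional.span_of_finite ℂ (Set.toFinite _)
  have hM : Mᗮ ≠ ⊥ := by
    rw [Ne, Submodule.orthogonal_eq_bot_iff]
    intro htop
    have hle : Module.rank ℂ M ≤ 2 :=
      calc Module.rank ℂ M ≤ Cardinal.mk ({x, y} : Set H) := rank_span_le _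
        _ ≤ 2 := Cardinal.mk_insert_le.trans (by rw [Cardinal.mk_singleton, one_add_one_eq_two])
    rw [htop, rank_top] at hle
    exact absurd (hdim.trans hle) (by norm_num)
  obtain ⟨z, hz, hz0⟩ := Submodule.exists_mem_ne_zero_of_ne_bot hM
  exact ⟨z, hz0, hz x (Submodule.subset_span (by simp)), hz y (Submodule.subset_span (by simp))⟩

lemma exists_smul_rankOne_self_eq (α : ℝ) (x : H) :
    ∃ (y : H) (ε : ℝ), |ε| = 1 ∧ (α : ℂ) • rankOne ℂ x x = (ε : ℂ) • rankOne ℂ y y := by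
  obtain ⟨ε, hε, hα⟩ : ∃ ε : ℝ, |ε| = 1 ∧ (α : ℂ) = ε * (|α| : ℝ) := by
    rcases abs_choice α with h | h
    · exact ⟨1, abs_one, by simp [h]⟩
    · exact ⟨-1, by simp, by simp [h]⟩
  refine ⟨(√|α| : ℂ) • x, ε, hε, ?_⟩
  have hsqrt : (√|α| : ℂ) * √|α| = (|α| : ℝ) := by
    rw [← Complex.ofReal_mul, Real.mul_self_sqrt (abs_nonneg α)]
  ext z
  simp only [smul_apply, InnerProductSpace.rankOne_apply, inner_smul_left, Complex.conj_ofReal]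
  rw [smul_smul, smul_smul, smul_smul]
  congr 1
  linear_combination ⟪x, z⟫_ℂ * hα - ε * ⟪x, z⟫_ℂ * hsqrt

lemma commute_smul_add_smul_one_iff {T P : H →L[ℂ] H} {a : ℂ} (ha : a ≠ 0) (b : ℂ) :
    Commute T (a • P + b • 1) ↔ Commute T P := by
  constructor
  · intro h
    have hP : P = a⁻¹ • (a • P + b • 1 - b • 1) := by
      rw [add_sub_cancel_right, inv_smul_smul₀ ha]
    rw [hP]
    exact (h.sub_right ((Commute.one_right T).smul_right b)).smul_right a⁻¹
  · exact fun h => (h.smul_right a).add_right ((Commute.one_right T).smul_right b)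

lemma exists_eq_smul_rankOne_self {B : H →L[ℂ] H} {x : H} (hx : ∃ c : ℂ, B x = c • x)
    (h : ∀ y, ⟪x, y⟫_ℂ = 0 → B y = 0) : ∃ d : ℂ, B = d • rankOne ℂ x x := by
  rcases eq_or_ne x 0 with rfl | hx0
  · exact ⟨0, ContinuousLinearMap.ext fun z => by simp [h]⟩
  obtain ⟨c, hc⟩ := hx
  refine ⟨c / ⟪x, x⟫_ℂ, ContinuousLinearMap.ext fun z => ?_⟩
  have hxx : ⟪x, x⟫_ℂ ≠ 0 := inner_self_ne_zero.2 hx0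
  have hz := h (z - (⟪x, z⟫_ℂ / ⟪x, x⟫_ℂ) • x) (by
    rw [inner_sub_right, inner_smul_right, div_mul_cancel₀ _ hxx, sub_self])
  rw [map_sub, map_smul, sub_eq_zero, hc, smul_smul] at hz
  rw [hz, smul_apply, InnerProductSpace.rankOne_apply, smul_smul]
  congr 1
  ring

lemma commute_of_forall_inner_eq_zero {x : H} {B : H →L[ℂ] H} {c : ℂ} (hx : ∃ d : ℂ, B x = d • x)
    (h : ∀ y, ⟪x, y⟫_ℂ = 0 → B y = c • y) {T : H →L[ℂ] H} (hT : Commute T (rankOne ℂ x x)) :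
    Commute T B := by
  obtain ⟨d, hd⟩ := hx
  obtain ⟨e, he⟩ := exists_eq_smul_rankOne_self (B := B - c • 1) (x := x)
    ⟨d - c, by simp [hd, sub_smul]⟩ fun y hy => by simp [h y hy]
  rw [sub_eq_iff_eq_add.1 he]
  exact (hT.smul_right e).add_right ((Commute.one_right T).smul_right c)

lemma ne_smul_add_of_inner_eq_zero {a b : H} (ha : ‖a‖ = 1) (hb : ‖b‖ = 1) (hab : ⟪a, b⟫_ℂ = 0)
    (c : ℂ) : a ≠ c • (a + b) := by
  intro h
  have hc : c = 1 := by
    simpa [inner_smul_right, inner_add_right, hab, inner_self_eq_ofReal_norm_sq, ha, eq_comm]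
      using congrArg (fun x => ⟪a, x⟫_ℂ) h
  rw [hc, one_smul, left_eq_add] at h
  simp [h] at hb

variable [CompleteSpace H]

lemma exists_eq_rankOne_self {P : H →L[ℂ] H} (hP : IsStarProjection P)
    (h : ∀ x y, P x = x → P y = y → ⟪x, y⟫_ℂ = 0 → x = 0 ∨ y = 0) :
    ∃ x, P = rankOne ℂ x x := by
  have hPP : ∀ x, P (P x) = P x := fun x => DFunLike.congr_fun hP.isIdempotentElem x
  by_cases hzero : P = 0
  · exact ⟨0, by simp [hzero]⟩
  obtain ⟨v, hv⟩ : ∃ v, P v ≠ 0 := by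
    by_contra! hv
    exact hzero (ContinuousLinearMap.ext hv)
  set a : H := (‖P v‖⁻¹ : ℂ) • P v
  have ha : ‖a‖ = 1 := norm_smul_inv_norm hv
  have hPa : P a = a := by rw [map_smul, hPP]
  refine ⟨a, ContinuousLinearMap.ext fun z => ?_⟩
  have hz := h a (P z - ⟪a, P z⟫_ℂ • a) hPa (by rw [map_sub, map_smul, hPP, hPa])
    (by rw [inner_sub_right, inner_smul_right, inner_self_eq_ofReal_norm_sq, ha]; simp)
  rw [InnerProductSpace.rankOne_apply, ← hPa, inner_apply_left hP.isSelfAdjoint, hPa]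
  exact sub_eq_zero.1 (hz.resolve_left (norm_ne_zero_iff.1 (ha ▸ one_ne_zero)))

end RankOne

section RankOneLike

variable {H : Type*} [NormedAddCommGroup H] [InnerProductSpace ℂ H] [CompleteSpace H]

/-- The bounded self-adjoint operators, `B_s(H)`. -/
abbrev SelfAdjointOp (H : Type*) [NormedAddCommGroup H] [InnerProductSpace ℂ H] [CompleteSpace H] :=
  {T : H →L[ℂ] H // IsSelfAdjoint T}

/-- `A ∈ D(H)`, and no bicommutant lies strictly between `{A}''` and `{A, Q}''` when `Q ∈ D(H)`
commutes with `A`. This expresses in terms of `D(H)` and commutation alone that, up to a scalar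
operator, `A` has rank at most one; see `isRankOneLike_iff`. -/
def IsRankOneLike (A : SelfAdjointOp H) : Prop :=
  (A : H →L[ℂ] H) ∈ DSet H ∧ ∀ Q E : SelfAdjointOp H, (Q : H →L[ℂ] H) ∈ DSet H →
    Commute (Q : H →L[ℂ] H) A →
    (∀ T : SelfAdjointOp H, Commute (T : H →L[ℂ] H) A → Commute (T : H →L[ℂ] H) Q →
      Commute (T : H →L[ℂ] H) E) →
    (∀ T : SelfAdjointOp H, Commute (T : H →L[ℂ] H) A → Commute (T : H →L[ℂ] H) E) ∨
      ∀ T : SelfAdjointOp H, Commute (T : H →L[ℂ] H) A → Commute (T : H →L[ℂ] H) E →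
        Commute (T : H →L[ℂ] H) Q

lemma isSelfAdjoint_rankOne_self (x : H) : IsSelfAdjoint (rankOne ℂ x x) :=
  (InnerProductSpace.isPositive_rankOne_self x).isSelfAdjoint

lemma smul_rankOne_self_add_smul_one_mem_DSet (ε δ : ℝ) (x : H) :
    (ε : ℂ) • rankOne ℂ x x + (δ : ℂ) • 1 ∈ DSet H := by
  have hsq : rankOne ℂ x x * rankOne ℂ x x = ((‖x‖ ^ 2 : ℝ) : ℂ) • rankOne ℂ x x := by
    ext z
    simp [smul_smul, mul_comm]
  refine mem_DSet_iff.2 ⟨(isSelfAdjoint_ofReal_smul (isSelfAdjoint_rankOne_self x) ε).add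
    (isSelfAdjoint_ofReal_smul (.one _) δ), ε * ‖x‖ ^ 2 + 2 * δ,
    -δ ^ 2 - ε * δ * ‖x‖ ^ 2, ?_⟩
  simp only [mul_add, add_mul, mul_smul_comm, smul_mul_assoc, hsq, mul_one, one_mul]
  push_cast
  module

lemma exists_apply_eq_of_isStarProjection {x : H} {q E : H →L[ℂ] H} (hq : IsStarProjection q)
    (hE : IsSelfAdjoint E) (hqx : ∃ d : ℂ, q x = d • x)
    (h : ∀ T : H →L[ℂ] H, IsSelfAdjoint T → Commute T (rankOne ℂ x x) → Commute T q →
      Commute T E) :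
    (∃ c : ℂ, E x = c • x) ∧
      ∃ c₁ c₂ : ℂ, ∀ y, ⟪x, y⟫_ℂ = 0 → E y = c₁ • q y + c₂ • (y - q y) := by
  have heigen : ∀ (y : H) (c d : ℂ), rankOne ℂ x x y = c • y → q y = d • y →
      ∃ c : ℂ, E y = c • y := by
    intro y c d hc hd
    refine (commute_rankOne_self_iff hE).1 (h _ (isSelfAdjoint_rankOne_self y) ?_ ?_)
    · exact (commute_rankOne_self_iff (isSelfAdjoint_rankOne_self x)).2 ⟨c, hc⟩
    · exact (commute_rankOne_self_iff hq.isSelfAdjoint).2 ⟨d, hd⟩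
  obtain ⟨d, hd⟩ := hqx
  refine ⟨heigen x _ d (InnerProductSpace.rankOne_apply ..) hd, ?_⟩
  have hxy : ∀ y ∈ (ℂ ∙ x)ᗮ, rankOne ℂ x x y = (0 : ℂ) • y := fun y hy => by
    simp [Submodule.mem_orthogonal_singleton_iff_inner_right.1 hy]
  obtain ⟨c₁, hc₁⟩ := exists_forall_mem_apply_eq_smul (A := (E : H →ₗ[ℂ] H))
    (M := (ℂ ∙ x)ᗮ ⊓ LinearMap.eqLocus (q : H →ₗ[ℂ] H) LinearMap.id) fun y hy =>
      heigen y 0 1 (hxy y hy.1) (by simpa using hy.2)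
  obtain ⟨c₂, hc₂⟩ := exists_forall_mem_apply_eq_smul (A := (E : H →ₗ[ℂ] H))
    (M := (ℂ ∙ x)ᗮ ⊓ LinearMap.ker (q : H →ₗ[ℂ] H)) fun y hy =>
      heigen y 0 0 (hxy y hy.1) (by simpa using hy.2)
  refine ⟨c₁, c₂, fun y hy => ?_⟩
  have hqq : q (q y) = q y := DFunLike.congr_fun hq.isIdempotentElem y
  have hy' : y ∈ (ℂ ∙ x)ᗮ := Submodule.mem_orthogonal_singleton_iff_inner_right.2 hy
  have hqy : q y ∈ (ℂ ∙ x)ᗮ := by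
    rw [Submodule.mem_orthogonal_singleton_iff_inner_right, ← inner_apply_left hq.isSelfAdjoint,
      hd, inner_smul_left, hy, mul_zero]
  calc E y = E (q y) + E (y - q y) := by rw [← map_add, add_sub_cancel]
    _ = c₁ • q y + c₂ • (y - q y) :=
      congrArg₂ (· + ·) (hc₁ _ ⟨hqy, hqq⟩)
        (hc₂ _ ⟨Submodule.sub_mem _ hy' hqy, by simp [hqq]⟩)

-- `E` is diagonal with respect to `x`, `xᗮ ∩ range q` and `xᗮ ∩ ker q`. Either its values on the
-- last two parts agree, or `q` can be recovered from `E` and `rankOne ℂ x x`.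
lemma commute_or_commute_of_isStarProjection {x : H} {q E : H →L[ℂ] H} (hq : IsStarProjection q)
    (hE : IsSelfAdjoint E) (hqx : ∃ d : ℂ, q x = d • x)
    (h : ∀ T : H →L[ℂ] H, IsSelfAdjoint T → Commute T (rankOne ℂ x x) → Commute T q →
      Commute T E) :
    (∀ T, Commute T (rankOne ℂ x x) → Commute T E) ∨
      ∀ T, Commute T (rankOne ℂ x x) → Commute T E → Commute T q := by
  obtain ⟨hEx, c₁, c₂, hE_apply⟩ := exists_apply_eq_of_isStarProjection hq hE hqx h
  rcases eq_or_ne c₁ c₂ with rfl | hc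
  · refine .inl fun T hT => commute_of_forall_inner_eq_zero (c := c₁) hEx (fun y hy => ?_) hT
    rw [hE_apply y hy]
    module
  · refine .inr fun T hT hTE => ?_
    have hB : Commute T (E - (c₁ - c₂) • q) := by
      refine commute_of_forall_inner_eq_zero (c := c₂) ?_ (fun y hy => ?_) hT
      · obtain ⟨c, hEx⟩ := hEx
        obtain ⟨d, hqx⟩ := hqx
        exact ⟨c - (c₁ - c₂) * d, by simp [hEx, hqx, sub_smul, mul_smul]⟩
      · rw [sub_apply, smul_apply, hE_apply y hy]
        module
    have hq_eq : q = (c₁ - c₂)⁻¹ • (E - (E - (c₁ - c₂) • q)) := by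
      rw [sub_sub_cancel, inv_smul_smul₀ (sub_ne_zero.2 hc)]
    rw [hq_eq]
    exact (hTE.sub_right hB).smul_right _

lemma isRankOneLike_of_eq {A : SelfAdjointOp H} {x : H} {ε δ : ℝ} (hε : ε ≠ 0)
    (hA : (A : H →L[ℂ] H) = (ε : ℂ) • rankOne ℂ x x + (δ : ℂ) • 1) : IsRankOneLike A := by
  refine ⟨hA ▸ smul_rankOne_self_add_smul_one_mem_DSet ε δ x, fun Q E hQD hQA hE => ?_⟩
  have hεC : (ε : ℂ) ≠ 0 := Complex.ofReal_ne_zero.2 hε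
  obtain ⟨q, α, β, hq, hqq, hQ⟩ := hQD
  simp only [hA, commute_smul_add_smul_one_iff hεC] at hQA hE ⊢
  rcases eq_or_ne α 0 with rfl | hα
  · refine .inr fun T _ _ => ?_
    rw [hQ, Complex.ofReal_zero, zero_smul, zero_add]
    exact (Commute.one_right _).smul_right _
  simp only [hQ, commute_smul_add_smul_one_iff (Complex.ofReal_ne_zero.2 hα)] at hE ⊢
  obtain h | h := commute_or_commute_of_isStarProjection ⟨hqq, hq⟩ E.2
    ((commute_rankOne_self_iff hq).1 ((commute_smul_add_smul_one_iff
      (Complex.ofReal_ne_zero.2 hα) β).1 (hQ ▸ hQA.symm)))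
    fun T hT => hE ⟨T, hT⟩
  · exact .inl fun T => h T
  · exact .inr fun T => h T

lemma exists_orthonormal_pair {P : H →L[ℂ] H} (hP : IsStarProjection P)
    (h : ∀ x, P ≠ rankOne ℂ x x) :
    ∃ a b, P a = a ∧ P b = b ∧ ‖a‖ = 1 ∧ ‖b‖ = 1 ∧ ⟪a, b⟫_ℂ = 0 := by
  have := mt (exists_eq_rankOne_self hP) (not_exists.2 h)
  push Not at this
  obtain ⟨a, b, ha, hb, hab, ha0, hb0⟩ := this
  refine ⟨(‖a‖⁻¹ : ℂ) • a, (‖b‖⁻¹ : ℂ) • b, ?_, ?_, norm_smul_inv_norm ha0,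
    norm_smul_inv_norm hb0, ?_⟩
  · rw [map_smul, ha]
  · rw [map_smul, hb]
  · rw [inner_smul_left, inner_smul_right, hab, mul_zero, mul_zero]

lemma isStarProjection_rankOne_self_add_rankOne_self {a b : H} (ha : ‖a‖ = 1) (hb : ‖b‖ = 1)
    (hab : ⟪a, b⟫_ℂ = 0) : IsStarProjection (rankOne ℂ a a + rankOne ℂ b b) := by
  refine (InnerProductSpace.isStarProjection_rankOne_self ha).add
    (InnerProductSpace.isStarProjection_rankOne_self hb) ?_
  ext z
  simp [hab]

-- With orthonormal `a, a'` in `range P` and `b, b'` in `ker P`, the operators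
-- `Q = |a⟩⟨a| + |b⟩⟨b|` and `E = |a⟩⟨a|` have `{P}'' ⊂ {P, E}'' ⊂ {P, Q}''` strictly.
lemma not_isRankOneLike {A : SelfAdjointOp H} {P : H →L[ℂ] H} {α δ : ℝ} (hP : IsStarProjection P)
    (hα : α ≠ 0) (hA : (A : H →L[ℂ] H) = (α : ℂ) • P + (δ : ℂ) • 1)
    (h : ∀ x, P ≠ rankOne ℂ x x) (h' : ∀ x, 1 - P ≠ rankOne ℂ x x) : ¬IsRankOneLike A := by
  rintro ⟨-, hatom⟩
  obtain ⟨a, a', ha, ha', hna, hna', haa'⟩ := exists_orthonormal_pair hP h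
  obtain ⟨b, b', hb, hb', hnb, hnb', hbb'⟩ := exists_orthonormal_pair hP.one_sub h'
  simp only [sub_apply, one_apply_eq_self, sub_eq_self] at hb hb'
  have hPb : ∀ y z, P y = y → P z = 0 → ⟪y, z⟫_ℂ = 0 := fun y z hy hz => by
    rw [← hy, inner_apply_left hP.isSelfAdjoint, hz, inner_zero_right]
  have hcomm : ∀ x (c : ℂ), P x = c • x → Commute (rankOne ℂ x x) P := fun x c hx =>
    (commute_rankOne_self_iff hP.isSelfAdjoint).2 ⟨c, hx⟩
  have hPa : Commute (rankOne ℂ a a) P := hcomm a 1 (by rw [ha, one_smul])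
  have hQ : IsStarProjection (rankOne ℂ a a + rankOne ℂ b b) :=
    isStarProjection_rankOne_self_add_rankOne_self hna hnb (hPb a b ha hb)
  have hE : rankOne ℂ a a = (rankOne ℂ a a + rankOne ℂ b b) * P := by
    ext z
    simp [← inner_apply_left hP.isSelfAdjoint, ha, hb]
  simp only [hA, commute_smul_add_smul_one_iff (Complex.ofReal_ne_zero.2 hα)] at hatom
  obtain hdich | hdich := hatom ⟨_, hQ.isSelfAdjoint⟩ ⟨_, isSelfAdjoint_rankOne_self a⟩
    ⟨_, 1, 0, hQ.isSelfAdjoint, hQ.isIdempotentElem, by simp⟩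
    (hPa.add_left (hcomm b 0 (by rw [hb, zero_smul])))
    fun T hTP hTQ => (congrArg (Commute (T : H →L[ℂ] H)) hE).mpr (hTQ.mul_right hTP)
  · obtain ⟨c, hc⟩ := (commute_rankOne_self_iff (isSelfAdjoint_rankOne_self a)).1 <|
      hdich ⟨_, isSelfAdjoint_rankOne_self (a + a')⟩ (hcomm _ 1 (by simp [ha, ha']))
    exact ne_smul_add_of_inner_eq_zero hna hna' haa' c
      (by simpa [inner_add_right, inner_self_eq_ofReal_norm_sq, haa', hna] using hc)
  · obtain ⟨c, hc⟩ := (commute_rankOne_self_iff hQ.isSelfAdjoint).1 <|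
      hdich ⟨_, isSelfAdjoint_rankOne_self (b + b')⟩ (hcomm _ 0 (by simp [hb, hb'])) <|
        (commute_rankOne_self_iff (isSelfAdjoint_rankOne_self a)).2
          ⟨0, by simp [inner_add_right, hPb a b ha hb, hPb a b' ha hb']⟩
    exact ne_smul_add_of_inner_eq_zero hnb hnb' hbb' c
      (by simpa [inner_add_right, inner_self_eq_ofReal_norm_sq, hPb a b ha hb, hPb a b' ha hb',
        hbb', hnb] using hc)

theorem isRankOneLike_iff {A : SelfAdjointOp H} :
    IsRankOneLike A ↔ ∃ (x : H) (ε δ : ℝ), |ε| = 1 ∧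
      (A : H →L[ℂ] H) = (ε : ℂ) • rankOne ℂ x x + (δ : ℂ) • 1 := by
  refine ⟨fun h => ?_, fun ⟨x, ε, δ, hε, hA⟩ =>
    isRankOneLike_of_eq (abs_ne_zero.1 (hε ▸ one_ne_zero)) hA⟩
  obtain ⟨P, α, δ, hP, hPP, hA⟩ := h.1
  suffices ∃ (x : H) (α δ : ℝ), (A : H →L[ℂ] H) = (α : ℂ) • rankOne ℂ x x + (δ : ℂ) • 1 by
    obtain ⟨x, α, δ, hA⟩ := this
    obtain ⟨y, ε, hε, hxy⟩ := exists_smul_rankOne_self_eq α x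
    exact ⟨y, ε, δ, hε, hxy ▸ hA⟩
  rcases eq_or_ne α 0 with rfl | hα
  · exact ⟨0, 0, δ, by simpa using hA⟩
  by_contra! hcon
  refine not_isRankOneLike ⟨hPP, hP⟩ hα hA (fun x hx => hcon x α δ (hx ▸ hA)) (fun x hx => ?_) h
  refine hcon x (-α) (α + δ) ?_
  rw [hA, ← hx]
  push_cast
  module

end RankOneLike

section TransitionProbability

variable {E F : Type*} [NormedAddCommGroup E] [InnerProductSpace ℂ E] [NormedAddCommGroup F]
  [InnerProductSpace ℂ F]

/-- The transition probability between the pure states spanned by `x` and `y`; it is `0` if one of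
the two vectors vanishes. -/
noncomputable def transitionProb (x y : E) : ℝ :=
  ‖⟪x, y⟫_ℂ‖ ^ 2 / (‖x‖ * ‖y‖) ^ 2

lemma transitionProb_eq_zero_iff {x y : E} : transitionProb x y = 0 ↔ ⟪x, y⟫_ℂ = 0 := by
  rw [transitionProb, div_eq_zero_iff, sq_eq_zero_iff, sq_eq_zero_iff, norm_eq_zero,
    mul_eq_zero, norm_eq_zero, norm_eq_zero]
  refine or_iff_left_of_imp ?_
  rintro (rfl | rfl)
  · exact inner_zero_left _
  · exact inner_zero_right _

lemma transitionProb_self_smul {x : E} (hx : x ≠ 0) {a : ℂ} (ha : a ≠ 0) :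
    transitionProb x (a • x) = 1 := by
  rw [transitionProb, inner_smul_right, norm_mul, norm_smul, inner_self_eq_ofReal_norm_sq,
    Complex.norm_real, Real.norm_of_nonneg (sq_nonneg _)]
  have := norm_ne_zero_iff.2 hx
  have := norm_ne_zero_iff.2 ha
  field_simp

lemma stateVariance_rankOne_self_eq_transitionProb (x y : E) :
    stateVariance (rankOne ℂ y y) x =
      (‖x‖ * ‖y‖) ^ 4 * (transitionProb x y * (1 - transitionProb x y)) := by
  rw [stateVariance_rankOne_self, transitionProb]
  rcases eq_or_ne x 0 with rfl | hx
  · simp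
  rcases eq_or_ne y 0 with rfl | hy
  · simp
  have := norm_ne_zero_iff.2 hx
  have := norm_ne_zero_iff.2 hy
  field_simp

lemma transitionProb_norm_smul_add_norm_smul {x y : E} (hx : x ≠ 0) (hy : y ≠ 0)
    (hxy : ⟪x, y⟫_ℂ = 0) :
    transitionProb x ((‖y‖ : ℂ) • x + (‖x‖ : ℂ) • y) = 1 / 2 := by
  have hnorm : ‖(‖y‖ : ℂ) • x + (‖x‖ : ℂ) • y‖ ^ 2 = 2 * (‖x‖ * ‖y‖) ^ 2 := by
    rw [sq, norm_add_sq_eq_norm_sq_add_norm_sq_of_inner_eq_zero (𝕜 := ℂ) _ _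
      (by rw [inner_smul_left, inner_smul_right, hxy, mul_zero, mul_zero]), norm_smul, norm_smul,
      Complex.norm_real, Complex.norm_real, norm_norm, norm_norm]
    ring
  rw [transitionProb, mul_pow, hnorm, inner_add_right, inner_smul_right, inner_smul_right, hxy,
    mul_zero, add_zero, norm_mul, inner_self_eq_ofReal_norm_sq, Complex.norm_real,
    Complex.norm_real, norm_norm, Real.norm_of_nonneg (sq_nonneg _)]
  have := norm_ne_zero_iff.2 hx
  have := norm_ne_zero_iff.2 hy
  field_simp

lemma pairwise_inner_vec_two {x y : E} (hxy : ⟪x, y⟫_ℂ = 0) :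
    Pairwise fun i j => ⟪![x, y] i, ![x, y] j⟫_ℂ = 0 := by
  intro i j hij
  fin_cases i <;> fin_cases j <;> simp_all [inner_eq_zero_symm]

lemma pairwise_inner_vec_three {x y z : E} (hxy : ⟪x, y⟫_ℂ = 0) (hxz : ⟪x, z⟫_ℂ = 0)
    (hyz : ⟪y, z⟫_ℂ = 0) : Pairwise fun i j => ⟪![x, y, z] i, ![x, y, z] j⟫_ℂ = 0 := by
  intro i j hij
  fin_cases i <;> fin_cases j <;> simp_all [inner_eq_zero_symm]

lemma sum_transitionProb {ι : Type*} [Fintype ι] {e : ι → E} (he : ∀ i, e i ≠ 0)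
    (horth : Pairwise fun i j => ⟪e i, e j⟫_ℂ = 0) {v : E} (hv : v ≠ 0)
    (hspan : v ∈ Submodule.span ℂ (Set.range e)) : ∑ i, transitionProb (e i) v = 1 := by
  classical
  obtain ⟨c, rfl⟩ := (Submodule.mem_span_range_iff_exists_fun ℂ).1 hspan
  set v := ∑ i, c i • e i with hv_def
  have hcoord : ∀ i, ⟪e i, v⟫_ℂ = c i * ‖e i‖ ^ 2 := fun i => by
    rw [hv_def, inner_sum, Finset.sum_eq_single i, inner_smul_right, inner_self_eq_norm_sq_to_K]
    · rfl
    · exact fun j _ hj => by rw [inner_smul_right, horth hj.symm, mul_zero]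
    · simp
  have hnorm : ‖v‖ ^ 2 = ∑ i, ‖c i‖ ^ 2 * ‖e i‖ ^ 2 := by
    have h : ⟪v, v⟫_ℂ = ∑ i, ((‖c i‖ ^ 2 * ‖e i‖ ^ 2 : ℝ) : ℂ) := by
      conv_lhs => rw [hv_def, sum_inner]
      refine Finset.sum_congr rfl fun i _ => ?_
      rw [inner_smul_left, hcoord, ← mul_assoc, Complex.conj_mul']
      push_cast
      rfl
    rw [inner_self_eq_ofReal_norm_sq] at h
    exact_mod_cast h
  have hterm : ∀ i, transitionProb (e i) v = ‖c i‖ ^ 2 * ‖e i‖ ^ 2 / ‖v‖ ^ 2 := fun i => by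
    have := norm_ne_zero_iff.2 (he i)
    have := norm_ne_zero_iff.2 hv
    rw [transitionProb, hcoord, norm_mul, norm_pow, Complex.norm_real, norm_norm]
    field_simp
  rw [Finset.sum_congr rfl fun i _ => hterm i, ← Finset.sum_div, ← hnorm,
    div_self (pow_ne_zero 2 (norm_ne_zero_iff.2 hv))]

lemma exists_norm_eq_inner_eq_zero (hdim : 3 ≤ Module.rank ℂ E) (x y : E) {r : ℝ} (hr : 0 ≤ r) :
    ∃ z, ‖z‖ = r ∧ ⟪x, z⟫_ℂ = 0 ∧ ⟪y, z⟫_ℂ = 0 := by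
  obtain ⟨z, hz, hxz, hyz⟩ := exists_ne_zero_inner_eq_zero hdim x y
  refine ⟨((r / ‖z‖ : ℝ) : ℂ) • z, ?_, ?_, ?_⟩
  · rw [norm_smul, Complex.norm_real, norm_div, norm_norm, Real.norm_of_nonneg hr,
      div_mul_cancel₀ _ (norm_ne_zero_iff.2 hz)]
  · rw [inner_smul_right, hxz, mul_zero]
  · rw [inner_smul_right, hyz, mul_zero]

-- The witnesses are `f + e` and `f - e`, where `f` is the component of `y` orthogonal to `x`, and
-- `e` is orthogonal to `x` and `f` with `‖e‖ = ‖f‖`.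
lemma exists_transitionProb_eq (hdim : 3 ≤ Module.rank ℂ E) {x y : E} (hx : x ≠ 0)
    (hxy : ⟪x, y⟫_ℂ ≠ 0) (hp : transitionProb x y ≠ 1) :
    ∃ u v, u ≠ 0 ∧ v ≠ 0 ∧ ⟪x, u⟫_ℂ = 0 ∧ ⟪x, v⟫_ℂ = 0 ∧ ⟪u, v⟫_ℂ = 0 ∧
      y ∈ Submodule.span ℂ (Set.range ![x, u, v]) ∧ transitionProb u y = transitionProb v y := by
  set a : ℂ := ⟪x, y⟫_ℂ / ⟪x, x⟫_ℂ
  obtain ⟨f, hf⟩ : ∃ f, y = a • x + f := ⟨y - a • x, (add_sub_cancel _ _).symm⟩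
  have hxf : ⟪x, f⟫_ℂ = 0 := by
    rw [eq_sub_of_add_eq' hf.symm, inner_sub_right, inner_smul_right,
      div_mul_cancel₀ _ (inner_self_ne_zero.2 hx), sub_self]
  have hf0 : f ≠ 0 := by
    rintro rfl
    rw [add_zero] at hf
    refine hp (hf ▸ transitionProb_self_smul hx ?_)
    exact div_ne_zero hxy (inner_self_ne_zero.2 hx)
  obtain ⟨e, he, hxe, hfe⟩ := exists_norm_eq_inner_eq_zero hdim x f (norm_nonneg f)
  have hef : ⟪e, f⟫_ℂ = 0 := inner_eq_zero_symm.1 hfe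
  have hfx : ⟪f, x⟫_ℂ = 0 := inner_eq_zero_symm.1 hxf
  have hex : ⟪e, x⟫_ℂ = 0 := inner_eq_zero_symm.1 hxe
  have hff : ⟪f, f⟫_ℂ ≠ 0 := inner_self_ne_zero.2 hf0
  have hadd : ⟪f + e, f⟫_ℂ ≠ 0 := by rwa [inner_add_left, hef, add_zero]
  have hsub : ⟪f - e, f⟫_ℂ ≠ 0 := by rwa [inner_sub_left, hef, sub_zero]
  refine ⟨f + e, f - e, fun h => hadd (by rw [h, inner_zero_left]),
    fun h => hsub (by rw [h, inner_zero_left]), ?_, ?_, ?_, ?_, ?_⟩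
  · rw [inner_add_right, hxf, hxe, add_zero]
  · rw [inner_sub_right, hxf, hxe, sub_zero]
  · rw [inner_sub_right, inner_add_left, inner_add_left, hef, hfe, inner_self_eq_ofReal_norm_sq,
      inner_self_eq_ofReal_norm_sq, he, add_zero, zero_add, sub_self]
  · refine (Submodule.mem_span_range_iff_exists_fun ℂ).2 ⟨![a, 1 / 2, 1 / 2], ?_⟩
    simp only [Fin.sum_univ_three, Matrix.cons_val]
    rw [hf]
    module
  · have hnorm : ‖f + e‖ = ‖f - e‖ := (norm_sub_eq_norm_add (𝕜 := ℂ) hef).symm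
    rw [transitionProb, transitionProb, hnorm, hf, inner_add_right, inner_add_right,
      inner_smul_right, inner_smul_right, inner_add_left, inner_add_left, inner_sub_left,
      inner_sub_left, hfx, hex, hef, add_zero, sub_zero, sub_zero, add_zero]

-- Solving `p (1 - p) = κ p' (1 - p')` for `p'` leaves two candidates; the sums decide.
lemma eq_of_add_add_eq_one {κ p q p' q₁' q₂' : ℝ} (hκ : κ ≠ 0) (hp : p ≠ 1) (hp' : p' ≠ 0)
    (hsum : p + q + q = 1) (hsum' : p' + q₁' + q₂' = 1) (h : κ * (p' * (1 - p')) = p * (1 - p))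
    (h₁ : κ * (q₁' * (1 - q₁')) = q * (1 - q)) (h₂ : κ * (q₂' * (1 - q₂')) = q * (1 - q)) :
    p' = p := by
  have hq : q₁' = q₂' := by
    have : κ * p' * (q₁' - q₂') = 0 := by
      linear_combination h₁ - h₂ + κ * (q₁' - q₂') * hsum'
    exact sub_eq_zero.1 ((mul_eq_zero.1 this).resolve_left (mul_ne_zero hκ hp'))
  have hq_eq : q = (1 - p) / 2 := by linarith
  have hq'_eq : q₂' = (1 - p') / 2 := by linarith
  have : (1 - p) * (p' - p) = 0 := by
    rw [hq_eq, hq'_eq] at h₂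
    linear_combination (1 + p') * h - 4 * p' * h₂
  exact sub_eq_zero.1 ((mul_eq_zero.1 this).resolve_left (sub_ne_zero.2 (Ne.symm hp)))

/-- A map sending vectors to representatives of rays, onto the rays of `F`, which preserves
orthogonality and the variances of the rank one operators `|y⟩⟨y|`. -/
structure IsVariancePreserving (g : E → F) : Prop where
  inner_eq_zero_iff : ∀ x y, ⟪g x, g y⟫_ℂ = 0 ↔ ⟪x, y⟫_ℂ = 0
  exists_smul_eq : ∀ u, ∃ x, ∃ c : ℂ, c • g x = u
  stateVariance_rankOne :
    ∀ x y, stateVariance (rankOne ℂ (g y) (g y)) (g x) = stateVariance (rankOne ℂ y y) x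

namespace IsVariancePreserving

variable {g : E → F}

lemma map_eq_zero_iff (hg : IsVariancePreserving g) {x : E} : g x = 0 ↔ x = 0 := by
  simpa only [inner_self_eq_zero] using hg.inner_eq_zero_iff x x

lemma norm_map_ne_zero (hg : IsVariancePreserving g) {x : E} (hx : x ≠ 0) : ‖g x‖ ≠ 0 :=
  norm_ne_zero_iff.2 (mt hg.map_eq_zero_iff.1 hx)

lemma transitionProb_mul (hg : IsVariancePreserving g) (x y : E) :
    (‖g x‖ * ‖g y‖) ^ 4 * (transitionProb (g x) (g y) * (1 - transitionProb (g x) (g y))) =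
      (‖x‖ * ‖y‖) ^ 4 * (transitionProb x y * (1 - transitionProb x y)) := by
  simpa only [stateVariance_rankOne_self_eq_transitionProb] using hg.stateVariance_rankOne x y

lemma map_mem_span (hg : IsVariancePreserving g) {ι : Type*} [Finite ι] {e : ι → E} {v : E}
    (hv : v ∈ Submodule.span ℂ (Set.range e)) :
    g v ∈ Submodule.span ℂ (Set.range (g ∘ e)) := by
  have : FiniteDimensional ℂ (Submodule.span ℂ (Set.range (g ∘ e))) :=
    FiniteDimensional.span_of_finite ℂ (Set.finite_range _)
  rw [← Submodule.orthogonal_orthogonal (Submodule.span ℂ (Set.range (g ∘ e)))]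
  refine (Submodule.mem_orthogonal _ _).2 fun u hu => ?_
  obtain ⟨x, c, rfl⟩ := hg.exists_smul_eq u
  rcases eq_or_ne c 0 with rfl | hc
  · rw [zero_smul, inner_zero_left]
  have hxe : ∀ i, ⟪x, e i⟫_ℂ = 0 := fun i => by
    have h := Submodule.inner_left_of_mem_orthogonal
      (Submodule.subset_span (Set.mem_range_self i)) hu
    rw [inner_smul_left, mul_eq_zero_iff_left (by simpa using hc)] at h
    exact (hg.inner_eq_zero_iff _ _).1 h
  have hxv : Submodule.span ℂ (Set.range e) ≤ (ℂ ∙ x)ᗮ := by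
    rw [Submodule.span_le]
    rintro _ ⟨i, rfl⟩
    exact Submodule.mem_orthogonal_singleton_iff_inner_right.2 (hxe i)
  rw [inner_smul_left, (hg.inner_eq_zero_iff _ _).2
    (Submodule.mem_orthogonal_singleton_iff_inner_right.1 (hxv hv)), mul_zero]

lemma sum_transitionProb_map (hg : IsVariancePreserving g) {ι : Type*} [Fintype ι] {e : ι → E}
    (he : ∀ i, e i ≠ 0) (horth : Pairwise fun i j => ⟪e i, e j⟫_ℂ = 0) {v : E} (hv : v ≠ 0)
    (hspan : v ∈ Submodule.span ℂ (Set.range e)) :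
    ∑ i, transitionProb (g (e i)) (g v) = 1 :=
  sum_transitionProb (e := g ∘ e) (fun i => mt hg.map_eq_zero_iff.1 (he i))
    (fun _ _ hij => (hg.inner_eq_zero_iff _ _).2 (horth hij)) (mt hg.map_eq_zero_iff.1 hv)
    (hg.map_mem_span hspan)

lemma norm_map_mul_norm_of_inner_eq_zero (hg : IsVariancePreserving g) {x y : E} (hx : x ≠ 0)
    (hy : y ≠ 0) (hxy : ⟪x, y⟫_ℂ = 0) : ‖g x‖ * ‖y‖ = ‖g y‖ * ‖x‖ := by
  set v := (‖y‖ : ℂ) • x + (‖x‖ : ℂ) • y with hv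
  have hpx : transitionProb x v = 1 / 2 := transitionProb_norm_smul_add_norm_smul hx hy hxy
  have hpy : transitionProb y v = 1 / 2 := by
    rw [hv, add_comm]
    exact transitionProb_norm_smul_add_norm_smul hy hx (inner_eq_zero_symm.1 hxy)
  have hv0 : v ≠ 0 := by
    rintro h
    simp [h, transitionProb] at hpx
  have hsum : transitionProb (g x) (g v) + transitionProb (g y) (g v) = 1 := by
    simpa using hg.sum_transitionProb_map (e := ![x, y]) (by simp [Fin.forall_fin_two, hx, hy])
      (pairwise_inner_vec_two hxy) hv0
      (by rw [Matrix.range_cons_cons_empty]; exact Submodule.mem_span_pair.2 ⟨_, _, hv.symm⟩)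
  have hx' := hg.transitionProb_mul x v
  have hy' := hg.transitionProb_mul y v
  rw [hpx] at hx'
  rw [hpy, eq_sub_of_add_eq' hsum] at hy'
  have hpow : (‖g x‖ * ‖y‖) ^ 4 = (‖g y‖ * ‖x‖) ^ 4 := by
    have hne : ‖v‖ ^ 4 ≠ 0 := pow_ne_zero 4 (norm_ne_zero_iff.2 hv0)
    set t := transitionProb (g x) (g v)
    have ht : ‖g v‖ ^ 4 * (t * (1 - t)) ≠ 0 := by
      intro ht
      have : ‖x‖ ^ 4 * ‖v‖ ^ 4 = 0 := by linear_combination 4 * ‖g x‖ ^ 4 * ht - 4 * hx'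
      exact mul_ne_zero (pow_ne_zero 4 (norm_ne_zero_iff.2 hx)) hne this
    refine mul_right_cancel₀ ht ?_
    linear_combination ‖y‖ ^ 4 * hx' - ‖x‖ ^ 4 * hy'
  exact (pow_left_inj₀ (by positivity) (by positivity) four_ne_zero).1 hpow

lemma norm_map_mul_norm (hg : IsVariancePreserving g) (hdim : 3 ≤ Module.rank ℂ E) {x y : E}
    (hx : x ≠ 0) (hy : y ≠ 0) : ‖g x‖ * ‖y‖ = ‖g y‖ * ‖x‖ := by
  obtain ⟨z, hz, hxz, hyz⟩ := exists_ne_zero_inner_eq_zero hdim x y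
  have hx' := hg.norm_map_mul_norm_of_inner_eq_zero hx hz hxz
  have hy' := hg.norm_map_mul_norm_of_inner_eq_zero hy hz hyz
  refine mul_right_cancel₀ (norm_ne_zero_iff.2 hz) ?_
  linear_combination ‖y‖ * hx' - ‖x‖ * hy'

lemma transitionProb_map_of_transitionProb_eq (hg : IsVariancePreserving g)
    (hdim : 3 ≤ Module.rank ℂ E) {x u v y : E} (hx : x ≠ 0) (hu : u ≠ 0) (hv : v ≠ 0)
    (hxu : ⟪x, u⟫_ℂ = 0) (hxv : ⟪x, v⟫_ℂ = 0) (huv : ⟪u, v⟫_ℂ = 0)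
    (hy : y ∈ Submodule.span ℂ (Set.range ![x, u, v])) (hxy : ⟪x, y⟫_ℂ ≠ 0)
    (hp : transitionProb x y ≠ 1) (hpuv : transitionProb u y = transitionProb v y) :
    transitionProb (g x) (g y) = transitionProb x y := by
  have hy0 : y ≠ 0 := fun h => hxy (by rw [h, inner_zero_right])
  set r := ‖g y‖ / ‖y‖
  have hr : r ^ 8 ≠ 0 :=
    pow_ne_zero 8 (div_ne_zero (hg.norm_map_ne_zero hy0) (norm_ne_zero_iff.2 hy0))
  have hnorm : ∀ w, w ≠ 0 → ‖g w‖ = r * ‖w‖ := fun w hw => by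
    rw [div_mul_eq_mul_div, eq_div_iff (norm_ne_zero_iff.2 hy0), hg.norm_map_mul_norm hdim hw hy0]
  have hvar : ∀ w, w ≠ 0 → r ^ 8 * (transitionProb (g w) (g y) *
      (1 - transitionProb (g w) (g y))) = transitionProb w y * (1 - transitionProb w y) := by
    intro w hw
    refine mul_left_cancel₀ (pow_ne_zero 4 (mul_ne_zero (norm_ne_zero_iff.2 hw)
      (norm_ne_zero_iff.2 hy0))) ((Eq.trans ?_ (hg.transitionProb_mul w y)))
    rw [hnorm w hw, hnorm y hy0]
    ring
  have horth := pairwise_inner_vec_three hxu hxv huv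
  have hne : ∀ i, ![x, u, v] i ≠ 0 := by simp [Fin.forall_fin_succ, hx, hu, hv]
  have hsum := sum_transitionProb hne horth hy0 hy
  have hsum' := hg.sum_transitionProb_map hne horth hy0 hy
  simp only [Fin.sum_univ_three, Matrix.cons_val] at hsum hsum'
  exact eq_of_add_add_eq_one hr hp
    (mt transitionProb_eq_zero_iff.1 (mt (hg.inner_eq_zero_iff x y).1 hxy)) (hpuv ▸ hsum)
    hsum' (hvar x hx) (hpuv ▸ hvar u hu) (hvar v hv)

lemma transitionProb_map (hg : IsVariancePreserving g) (hdim : 3 ≤ Module.rank ℂ E) (x y : E) :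
    transitionProb (g x) (g y) = transitionProb x y := by
  by_cases hxy : ⟪x, y⟫_ℂ = 0
  · rw [transitionProb_eq_zero_iff.2 hxy,
      transitionProb_eq_zero_iff.2 ((hg.inner_eq_zero_iff x y).2 hxy)]
  have hx : x ≠ 0 := by rintro rfl; simp at hxy
  have hy : y ≠ 0 := by rintro rfl; simp at hxy
  by_cases hp : transitionProb x y = 1
  · have h := hg.transitionProb_mul x y
    rw [hp, sub_self, mul_zero, mul_zero] at h
    have h := (mul_eq_zero.1 h).resolve_left (pow_ne_zero 4
      (mul_ne_zero (hg.norm_map_ne_zero hx) (hg.norm_map_ne_zero hy)))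
    rw [hp, eq_comm, ← sub_eq_zero]
    exact (mul_eq_zero.1 h).resolve_left
      (mt transitionProb_eq_zero_iff.1 (mt (hg.inner_eq_zero_iff x y).1 hxy))
  · obtain ⟨u, v, hu, hv, hxu, hxv, huv, hspan, hpuv⟩ := exists_transitionProb_eq hdim hx hxy hp
    exact hg.transitionProb_map_of_transitionProb_eq hdim hx hu hv hxu hxv huv hspan hxy hp hpuv

lemma norm_map (hg : IsVariancePreserving g) (hdim : 3 ≤ Module.rank ℂ E) (x : E) :
    ‖g x‖ = ‖x‖ := by
  rcases eq_or_ne x 0 with rfl | hx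
  · rw [hg.map_eq_zero_iff.2 rfl, norm_zero, norm_zero]
  obtain ⟨y, hy, hxy, -⟩ := exists_ne_zero_inner_eq_zero hdim x x
  set v := (‖y‖ : ℂ) • x + (‖x‖ : ℂ) • y
  have hp : transitionProb x v = 1 / 2 := transitionProb_norm_smul_add_norm_smul hx hy hxy
  have hv : v ≠ 0 := by
    rintro h
    simp [h, transitionProb] at hp
  have hprod : ‖g x‖ * ‖g v‖ = ‖x‖ * ‖v‖ := by
    have h := hg.transitionProb_mul x v
    rw [hg.transitionProb_map hdim, hp] at h
    refine (pow_left_inj₀ (by positivity) (by positivity) four_ne_zero).1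
      (mul_right_cancel₀ (by norm_num) h)
  have hsq : ‖g x‖ ^ 2 = ‖x‖ ^ 2 := by
    refine mul_right_cancel₀ (norm_ne_zero_iff.2 hv) ?_
    linear_combination ‖g x‖ * hg.norm_map_mul_norm hdim hx hv + ‖x‖ * hprod
  exact (pow_left_inj₀ (norm_nonneg _) (norm_nonneg _) two_ne_zero).1 hsq

theorem norm_inner_map (hg : IsVariancePreserving g) (hdim : 3 ≤ Module.rank ℂ E) (x y : E) :
    ‖⟪g x, g y⟫_ℂ‖ = ‖⟪x, y⟫_ℂ‖ := by
  rcases eq_or_ne x 0 with rfl | hx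
  · rw [hg.map_eq_zero_iff.2 rfl, inner_zero_left, inner_zero_left]
  rcases eq_or_ne y 0 with rfl | hy
  · rw [hg.map_eq_zero_iff.2 rfl, inner_zero_right, inner_zero_right]
  have h := hg.transitionProb_map hdim x y
  have hne : (‖x‖ * ‖y‖) ^ 2 ≠ 0 :=
    pow_ne_zero 2 (mul_ne_zero (norm_ne_zero_iff.2 hx) (norm_ne_zero_iff.2 hy))
  rw [transitionProb, transitionProb, hg.norm_map hdim, hg.norm_map hdim, div_left_inj' hne] at h
  exact (pow_left_inj₀ (norm_nonneg _) (norm_nonneg _) two_ne_zero).1 h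

end IsVariancePreserving

end TransitionProbability

section RayMap

variable {H : Type*} [NormedAddCommGroup H] [InnerProductSpace ℂ H]

lemma stateVariance_rankOne_self_comm (x y : H) :
    stateVariance (rankOne ℂ x x) y = stateVariance (rankOne ℂ y y) x := by
  rw [stateVariance_rankOne_self, stateVariance_rankOne_self, norm_inner_symm, mul_comm ‖x‖]

lemma inner_eq_zero_iff_stateVariance_rankOne {x y : H} (hy : y ≠ 0) :
    ⟪x, y⟫_ℂ = 0 ↔ stateVariance (rankOne ℂ y y) x = 0 ∧ ∀ c : ℂ, y ≠ c • x := by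
  constructor
  · refine fun hxy => ⟨by simp [stateVariance_rankOne_self, hxy], ?_⟩
    rintro c rfl
    refine hy (inner_self_eq_zero (𝕜 := ℂ).1 ?_)
    rw [inner_smul_left, hxy, mul_zero]
  · rintro ⟨hvar, hc⟩
    obtain ⟨d, hd⟩ := stateVariance_eq_zero_iff.1 hvar
    rw [InnerProductSpace.rankOne_apply] at hd
    by_contra hxy
    have hyx : ⟪y, x⟫_ℂ ≠ 0 := mt inner_eq_zero_symm.1 hxy
    exact hc ((⟪y, x⟫_ℂ)⁻¹ * d) (by rw [mul_smul, ← hd, inv_smul_smul₀ hyx])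

variable [CompleteSpace H]

lemma exists_eq_smul_iff_stateVariance (hdim : 3 ≤ Module.rank ℂ H) {x y : H} :
    (∃ c : ℂ, y = c • x) ↔
      ∀ A : SelfAdjointOp H, stateVariance (A : H →L[ℂ] H) x = 0 → stateVariance A.1 y = 0 := by
  constructor
  · rintro ⟨c, rfl⟩ A hA
    obtain ⟨d, hd⟩ := stateVariance_eq_zero_iff.1 hA
    exact stateVariance_eq_zero_iff.2 ⟨d, by rw [map_smul, hd, smul_comm]⟩
  · intro h
    by_contra! hc
    have hy : y ≠ 0 := fun hy => hc 0 (by rw [hy, zero_smul])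
    have hxy : ⟪x, y⟫_ℂ = 0 := by
      refine (inner_eq_zero_iff_stateVariance_rankOne hy).2 ⟨?_, hc⟩
      rw [← stateVariance_rankOne_self_comm]
      refine h ⟨_, isSelfAdjoint_rankOne_self x⟩ (stateVariance_eq_zero_iff.2 ⟨⟪x, x⟫_ℂ, ?_⟩)
      rw [InnerProductSpace.rankOne_apply]
    obtain ⟨z, hz, hxz, hyz⟩ := exists_ne_zero_inner_eq_zero hdim x y
    obtain ⟨c, hc⟩ := stateVariance_eq_zero_iff.1 <|
      h ⟨_, isSelfAdjoint_rankOne_self (y + z)⟩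
        (by rw [stateVariance_rankOne_self, inner_add_right, hxy, hxz]; simp)
    have hzz := congrArg (fun w => ⟪z, w⟫_ℂ) hc
    simp only [InnerProductSpace.rankOne_apply, inner_smul_right, inner_add_right, inner_add_left,
      inner_eq_zero_symm.1 hyz, add_zero, zero_add, mul_zero] at hzz
    exact mul_ne_zero (inner_self_ne_zero.2 hy) (inner_self_ne_zero.2 hz) hzz

/-- A surjection of `B_s(H)` which preserves the numerical ranges of commutators. -/
structure PreservesCommutatorRange (Φ : SelfAdjointOp H → SelfAdjointOp H) : Prop where
  surjective : Function.Surjective Φ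
  numRange_lie : ∀ A B : SelfAdjointOp H,
    numRange ⁅(A : H →L[ℂ] H), (B : H →L[ℂ] H)⁆ = numRange ⁅(Φ A : H →L[ℂ] H), (Φ B : H →L[ℂ] H)⁆

namespace PreservesCommutatorRange

variable {Φ : SelfAdjointOp H → SelfAdjointOp H}

lemma norm_lie (hΦ : PreservesCommutatorRange Φ) (A B : SelfAdjointOp H) :
    ‖⁅(A : H →L[ℂ] H), (B : H →L[ℂ] H)⁆‖ = ‖⁅(Φ A : H →L[ℂ] H), (Φ B : H →L[ℂ] H)⁆‖ :=
  norm_lie_eq_of_numRange_eq A.2 B.2 (Φ A).2 (Φ B).2 (hΦ.numRange_lie A B)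

lemma commute_map_iff (hΦ : PreservesCommutatorRange Φ) (A B : SelfAdjointOp H) :
    Commute (Φ A : H →L[ℂ] H) (Φ B) ↔ Commute (A : H →L[ℂ] H) B := by
  rw [commute_iff_lie_eq, commute_iff_lie_eq, ← norm_eq_zero, ← hΦ.norm_lie, norm_eq_zero]

lemma mem_DSet_map_iff (hΦ : PreservesCommutatorRange Φ) (A : SelfAdjointOp H) :
    (Φ A : H →L[ℂ] H) ∈ DSet H ↔ (A : H →L[ℂ] H) ∈ DSet H := by
  rw [mem_DSet_iff_numRange_lie_eq_neg (Φ A).2, mem_DSet_iff_numRange_lie_eq_neg A.2]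
  exact ⟨fun h B hB => by rw [hΦ.numRange_lie A ⟨B, hB⟩]; exact h _ (Φ ⟨B, hB⟩).2, fun h B hB => by
    obtain ⟨C, hC⟩ := hΦ.surjective ⟨B, hB⟩
    have := h C C.2
    rwa [hΦ.numRange_lie, hC] at this⟩

lemma isRankOneLike_map_iff (hΦ : PreservesCommutatorRange Φ) (A : SelfAdjointOp H) :
    IsRankOneLike (Φ A) ↔ IsRankOneLike A := by
  refine and_congr (hΦ.mem_DSet_map_iff A)
    (hΦ.surjective.forall₂.trans (forall₂_congr fun Q E => ?_))
  refine imp_congr (hΦ.mem_DSet_map_iff Q) (imp_congr (hΦ.commute_map_iff Q A)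
    (imp_congr ?_ (or_congr ?_ ?_))) <;>
  exact hΦ.surjective.forall.trans (by simp only [hΦ.commute_map_iff])

lemma stateVariance_eq (hΦ : PreservesCommutatorRange Φ) {x y : H} {ε δ : ℝ} (hε : |ε| = 1)
    (h : (Φ ⟨rankOne ℂ x x, isSelfAdjoint_rankOne_self x⟩ : H →L[ℂ] H) =
      (ε : ℂ) • rankOne ℂ y y + (δ : ℂ) • 1) (A : SelfAdjointOp H) :
    stateVariance (Φ A : H →L[ℂ] H) y = stateVariance (A : H →L[ℂ] H) x := by
  have hlie : ⁅(ε : ℂ) • rankOne ℂ y y + (δ : ℂ) • 1, (Φ A : H →L[ℂ] H)⁆ =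
      (ε : ℂ) • ⁅rankOne ℂ y y, (Φ A : H →L[ℂ] H)⁆ := by
    simp only [Ring.lie_def, mul_add, add_mul, mul_smul_comm, smul_mul_assoc, mul_one, one_mul]
    module
  rw [← norm_sq_lie_rankOne_self (Φ A).2, ← norm_sq_lie_rankOne_self A.2,
    hΦ.norm_lie ⟨_, isSelfAdjoint_rankOne_self x⟩, h, hlie, norm_smul, Complex.norm_real,
    Real.norm_eq_abs, hε, one_mul]

lemma exists_eq_smul_map_iff (hΦ : PreservesCommutatorRange Φ) (hdim : 3 ≤ Module.rank ℂ H)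
    {g : H → H} (hvar : ∀ (A : SelfAdjointOp H) (x : H),
      stateVariance (Φ A : H →L[ℂ] H) (g x) = stateVariance (A : H →L[ℂ] H) x) (x y : H) :
    (∃ c : ℂ, g y = c • g x) ↔ ∃ c : ℂ, y = c • x := by
  rw [exists_eq_smul_iff_stateVariance hdim, exists_eq_smul_iff_stateVariance hdim,
    hΦ.surjective.forall]
  simp only [hvar]

lemma map_eq_zero_iff (hΦ : PreservesCommutatorRange Φ) (hdim : 3 ≤ Module.rank ℂ H)
    {g : H → H} (hvar : ∀ (A : SelfAdjointOp H) (x : H),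
      stateVariance (Φ A : H →L[ℂ] H) (g x) = stateVariance (A : H →L[ℂ] H) x) (x : H) :
    g x = 0 ↔ x = 0 := by
  have hzero : g 0 = 0 := by
    obtain ⟨c, hc⟩ := (exists_eq_smul_iff_stateVariance hdim (x := (0 : H)) (y := g 0)).2 <|
      hΦ.surjective.forall.2 fun A _ => by rw [hvar]; simp [stateVariance]
    rw [hc, smul_zero]
  refine ⟨fun hx => ?_, fun hx => hx ▸ hzero⟩
  obtain ⟨c, hc⟩ := (hΦ.exists_eq_smul_map_iff hdim hvar 0 x).1 ⟨0, by rw [hx, zero_smul]⟩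
  rw [hc, smul_zero]

lemma exists_smul_map_eq (hΦ : PreservesCommutatorRange Φ) (hdim : 3 ≤ Module.rank ℂ H)
    {g : H → H} (hvar : ∀ (A : SelfAdjointOp H) (x : H),
      stateVariance (Φ A : H →L[ℂ] H) (g x) = stateVariance (A : H →L[ℂ] H) x) (u : H) :
    ∃ x, ∃ c : ℂ, c • g x = u := by
  obtain ⟨A, hA⟩ := hΦ.surjective ⟨_, isSelfAdjoint_rankOne_self u⟩
  obtain ⟨x, α, β, hα, hx⟩ := isRankOneLike_iff.1 <| (hΦ.isRankOneLike_map_iff A).1 <|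
    isRankOneLike_of_eq one_ne_zero (x := u) (δ := 0) (by simp [hA])
  obtain ⟨c, hc⟩ := (exists_eq_smul_iff_stateVariance hdim (x := g x) (y := u)).2 <|
    hΦ.surjective.forall.2 fun B hB => by
      have hα0 : (α : ℂ) ≠ 0 := Complex.ofReal_ne_zero.2 (abs_ne_zero.1 (hα ▸ one_ne_zero))
      have hAB : Commute (B : H →L[ℂ] H) A := by
        rw [hx, commute_smul_add_smul_one_iff hα0, Commute.symm_iff, commute_rankOne_self_iff B.2,
          ← stateVariance_eq_zero_iff, ← hvar, hB]
      rw [stateVariance_eq_zero_iff, ← commute_rankOne_self_iff (Φ B).2, Commute.symm_iff]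
      exact (congrArg (fun C : SelfAdjointOp H => Commute (Φ B : H →L[ℂ] H) C) hA).mp
        ((hΦ.commute_map_iff B A).2 hAB)
  exact ⟨x, c, hc.symm⟩

theorem exists_isVariancePreserving (hΦ : PreservesCommutatorRange Φ)
    (hdim : 3 ≤ Module.rank ℂ H) :
    ∃ g : H → H, IsVariancePreserving g ∧ ∀ (A : SelfAdjointOp H) (x : H),
      stateVariance (Φ A : H →L[ℂ] H) (g x) = stateVariance (A : H →L[ℂ] H) x := by
  choose g ε δ hε hg using fun x : H =>
    isRankOneLike_iff.1 ((hΦ.isRankOneLike_map_iff _).2 (isRankOneLike_of_eq one_ne_zero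
      (A := ⟨_, isSelfAdjoint_rankOne_self x⟩) (x := x) (δ := 0) (by simp)))
  have hvar := fun (A : SelfAdjointOp H) (x : H) => hΦ.stateVariance_eq (hε x) (hg x) A
  have hrank : ∀ x y,
      stateVariance (rankOne ℂ (g y) (g y)) (g x) = stateVariance (rankOne ℂ y y) x := by
    intro x y
    rw [← hvar ⟨_, isSelfAdjoint_rankOne_self y⟩ x, hg,
      stateVariance_smul_add_smul_one (isSelfAdjoint_rankOne_self _), ← sq_abs, hε, one_pow,
      one_mul]
  refine ⟨g, ⟨fun x y => ?_, fun u => ?_, hrank⟩, hvar⟩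
  · have hzero := hΦ.map_eq_zero_iff hdim hvar
    rcases eq_or_ne y 0 with rfl | hy
    · rw [(hzero 0).2 rfl, inner_zero_right, inner_zero_right]
    · rw [inner_eq_zero_iff_stateVariance_rankOne (mt (hzero y).1 hy), hrank, ← not_exists,
        hΦ.exists_eq_smul_map_iff hdim hvar, inner_eq_zero_iff_stateVariance_rankOne hy,
        ← not_exists]
  · exact hΦ.exists_smul_map_eq hdim hvar u

end PreservesCommutatorRange

end RayMap

section Wigner

open scoped ComplexConjugate

lemma forall_eq_or_forall_eq_of_map_add {G A : Type*} [Add G] [AddGroup A] {f f₁ f₂ : G → A}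
    (hf : ∀ x y, f (x + y) = f x + f y) (hf₁ : ∀ x y, f₁ (x + y) = f₁ x + f₁ y)
    (hf₂ : ∀ x y, f₂ (x + y) = f₂ x + f₂ y) (h : ∀ x, f x = f₁ x ∨ f x = f₂ x) :
    (∀ x, f x = f₁ x) ∨ ∀ x, f x = f₂ x := by
  by_contra! hne
  obtain ⟨⟨a, ha⟩, ⟨b, hb⟩⟩ := hne
  have ha₂ := (h a).resolve_left ha
  have hb₁ := (h b).resolve_right hb
  rcases h (a + b) with hab | hab
  · rw [hf, hf₁, hb₁] at hab
    exact ha (add_right_cancel hab)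
  · rw [hf, hf₂, ha₂] at hab
    exact hb (add_left_cancel hab)

lemma eq_or_eq_conj_of_re_eq_of_norm_eq {z w : ℂ} (hre : z.re = w.re) (hnorm : ‖z‖ = ‖w‖) :
    z = w ∨ z = conj w := by
  have him : z.im ^ 2 = w.im ^ 2 := by
    have h := congrArg (· ^ 2) hnorm
    simp only [Complex.sq_norm, Complex.normSq_apply, hre] at h
    linarith
  rcases sq_eq_sq_iff_eq_or_eq_neg.1 him with h | h
  · exact .inl (Complex.ext hre h)
  · exact .inr (Complex.ext hre h)

variable {E F : Type*} [NormedAddCommGroup E] [InnerProductSpace ℂ E] [NormedAddCommGroup F]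
  [InnerProductSpace ℂ F]

lemma map_add_of_re_inner_map {τ : E → F} (h : ∀ a b, (⟪τ a, τ b⟫_ℂ).re = (⟪a, b⟫_ℂ).re)
    (a b : E) : τ (a + b) = τ a + τ b := by
  rw [← sub_eq_zero, ← inner_self_eq_zero (𝕜 := ℂ), inner_self_eq_ofReal_norm_sq,
    Complex.ofReal_eq_zero, ← Complex.ofReal_re (_ ^ 2), ← inner_self_eq_ofReal_norm_sq]
  simp only [inner_sub_left, inner_sub_right, inner_add_left, inner_add_right, Complex.sub_re,
    Complex.add_re, h]
  ring

lemma inner_map_map_eq_or_eq_conj {τ : E → F} (hre : ∀ a b, (⟪τ a, τ b⟫_ℂ).re = (⟪a, b⟫_ℂ).re)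
    (hnorm : ∀ a b, ‖⟪τ a, τ b⟫_ℂ‖ = ‖⟪a, b⟫_ℂ‖) :
    (∀ a b, ⟪τ a, τ b⟫_ℂ = ⟪a, b⟫_ℂ) ∨ ∀ a b, ⟪τ a, τ b⟫_ℂ = conj ⟪a, b⟫_ℂ := by
  have hadd := map_add_of_re_inner_map hre
  have hpoint : ∀ a, (∀ b, ⟪τ a, τ b⟫_ℂ = ⟪a, b⟫_ℂ) ∨ ∀ b, ⟪τ a, τ b⟫_ℂ = conj ⟪a, b⟫_ℂ := by
    refine fun a => forall_eq_or_forall_eq_of_map_add (fun b c => ?_) (fun b c => ?_)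
      (fun b c => ?_) fun b =>
        eq_or_eq_conj_of_re_eq_of_norm_eq (hre a b) (hnorm a b)
    · rw [hadd, inner_add_right]
    · rw [inner_add_right]
    · rw [inner_add_right, map_add]
  simp only [← funext_iff (f := fun b => ⟪τ _, τ b⟫_ℂ)] at hpoint ⊢
  refine forall_eq_or_forall_eq_of_map_add (fun b c => ?_) (fun b c => ?_) (fun b c => ?_) hpoint
  · funext d
    rw [hadd, inner_add_left, Pi.add_apply]
  · funext d
    rw [inner_add_left, Pi.add_apply]
  · funext d
    rw [inner_add_left, map_add, Pi.add_apply]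

variable {σ : ℂ →+* ℂ} [RingHomIsometric σ]

lemma conj_apply_eq_apply_conj (z : ℂ) : conj (σ z) = σ (conj z) := by
  obtain rfl | rfl := eq_id_or_eq_starRingEnd σ <;> rfl

/-- The semilinear isometry given by a map which preserves the inner product up to `σ`. -/
def linearIsometryOfInner (V : E → F) (hV : ∀ x y, ⟪V x, V y⟫_ℂ = σ ⟪x, y⟫_ℂ) :
    E →ₛₗᵢ[σ] F where
  toFun := V
  map_add' := map_add_of_re_inner_map fun a b => by
    obtain rfl | rfl := eq_id_or_eq_starRingEnd σ <;> rw [hV]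
    · rfl
    · rw [Complex.conj_re]
  map_smul' c x := by
    rw [← sub_eq_zero, ← inner_self_eq_zero (𝕜 := ℂ)]
    simp only [inner_sub_left, inner_sub_right, inner_smul_left, inner_smul_right, hV, map_mul,
      conj_apply_eq_apply_conj]
    ring
  norm_map' x := by
    have h := congrArg norm (hV x x)
    rw [RingHomIsometric.norm_map, inner_self_eq_ofReal_norm_sq, inner_self_eq_ofReal_norm_sq,
      Complex.norm_real, Complex.norm_real, norm_pow, norm_pow, norm_norm, norm_norm] at h
    exact (pow_left_inj₀ (norm_nonneg _) (norm_nonneg _) two_ne_zero).1 h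

lemma exists_eq_smul_of_norm_inner_eq {u v : E} (h : ‖⟪u, v⟫_ℂ‖ = ‖u‖ * ‖v‖)
    (hnorm : ‖u‖ = ‖v‖) : ∃ c : ℂ, ‖c‖ = 1 ∧ v = c • u := by
  rcases eq_or_ne u 0 with rfl | hu
  · exact ⟨1, norm_one, by rw [smul_zero, norm_eq_zero.1 (hnorm.symm.trans norm_zero)]⟩
  · have htfae := (norm_inner_eq_norm_tfae ℂ u v).out 0 2
    obtain ⟨c, rfl⟩ := (htfae.1 h).resolve_left hu
    rw [norm_smul, eq_comm, mul_eq_right₀ (norm_ne_zero_iff.2 hu)] at hnorm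
    exact ⟨c, hnorm, rfl⟩

variable {g : E → F}

lemma norm_map_of_norm_inner_map (hg : ∀ x y, ‖⟪g x, g y⟫_ℂ‖ = ‖⟪x, y⟫_ℂ‖) (x : E) :
    ‖g x‖ = ‖x‖ := by
  have h := hg x x
  rw [inner_self_eq_ofReal_norm_sq, inner_self_eq_ofReal_norm_sq, Complex.norm_real,
    Complex.norm_real, norm_pow, norm_pow, norm_norm, norm_norm] at h
  exact (pow_left_inj₀ (norm_nonneg _) (norm_nonneg _) two_ne_zero).1 h

-- Choose the representative of the ray of `g (e + a)` whose component along `g e` is `g e`.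
lemma exists_inner_eq_zero_add_eq_smul (hg : ∀ x y, ‖⟪g x, g y⟫_ℂ‖ = ‖⟪x, y⟫_ℂ‖) {e a : E}
    (he : ‖e‖ = 1) (hea : ⟪e, a⟫_ℂ = 0) :
    ∃ t, ⟪g e, t⟫_ℂ = 0 ∧ (∃ c : ℂ, ‖c‖ = 1 ∧ g e + t = c • g (e + a)) ∧
      ∃ d : ℂ, ‖d‖ = 1 ∧ t = d • g a := by
  have hnorm := norm_map_of_norm_inner_map hg
  have hinner : ‖⟪g e, g (e + a)⟫_ℂ‖ = 1 := by
    rw [hg, inner_add_right, hea, add_zero, inner_self_eq_ofReal_norm_sq, he]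
    simp
  have hinner0 : ⟪g e, g (e + a)⟫_ℂ ≠ 0 := norm_ne_zero_iff.1 (hinner ▸ one_ne_zero)
  have hga : ⟪g a, g e⟫_ℂ = 0 := by
    rw [← norm_eq_zero, hg, inner_eq_zero_symm.1 hea, norm_zero]
  set c := (⟪g e, g (e + a)⟫_ℂ)⁻¹
  have hc : ‖c‖ = 1 := by rw [norm_inv, hinner, inv_one]
  set t := c • g (e + a) - g e
  have hadd : g e + t = c • g (e + a) := add_sub_cancel _ _
  have het : ⟪g e, t⟫_ℂ = 0 := by
    rw [inner_sub_right, inner_smul_right, inv_mul_cancel₀ hinner0, inner_self_eq_ofReal_norm_sq,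
      hnorm, he]
    simp
  have hnorm_t : ‖g a‖ = ‖t‖ := by
    have h := norm_add_sq_eq_norm_sq_add_norm_sq_of_inner_eq_zero (𝕜 := ℂ) _ _ het
    rw [hadd, norm_smul, hc, one_mul, hnorm, hnorm,
      norm_add_sq_eq_norm_sq_add_norm_sq_of_inner_eq_zero (𝕜 := ℂ) _ _ hea, add_right_inj] at h
    rw [hnorm]
    exact (mul_self_inj_of_nonneg (norm_nonneg _) (norm_nonneg _)).1 h
  refine ⟨t, het, ⟨c, hc, hadd⟩, exists_eq_smul_of_norm_inner_eq ?_ hnorm_t⟩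
  rw [inner_sub_right, hga, sub_zero, inner_smul_right, norm_mul, hc, one_mul, hg,
    inner_add_right, inner_eq_zero_symm.1 hea, zero_add, inner_self_eq_ofReal_norm_sq, ← hnorm_t,
    hnorm, ← sq, Complex.norm_real, norm_pow, norm_norm]

lemma exists_inner_map_eq (hg : ∀ x y, ‖⟪g x, g y⟫_ℂ‖ = ‖⟪x, y⟫_ℂ‖) {e : E} (he : ‖e‖ = 1) :
    ∃ (σ : ℂ →+* ℂ) (_ : RingHomInvPair σ σ) (_ : RingHomIsometric σ) (τ : (ℂ ∙ e)ᗮ → F),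
      (∀ a b, ⟪τ a, τ b⟫_ℂ = σ ⟪a, b⟫_ℂ) ∧ (∀ a, ⟪g e, τ a⟫_ℂ = 0) ∧
      (∀ a, ∃ c : ℂ, ‖c‖ = 1 ∧ g e + τ a = c • g (e + a)) ∧
      ∀ a, ∃ d : ℂ, ‖d‖ = 1 ∧ τ a = d • g a := by
  have hM : ∀ a : (ℂ ∙ e)ᗮ, ⟪e, a⟫_ℂ = 0 := fun a =>
    Submodule.mem_orthogonal_singleton_iff_inner_right.1 a.2
  have hτ_exists : ∀ a : (ℂ ∙ e)ᗮ, ∃ t, ⟪g e, t⟫_ℂ = 0 ∧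
      (∃ c : ℂ, ‖c‖ = 1 ∧ g e + t = c • g (e + a)) ∧ ∃ d : ℂ, ‖d‖ = 1 ∧ t = d • g a := fun a =>
    exists_inner_eq_zero_add_eq_smul hg he (hM a)
  choose τ hτ hadd hτg using hτ_exists
  choose c hc hadd_eq using hadd
  choose d hd hτ_eq using hτg
  have hnorm : ∀ a b, ‖⟪τ a, τ b⟫_ℂ‖ = ‖⟪a, b⟫_ℂ‖ := fun a b => by
    rw [hτ_eq, hτ_eq, inner_smul_left, inner_smul_right, norm_mul, norm_mul, RCLike.norm_conj, hd,
      hd, one_mul, one_mul, hg, Submodule.coe_inner]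
  have hnorm_add : ∀ a b, ‖1 + ⟪τ a, τ b⟫_ℂ‖ = ‖1 + ⟪a, b⟫_ℂ‖ := fun a b => by
    have h : ‖⟪g e + τ a, g e + τ b⟫_ℂ‖ = ‖⟪e + a, e + b⟫_ℂ‖ := by
      rw [hadd_eq, hadd_eq, inner_smul_left, inner_smul_right, norm_mul, norm_mul,
        RCLike.norm_conj, hc, hc, one_mul, one_mul, hg]
    simpa [inner_add_left, inner_add_right, inner_self_eq_ofReal_norm_sq, hM, hτ,
      inner_eq_zero_symm.1 (hM _), inner_eq_zero_symm.1 (hτ _), he,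
      norm_map_of_norm_inner_map hg] using h
  have hre : ∀ a b, (⟪τ a, τ b⟫_ℂ).re = (⟪a, b⟫_ℂ).re := fun a b => by
    have h := congrArg (· ^ 2) (hnorm a b)
    have h' := congrArg (· ^ 2) (hnorm_add a b)
    simp only [Complex.sq_norm, Complex.normSq_apply, Complex.add_re, Complex.add_im,
      Complex.one_re, Complex.one_im] at h h'
    linarith
  obtain h | h := inner_map_map_eq_or_eq_conj hre hnorm
  · exact ⟨RingHom.id ℂ, inferInstance, inferInstance, τ, h, hτ,
      fun a => ⟨c a, hc a, hadd_eq a⟩, fun a => ⟨d a, hd a, hτ_eq a⟩⟩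
  · exact ⟨starRingEnd ℂ, inferInstance, inferInstance, τ, h, hτ,
      fun a => ⟨c a, hc a, hadd_eq a⟩, fun a => ⟨d a, hd a, hτ_eq a⟩⟩

lemma exists_map_smul_eq_smul (hg : ∀ x y, ‖⟪g x, g y⟫_ℂ‖ = ‖⟪x, y⟫_ℂ‖) (V : E →ₛₗᵢ[σ] F) {y : E}
    (h : ∃ c : ℂ, ‖c‖ = 1 ∧ V y = c • g y) (α : ℂ) :
    ∃ c : ℂ, ‖c‖ = 1 ∧ V (α • y) = c • g (α • y) := by
  obtain ⟨c, hc, hcy⟩ := h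
  have hnorm := norm_map_of_norm_inner_map hg
  refine exists_eq_smul_of_norm_inner_eq ?_ ((hnorm _).trans (V.norm_map _).symm)
  rw [V.norm_map, hnorm, map_smulₛₗ, hcy, inner_smul_right, inner_smul_right, norm_mul, norm_mul,
    hc, one_mul, RingHomIsometric.norm_map, hg, ← norm_mul, ← inner_smul_right,
    inner_self_eq_ofReal_norm_sq, Complex.norm_real, norm_pow, norm_norm, sq]

lemma exists_linearIsometry_eq_smul [Nontrivial E]
    (hg : ∀ x y, ‖⟪g x, g y⟫_ℂ‖ = ‖⟪x, y⟫_ℂ‖) :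
    ∃ (σ : ℂ →+* ℂ) (_ : RingHomInvPair σ σ) (_ : RingHomIsometric σ) (V : E →ₛₗᵢ[σ] F),
      ∀ x, ∃ c : ℂ, ‖c‖ = 1 ∧ V x = c • g x := by
  obtain ⟨e, he⟩ := exists_norm_eq E zero_le_one
  obtain ⟨σ, hσ, hσ', τ, hτ, heτ, hadd, hτg⟩ := exists_inner_map_eq hg he
  have hee : ⟪e, e⟫_ℂ = 1 := by rw [inner_self_eq_ofReal_norm_sq, he]; simp
  have hgee : ⟪g e, g e⟫_ℂ = 1 := by
    rw [inner_self_eq_ofReal_norm_sq, norm_map_of_norm_inner_map hg, he]; simp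
  let P : E → (ℂ ∙ e)ᗮ := fun x => ⟨x - ⟪e, x⟫_ℂ • e,
    Submodule.mem_orthogonal_singleton_iff_inner_right.2 <| by
      rw [inner_sub_right, inner_smul_right, hee, mul_one, sub_self]⟩
  let V : E →ₛₗᵢ[σ] F := linearIsometryOfInner (fun x => σ ⟪e, x⟫_ℂ • g e + τ (P x)) fun x y => by
    have hP : ⟪P x, P y⟫_ℂ = ⟪x, y⟫_ℂ - conj ⟪e, x⟫_ℂ * ⟪e, y⟫_ℂ := by
      simp only [P, Submodule.coe_inner, inner_sub_left, inner_sub_right, inner_smul_left,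
        inner_smul_right, hee, inner_conj_symm]
      ring
    simp only [inner_add_left, inner_add_right, inner_smul_left, inner_smul_right, hgee, heτ, hτ,
      inner_eq_zero_symm.1 (heτ _), hP, conj_apply_eq_apply_conj,
      map_sub, map_mul]
    ring
  have hV_def : ∀ x, V x = σ ⟪e, x⟫_ℂ • g e + τ (P x) := fun _ => rfl
  refine ⟨σ, hσ, hσ', V, fun x => ?_⟩
  rcases eq_or_ne ⟪e, x⟫_ℂ 0 with hx | hx
  · have hPx : (P x : E) = x := by simp only [P, hx, zero_smul, sub_zero]
    obtain ⟨d, hd, hdx⟩ := hτg (P x)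
    exact ⟨d, hd, by rw [hV_def, hx, map_zero, zero_smul, zero_add, hdx, hPx]⟩
  · suffices ∃ c : ℂ, ‖c‖ = 1 ∧ V ((⟪e, x⟫_ℂ)⁻¹ • x) = c • g ((⟪e, x⟫_ℂ)⁻¹ • x) by
      simpa only [smul_inv_smul₀ hx] using exists_map_smul_eq_smul hg V this ⟪e, x⟫_ℂ
    have hone : ⟪e, (⟪e, x⟫_ℂ)⁻¹ • x⟫_ℂ = 1 := by rw [inner_smul_right, inv_mul_cancel₀ hx]
    obtain ⟨c, hc, hcx⟩ := hadd (P ((⟪e, x⟫_ℂ)⁻¹ • x))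
    refine ⟨c, hc, ?_⟩
    rw [hV_def, hone, map_one, one_smul, hcx]
    simp only [P, hone, one_smul, add_sub_cancel]

/-- **Wigner's theorem** for maps defined on vectors. -/
theorem exists_linearIsometryEquiv_eq_smul [Nontrivial E]
    (hg : ∀ x y, ‖⟪g x, g y⟫_ℂ‖ = ‖⟪x, y⟫_ℂ‖) (hsurj : ∀ u, ∃ x, ∃ c : ℂ, c • g x = u) :
    ∃ (σ : ℂ →+* ℂ) (_ : RingHomInvPair σ σ) (_ : RingHomIsometric σ) (V : E ≃ₛₗᵢ[σ] F),
      ∀ x, ∃ c : ℂ, ‖c‖ = 1 ∧ V x = c • g x := by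
  obtain ⟨σ, hσ, hσ', V, hV⟩ := exists_linearIsometry_eq_smul hg
  have hVsurj : Function.Surjective V := fun u => by
    obtain ⟨x, c, rfl⟩ := hsurj u
    obtain ⟨d, hd, hdx⟩ := hV x
    have hd0 : d ≠ 0 := norm_ne_zero_iff.1 (hd ▸ one_ne_zero)
    refine ⟨σ (c * d⁻¹) • x, ?_⟩
    rw [map_smulₛₗ, RingHomInvPair.comp_apply_eq₂, hdx, smul_smul, inv_mul_cancel_right₀ hd0]
  exact ⟨σ, hσ, hσ', .ofSurjective V hVsurj, hV⟩

end Wigner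

section EqualVariance

variable {H : Type*} [NormedAddCommGroup H] [InnerProductSpace ℂ H]

lemma inner_apply_mul_inner_apply_eq {B C D : H →L[ℂ] H}
    (h : ∀ x, ⟪x, B x⟫_ℂ * ⟪x, C x⟫_ℂ = ⟪x, x⟫_ℂ * ⟪x, D x⟫_ℂ) (x y : H) :
    ⟪y, B x⟫_ℂ * ⟪y, C x⟫_ℂ = ⟪y, x⟫_ℂ * ⟪y, D x⟫_ℂ := by
  set G : H → H → ℂ := fun x y => ⟪y, B x⟫_ℂ * ⟪y, C x⟫_ℂ - ⟪y, x⟫_ℂ * ⟪y, D x⟫_ℂ with hG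
  have hsum : ∀ y, G x y + G y x = 0 := fun y => by
    have h1 := h (x + y)
    have h2 := h (x + (-1 : ℂ) • y)
    have h3 := h (x + Complex.I • y)
    have h4 := h (x + (-Complex.I) • y)
    simp only [map_add, map_smul, inner_add_left, inner_add_right, inner_smul_left,
      inner_smul_right, map_neg, map_one, Complex.conj_I] at h1 h2 h3 h4
    simp only [hG]
    ring_nf at h1 h2 h3 h4
    simp only [Complex.I_sq, Complex.I_pow_three, Complex.I_pow_four] at h1 h2 h3 h4
    linear_combination (h1 + h2 - h3 - h4) / 4
  have hsum' := hsum ((1 + Complex.I) • y)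
  have hleft : G x ((1 + Complex.I) • y) = -(2 * Complex.I) * G x y := by
    simp only [hG, inner_smul_left, map_add, map_one, Complex.conj_I]
    linear_combination (⟪y, B x⟫_ℂ * ⟪y, C x⟫_ℂ - ⟪y, x⟫_ℂ * ⟪y, D x⟫_ℂ) * Complex.I_sq
  have hright : G ((1 + Complex.I) • y) x = 2 * Complex.I * G y x := by
    simp only [hG, inner_smul_right, map_smul]
    linear_combination (⟪x, B y⟫_ℂ * ⟪x, C y⟫_ℂ - ⟪x, y⟫_ℂ * ⟪x, D y⟫_ℂ) * Complex.I_sq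
  rw [hleft, hright] at hsum'
  have hzero : G x y = 0 := by
    linear_combination (1 / 2) * hsum y + Complex.I / 4 * hsum' +
      (G x y - G y x) / 2 * Complex.I_sq
  exact sub_eq_zero.1 hzero

lemma apply_eq_smul_or_apply_eq_smul {B C D : H →L[ℂ] H}
    (h : ∀ x, ⟪x, B x⟫_ℂ * ⟪x, C x⟫_ℂ = ⟪x, x⟫_ℂ * ⟪x, D x⟫_ℂ) (x : H) :
    (∃ c : ℂ, B x = c • x) ∨ ∃ c : ℂ, C x = c • x := by
  have hunion : ((ℂ ∙ x)ᗮ : Set H) ⊆ (ℂ ∙ B x)ᗮ ∪ (ℂ ∙ C x)ᗮ := fun y hy => by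
    have hyx := Submodule.mem_orthogonal_singleton_iff_inner_left.1 hy
    have hprod := inner_apply_mul_inner_apply_eq h x y
    rw [hyx, zero_mul, mul_eq_zero] at hprod
    exact hprod.imp Submodule.mem_orthogonal_singleton_iff_inner_left.2
      Submodule.mem_orthogonal_singleton_iff_inner_left.2
  have hspan : ∀ u : H, (ℂ ∙ x)ᗮ ≤ (ℂ ∙ u)ᗮ → ∃ c : ℂ, u = c • x := fun u hu => by
    have := Submodule.orthogonal_le hu
    rw [Submodule.orthogonal_orthogonal, Submodule.orthogonal_orthogonal,
      Submodule.span_singleton_le_iff_mem, Submodule.mem_span_singleton] at this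
    exact this.imp fun _ => Eq.symm
  exact (AddSubgroupClass.subset_union.1 hunion).imp (hspan _) (hspan _)

lemma analyticOnNhd_stateVariance_add_smul (A : H →L[ℂ] H) (x d : H) :
    AnalyticOnNhd ℝ (fun t : ℝ => stateVariance A (x + (t : ℂ) • d)) Set.univ := by
  have hnorm : ∀ (u v : H) (t : ℝ), ‖u + (t : ℂ) • v‖ ^ 2 =
      ‖u‖ ^ 2 + 2 * (t * (⟪u, v⟫_ℂ).re) + t ^ 2 * ‖v‖ ^ 2 := fun u v t => by
    rw [@norm_add_sq ℂ, inner_smul_right, RCLike.re_to_complex, Complex.re_ofReal_mul, norm_smul,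
      mul_pow, Complex.norm_real, Real.norm_eq_abs, sq_abs]
  intro t _
  simp only [stateVariance, map_add, map_smul, hnorm, Complex.sq_norm, Complex.normSq_apply,
    inner_add_left, inner_add_right, inner_smul_left, inner_smul_right, Complex.conj_ofReal,
    Complex.add_re, Complex.add_im, Complex.re_ofReal_mul, Complex.im_ofReal_mul]
  fun_prop

lemma forall_or_forall_apply_eq_smul {B C : H →L[ℂ] H}
    (h : ∀ x, (∃ c : ℂ, B x = c • x) ∨ ∃ c : ℂ, C x = c • x) :
    (∀ x, ∃ c : ℂ, B x = c • x) ∨ ∀ x, ∃ c : ℂ, C x = c • x := by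
  simp only [← stateVariance_eq_zero_iff] at h ⊢
  by_contra! hne
  obtain ⟨⟨x, hx⟩, y, hy⟩ := hne
  rcases (analyticOnNhd_stateVariance_add_smul B x (y - x)).eq_zero_or_eq_zero_of_mul_eq_zero
    (analyticOnNhd_stateVariance_add_smul C x (y - x))
    (fun t _ => mul_eq_zero.2 (h (x + (t : ℂ) • (y - x)))) isPreconnected_univ with hB | hC
  · exact hx (by simpa using hB 0 trivial)
  · exact hy (by simpa using hC 1 trivial)

variable [CompleteSpace H]

lemma ofReal_stateVariance {A : H →L[ℂ] H} (hA : IsSelfAdjoint A) (x : H) :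
    (stateVariance A x : ℂ) = ⟪x, x⟫_ℂ * ⟪x, A (A x)⟫_ℂ - ⟪x, A x⟫_ℂ ^ 2 := by
  rw [stateVariance, ← inner_apply_left hA x (A x), inner_self_eq_ofReal_norm_sq,
    inner_self_eq_ofReal_norm_sq, sq ⟪x, A x⟫_ℂ]
  nth_rw 2 [← inner_apply_left hA x x]
  rw [← inner_conj_symm (A x) x, Complex.conj_mul']
  push_cast
  rfl

theorem exists_eq_smul_add_smul_one_of_stateVariance_eq {A B : H →L[ℂ] H} (hA : IsSelfAdjoint A)
    (hB : IsSelfAdjoint B) (h : ∀ x, stateVariance B x = stateVariance A x) :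
    ∃ s c : ℝ, |s| = 1 ∧ B = (s : ℂ) • A + (c : ℂ) • 1 := by
  have hprod : ∀ x, ⟪x, (B - A) x⟫_ℂ * ⟪x, (B + A) x⟫_ℂ =
      ⟪x, x⟫_ℂ * ⟪x, (B * B - A * A) x⟫_ℂ := fun x => by
    have hx := congrArg (fun r : ℝ => (r : ℂ)) (h x)
    simp only [ofReal_stateVariance hA, ofReal_stateVariance hB] at hx
    simp only [sub_apply, add_apply, mul_apply_eq_comp, inner_add_right, inner_sub_right]
    linear_combination -hx
  rcases forall_or_forall_apply_eq_smul (apply_eq_smul_or_apply_eq_smul hprod) with h | h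
  · obtain ⟨c, hc⟩ := exists_smul_one_of_forall_apply_eq_smul h
    obtain ⟨r, hr⟩ := exists_ofReal_smul_one (hc ▸ hB.sub hA)
    exact ⟨1, r, abs_one, by rw [← hr, ← hc, Complex.ofReal_one, one_smul]; abel⟩
  · obtain ⟨c, hc⟩ := exists_smul_one_of_forall_apply_eq_smul h
    obtain ⟨r, hr⟩ := exists_ofReal_smul_one (hc ▸ hB.add hA)
    refine ⟨-1, r, by simp, ?_⟩
    rw [← hr, ← hc, Complex.ofReal_neg, Complex.ofReal_one, neg_smul, one_smul]
    abel

end EqualVariance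

section Representation

variable {H : Type*} [NormedAddCommGroup H] [InnerProductSpace ℂ H]

lemma stateVariance_smul (A : H →L[ℂ] H) (c : ℂ) (x : H) :
    stateVariance A (c • x) = ‖c‖ ^ 4 * stateVariance A x := by
  simp only [stateVariance, map_smul, inner_smul_left, inner_smul_right, norm_smul, norm_mul,
    RCLike.norm_conj]
  ring

variable {σ : ℂ →+* ℂ} [RingHomInvPair σ σ] [RingHomIsometric σ]

lemma stateVariance_conjugate (V : H ≃ₛₗᵢ[σ] H) (A : H →L[ℂ] H) (x : H) :
    stateVariance (conjugate V A) (V x) = stateVariance A x := by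
  have hinner : ⟪V x, V (A x)⟫_ℂ = σ ⟪x, A x⟫_ℂ :=
    inner_map_map_eq_apply_inner V.toLinearIsometry x (A x)
  simp only [stateVariance, conjugate_apply, V.symm_apply_apply, V.norm_map, hinner,
    RingHomIsometric.norm_map]

variable [CompleteSpace H]

lemma isSelfAdjoint_conjugate (V : H ≃ₛₗᵢ[σ] H) {A : H →L[ℂ] H} (hA : IsSelfAdjoint A) :
    IsSelfAdjoint (conjugate V A) := by
  refine ContinuousLinearMap.isSelfAdjoint_iff_isSymmetric.2 fun x y => ?_
  rw [ContinuousLinearMap.coe_coe, inner_conjugate_apply, ← inner_conj_symm,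
    inner_conjugate_apply, conj_apply_eq_apply_conj, inner_conj_symm, inner_apply_left hA]

theorem PreservesCommutatorRange.exists_eq_smul_conjugate {Φ : SelfAdjointOp H → SelfAdjointOp H}
    (hΦ : PreservesCommutatorRange Φ) (hdim : 3 ≤ Module.rank ℂ H) :
    ∃ (σ : ℂ →+* ℂ) (_ : RingHomInvPair σ σ) (_ : RingHomIsometric σ) (V : H ≃ₛₗᵢ[σ] H),
      ∀ A : SelfAdjointOp H, ∃ s c : ℝ, |s| = 1 ∧
        (Φ A : H →L[ℂ] H) = (s : ℂ) • conjugate V (A : H →L[ℂ] H) + (c : ℂ) • 1 := by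
  have : Nontrivial H := rank_pos_iff_nontrivial.1 (three_pos.trans_le hdim)
  obtain ⟨g, hg, hvar⟩ := hΦ.exists_isVariancePreserving hdim
  obtain ⟨σ, hσ, hσ', V, hV⟩ :=
    exists_linearIsometryEquiv_eq_smul (hg.norm_inner_map hdim) hg.exists_smul_eq
  refine ⟨σ, hσ, hσ', V, fun A => exists_eq_smul_add_smul_one_of_stateVariance_eq
    (isSelfAdjoint_conjugate V A.2) (Φ A).2 (V.surjective.forall.2 fun x => ?_)⟩
  obtain ⟨c, hc, hcx⟩ := hV x
  rw [stateVariance_conjugate, hcx, stateVariance_smul, hc, one_pow, one_mul, hvar]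

end Representation

section RotationGenerator

lemma isPreconnected_compl_submodule {E : Type*} [AddCommGroup E] [Module ℂ E]
    [TopologicalSpace E] [IsTopologicalAddGroup E] [ContinuousSMul ℝ E] (M : Submodule ℂ E) :
    IsPreconnected (M : Set E)ᶜ := by
  rcases eq_or_ne M ⊤ with rfl | hM
  · simpa using isPreconnected_empty
  · have : Nontrivial (E ⧸ M) := Submodule.Quotient.nontrivial_iff.2 hM
    refine (isConnected_compl_of_one_lt_codim (E := M.restrictScalars ℝ) ?_).isPreconnected
    have hrank : 1 ≤ Module.rank ℂ (E ⧸ M) := Cardinal.one_le_iff_pos.2 rank_pos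
    calc (1 : Cardinal) < 2 * 1 := by norm_num
      _ ≤ 2 * Module.rank ℂ (E ⧸ M) := by gcongr
      _ = Module.rank ℝ (E ⧸ M) := (rank_real_of_complex _).symm

variable {H : Type*} [NormedAddCommGroup H] [InnerProductSpace ℂ H]

lemma linearIndependent_pair_of_inner_eq_zero {x y : H} (hx : x ≠ 0) (hy : y ≠ 0)
    (h : ⟪x, y⟫_ℂ = 0) : LinearIndependent ℂ ![x, y] := by
  refine (LinearIndependent.pair_iff' hx).2 ?_
  rintro a rfl
  rw [inner_smul_right, mul_eq_zero, inner_self_eq_zero] at h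
  rcases h with rfl | h
  · exact hy (zero_smul ℂ x)
  · exact hx h

lemma rotationGenerator_neg_right (u v : H) :
    rotationGenerator v (-u) = rotationGenerator u v := by
  ext z
  simp only [rotationGenerator_apply, inner_neg_left]
  module

lemma inner_eq_zero_of_rotationGenerator_apply_eq_zero {u v x : H}
    (h : LinearIndependent ℂ ![u, v]) (hx : rotationGenerator u v x = 0) :
    ⟪u, x⟫_ℂ = 0 ∧ ⟪v, x⟫_ℂ = 0 := by
  rw [rotationGenerator_apply, smul_eq_zero_iff_right Complex.I_ne_zero] at hx
  obtain ⟨hv, hu⟩ := LinearIndependent.pair_iff.1 h (-⟪v, x⟫_ℂ) ⟪u, x⟫_ℂ (by rw [← hx]; module)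
  exact ⟨hu, neg_eq_zero.1 hv⟩

variable [CompleteSpace H]

-- On `D(H)` an operator is annihilated by a polynomial `T² - aT - b`. A rotation generator has a
-- kernel, so `b = 0`; then `N u - a u` is a kernel vector in the range of `N`.
lemma rotationGenerator_notMem_DSet (hdim : 3 ≤ Module.rank ℂ H) {u v : H}
    (h : LinearIndependent ℂ ![u, v]) : rotationGenerator u v ∉ DSet H := by
  set N := rotationGenerator u v with hN
  intro hD
  obtain ⟨-, a, b, hab⟩ := mem_DSet_iff.1 hD
  have hNN : ∀ x, N (N x) = (a : ℂ) • N x + (b : ℂ) • x := fun x => congr($hab x)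
  obtain ⟨z, hz, huz, hvz⟩ := exists_ne_zero_inner_eq_zero hdim u v
  have hNz : N z = 0 := by simp [hN, rotationGenerator_apply, huz, hvz]
  have hb : (b : ℂ) = 0 := by
    have := hNN z
    rw [hNz, map_zero, smul_zero, zero_add, eq_comm, smul_eq_zero] at this
    exact this.resolve_right hz
  have hker : N (N u - (a : ℂ) • u) = 0 := by rw [map_sub, map_smul, hNN, hb]; module
  have horth : ∀ y, ⟪u, y⟫_ℂ = 0 → ⟪v, y⟫_ℂ = 0 → ⟪N u - (a : ℂ) • u, y⟫_ℂ = 0 := fun y hu hv => by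
    simp only [hN, rotationGenerator_apply, inner_sub_left, inner_smul_left, hu, hv, mul_zero,
      sub_zero]
  obtain ⟨hu, hv⟩ := inner_eq_zero_of_rotationGenerator_apply_eq_zero h hker
  have hzero : N u - (a : ℂ) • u = 0 := inner_self_eq_zero.1 (horth _ hu hv)
  rw [hN, rotationGenerator_apply] at hzero
  have hcoeff := (LinearIndependent.pair_iff.1 h (-(Complex.I * ⟪v, u⟫_ℂ) - a)
    (Complex.I * ⟪u, u⟫_ℂ) (by rw [← hzero]; module)).2
  exact h.ne_zero 0 (by simpa using hcoeff)

end RotationGenerator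

section LocallyConstantSign

variable {H α : Type*} [NormedAddCommGroup H] [InnerProductSpace ℂ H] [CompleteSpace H]
  {s : SelfAdjointOp H → α}

lemma eventually_eq_of_notMem_DSet
    (hs : ∀ A B : SelfAdjointOp H, IsEdgeAsymmetric ⁅(A : H →L[ℂ] H), (B : H →L[ℂ] H)⁆ → s A = s B)
    {A : SelfAdjointOp H} (hA : (A : H →L[ℂ] H) ∉ DSet H) : ∀ᶠ B in 𝓝 A, s B = s A := by
  have : Nontrivial H := by
    by_contra hH
    rw [not_nontrivial_iff_subsingleton] at hH
    exact hA (Subsingleton.elim _ (A : H →L[ℂ] H) ▸ ofReal_smul_one_mem_DSet 0)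
  obtain ⟨x, -, hx⟩ := exists_isEdgeAsymmetric_lie A.2 hA
  let N : SelfAdjointOp H := ⟨rotationGenerator x (A.1 x), isSelfAdjoint_rotationGenerator _ _⟩
  have hcont : Continuous fun B : SelfAdjointOp H => ⁅(B : H →L[ℂ] H), (N : H →L[ℂ] H)⁆ := by
    simp only [Ring.lie_def]
    fun_prop
  filter_upwards [hcont.continuousAt (isOpen_setOf_isEdgeAsymmetric.mem_nhds hx)] with B hB
  rw [hs B N hB, hs A N hx]

/-- `rotationGenerator` as an element of `B_s(H)`. -/
noncomputable def rotationOp (u v : H) : SelfAdjointOp H :=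
  ⟨rotationGenerator u v, isSelfAdjoint_rotationGenerator u v⟩

lemma rotationOp_neg_right (u v : H) : rotationOp v (-u) = rotationOp u v :=
  Subtype.ext (rotationGenerator_neg_right u v)

lemma continuous_rotationOp_right (u : H) : Continuous (rotationOp u) := by
  refine Continuous.subtype_mk ?_ _
  unfold rotationGenerator
  fun_prop

lemma apply_rotationOp_eq_of_left_eq
    (hs : ∀ A B : SelfAdjointOp H, IsEdgeAsymmetric ⁅(A : H →L[ℂ] H), (B : H →L[ℂ] H)⁆ → s A = s B)
    (hdim : 3 ≤ Module.rank ℂ H) {u v w : H} (hv : LinearIndependent ℂ ![u, v])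
    (hw : LinearIndependent ℂ ![u, w]) : s (rotationOp u v) = s (rotationOp u w) := by
  let _ : TopologicalSpace α := ⊥
  have : DiscreteTopology α := ⟨rfl⟩
  have hu : u ≠ 0 := hv.ne_zero 0
  have hmem : ∀ y, y ∈ ((ℂ ∙ u : Submodule ℂ H) : Set H)ᶜ ↔ LinearIndependent ℂ ![u, y] :=
    fun y => by simp [LinearIndependent.pair_iff' hu, Submodule.mem_span_singleton]
  have hcont : ContinuousOn (fun y => s (rotationOp u y)) ((ℂ ∙ u : Submodule ℂ H) : Set H)ᶜ :=
    fun y hy => ContinuousAt.continuousWithinAt <| tendsto_nhds_of_eventually_eq <|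
      (continuous_rotationOp_right u).continuousAt.eventually
        (eventually_eq_of_notMem_DSet hs (rotationGenerator_notMem_DSet hdim ((hmem y).1 hy)))
  exact (isPreconnected_compl_submodule _).constant hcont ((hmem v).2 hv) ((hmem w).2 hw)

lemma apply_rotationOp_eq
    (hs : ∀ A B : SelfAdjointOp H, IsEdgeAsymmetric ⁅(A : H →L[ℂ] H), (B : H →L[ℂ] H)⁆ → s A = s B)
    (hdim : 3 ≤ Module.rank ℂ H) {u v u' v' : H} (h : LinearIndependent ℂ ![u, v])
    (h' : LinearIndependent ℂ ![u', v']) : s (rotationOp u v) = s (rotationOp u' v') := by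
  obtain ⟨w, hw, huw, huw'⟩ := exists_ne_zero_inner_eq_zero hdim u u'
  have hli := linearIndependent_pair_of_inner_eq_zero (h.ne_zero 0) hw huw
  have hli' := linearIndependent_pair_of_inner_eq_zero (h'.ne_zero 0) hw huw'
  have hneg : ∀ {x : H}, LinearIndependent ℂ ![x, w] → LinearIndependent ℂ ![w, -x] := fun hx =>
    LinearIndependent.pair_neg_right_iff.2 (LinearIndependent.pair_symm_iff.1 hx)
  calc s (rotationOp u v) = s (rotationOp u w) := apply_rotationOp_eq_of_left_eq hs hdim h hli
    _ = s (rotationOp w (-u)) := by rw [rotationOp_neg_right]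
    _ = s (rotationOp w (-u')) := apply_rotationOp_eq_of_left_eq hs hdim (hneg hli) (hneg hli')
    _ = s (rotationOp u' w) := by rw [rotationOp_neg_right]
    _ = s (rotationOp u' v') := apply_rotationOp_eq_of_left_eq hs hdim hli' h'

theorem apply_eq_of_notMem_DSet
    (hs : ∀ A B : SelfAdjointOp H, IsEdgeAsymmetric ⁅(A : H →L[ℂ] H), (B : H →L[ℂ] H)⁆ → s A = s B)
    (hdim : 3 ≤ Module.rank ℂ H) {A B : SelfAdjointOp H} (hA : (A : H →L[ℂ] H) ∉ DSet H)
    (hB : (B : H →L[ℂ] H) ∉ DSet H) : s A = s B := by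
  obtain ⟨x, hx, hAx⟩ := exists_isEdgeAsymmetric_lie A.2 hA
  obtain ⟨y, hy, hBy⟩ := exists_isEdgeAsymmetric_lie B.2 hB
  calc
    s A = s (rotationOp x (A.1 x)) := hs A (rotationOp x (A.1 x)) hAx
    _ = s (rotationOp y (B.1 y)) := apply_rotationOp_eq hs hdim hx hy
    _ = s B := (hs B (rotationOp y (B.1 y)) hBy).symm

end LocallyConstantSign

section GlobalSign

variable {H : Type*} [NormedAddCommGroup H] [InnerProductSpace ℂ H]

lemma lie_smul_add_smul_one (A B : H →L[ℂ] H) (s c s' c' : ℂ) :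
    ⁅s • A + c • 1, s' • B + c' • 1⁆ = (s * s') • ⁅A, B⁆ := by
  simp only [Ring.lie_def, mul_add, add_mul, mul_smul_comm, smul_mul_assoc, mul_one, one_mul]
  module

lemma lie_conjugate {σ : ℂ →+* ℂ} [RingHomInvPair σ σ] (V : H ≃ₛₗᵢ[σ] H) (A B : H →L[ℂ] H) :
    ⁅conjugate V A, conjugate V B⁆ = conjugate V ⁅A, B⁆ := by
  ext x
  simp [Ring.lie_def, conjugate_apply]

variable [CompleteSpace H]

lemma exists_selfAdjointOp_notMem_DSet (hdim : 3 ≤ Module.rank ℂ H) :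
    ∃ A : SelfAdjointOp H, (A : H →L[ℂ] H) ∉ DSet H := by
  have : Nontrivial H := rank_pos_iff_nontrivial.1 (three_pos.trans_le hdim)
  obtain ⟨u, hu⟩ := exists_ne (0 : H)
  obtain ⟨v, hv, huv, -⟩ := exists_ne_zero_inner_eq_zero hdim u u
  exact ⟨rotationOp u v,
    rotationGenerator_notMem_DSet hdim (linearIndependent_pair_of_inner_eq_zero hu hv huv)⟩

lemma numRange_star (T : H →L[ℂ] H) : numRange (star T) = starRingEnd ℂ '' numRange T := by
  have hstar : ∀ x, ⟪x, star T x⟫_ℂ = starRingEnd ℂ ⟪x, T x⟫_ℂ := fun x => by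
    rw [ContinuousLinearMap.star_eq_adjoint, ContinuousLinearMap.adjoint_inner_right,
      inner_conj_symm]
  ext z
  constructor
  · rintro ⟨x, hx, rfl⟩
    exact ⟨_, ⟨x, hx, rfl⟩, (hstar x).symm⟩
  · rintro ⟨_, ⟨x, hx, rfl⟩, rfl⟩
    exact ⟨x, hx, hstar x⟩

lemma conj_image_numRange_lie {A B : H →L[ℂ] H} (hA : IsSelfAdjoint A) (hB : IsSelfAdjoint B) :
    starRingEnd ℂ '' numRange ⁅A, B⁆ = -numRange ⁅A, B⁆ := by
  rw [← numRange_star, ← numRange_neg, Ring.lie_def, star_sub, star_mul, star_mul, hA.star_eq,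
    hB.star_eq, neg_sub]

namespace PreservesCommutatorRange

variable {Φ : SelfAdjointOp H → SelfAdjointOp H} {σ : ℂ →+* ℂ} [RingHomInvPair σ σ]
  [RingHomIsometric σ] {V : H ≃ₛₗᵢ[σ] H} {s c : SelfAdjointOp H → ℝ}

lemma sign_mul_sign (hΦ : PreservesCommutatorRange Φ) (hs : ∀ A, |s A| = 1)
    (hV : ∀ A, (Φ A : H →L[ℂ] H) = (s A : ℂ) • conjugate V (A : H →L[ℂ] H) + (c A : ℂ) • 1)
    {A B : SelfAdjointOp H} (hAB : IsEdgeAsymmetric ⁅(A : H →L[ℂ] H), (B : H →L[ℂ] H)⁆) :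
    (σ = RingHom.id ℂ ∧ s A * s B = 1) ∨ (σ = starRingEnd ℂ ∧ s A * s B = -1) := by
  have hW := hΦ.numRange_lie A B
  rw [hV, hV, lie_smul_add_smul_one, lie_conjugate, ← Complex.ofReal_mul] at hW
  have hsign : s A * s B = 1 ∨ s A * s B = -1 :=
    eq_or_eq_neg_of_abs_eq (by rw [abs_mul, hs, hs, one_mul])
  rcases hsign with h | h <;> rw [h] at hW <;> obtain rfl | rfl := eq_id_or_eq_starRingEnd σ
  · exact .inl ⟨rfl, h⟩
  · rw [Complex.ofReal_one, one_smul, numRange_conjugate, conj_image_numRange_lie A.2 B.2] at hW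
    exact absurd hW hAB.numRange_ne_neg
  · rw [Complex.ofReal_neg, Complex.ofReal_one, neg_smul, one_smul, numRange_neg,
      numRange_conjugate, RingHom.coe_id, Set.image_id] at hW
    exact absurd hW hAB.numRange_ne_neg
  · exact .inr ⟨rfl, h⟩

-- In the antiunitary case any two of `A`, `B`, `A + B` would have opposite signs.
lemma ringHom_eq_id (hΦ : PreservesCommutatorRange Φ) (hs : ∀ A, |s A| = 1)
    (hV : ∀ A, (Φ A : H →L[ℂ] H) = (s A : ℂ) • conjugate V (A : H →L[ℂ] H) + (c A : ℂ) • 1)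
    {A B : SelfAdjointOp H} (hAB : IsEdgeAsymmetric ⁅(A : H →L[ℂ] H), (B : H →L[ℂ] H)⁆) :
    σ = RingHom.id ℂ := by
  let C : SelfAdjointOp H := ⟨A + B, A.2.add B.2⟩
  have hAC : ⁅(A : H →L[ℂ] H), (C : H →L[ℂ] H)⁆ = ⁅(A : H →L[ℂ] H), (B : H →L[ℂ] H)⁆ := by
    simp only [C, Ring.lie_def, mul_add, add_mul, add_sub_add_left_eq_sub]
  have hCB : ⁅(C : H →L[ℂ] H), (B : H →L[ℂ] H)⁆ = ⁅(A : H →L[ℂ] H), (B : H →L[ℂ] H)⁆ := by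
    simp only [C, Ring.lie_def, mul_add, add_mul, add_sub_add_right_eq_sub]
  rcases hΦ.sign_mul_sign hs hV hAB with h | h₁
  · exact h.1
  rcases hΦ.sign_mul_sign hs hV (hAC ▸ hAB) with h | h₂
  · exact h.1
  rcases hΦ.sign_mul_sign hs hV (hCB ▸ hAB) with h | h₃
  · exact h.1
  have hsq : (s A * s B * s C) ^ 2 = -1 := by
    linear_combination s A * s C * (s C * s B) * h₁.2 - s C * s B * h₂.2 + h₃.2
  exact absurd (sq_nonneg (s A * s B * s C)) (by rw [hsq]; norm_num)

theorem exists_eq_smul_unitary_conj (hΦ : PreservesCommutatorRange Φ)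
    (hdim : 3 ≤ Module.rank ℂ H) :
    ∃ U ∈ unitary (H →L[ℂ] H), ∃ ε : ℝ, |ε| = 1 ∧ ∃ s c : SelfAdjointOp H → ℝ,
      (∀ A, |s A| = 1) ∧ (∀ A : SelfAdjointOp H, (A : H →L[ℂ] H) ∉ DSet H → s A = ε) ∧
      ∀ A, (Φ A : H →L[ℂ] H) = (s A : ℂ) • (U * (A : H →L[ℂ] H) * star U) + (c A : ℂ) • 1 := by
  obtain ⟨σ, _, _, V, hV⟩ := hΦ.exists_eq_smul_conjugate hdim
  choose s c hs hV using hV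
  obtain ⟨A₀, hA₀⟩ := exists_selfAdjointOp_notMem_DSet hdim
  obtain ⟨x, -, hx⟩ := exists_isEdgeAsymmetric_lie A₀.2 hA₀
  obtain rfl := hΦ.ringHom_eq_id hs hV (B := rotationOp x (A₀.1 x)) hx
  refine ⟨Unitary.linearIsometryEquiv.symm V, Subtype.prop _, s A₀, hs A₀, s, c, hs,
    fun A hA => apply_eq_of_notMem_DSet (fun A B hAB => ?_) hdim hA hA₀, fun A => ?_⟩
  · rcases hΦ.sign_mul_sign hs hV hAB with ⟨-, h⟩ | ⟨h, -⟩
    · have hB : s B * s B = 1 := by rw [← abs_mul_abs_self, hs, one_mul]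
      calc s A = s A * s B * s B := by rw [mul_assoc, hB, mul_one]
        _ = s B := by rw [h, one_mul]
    · exact absurd congr($h Complex.I) (by norm_num [Complex.ext_iff])
  · rw [hV, ← conjugate_eq_of_mem_unitary, Unitary.linearIsometryEquiv.apply_symm_apply]

end PreservesCommutatorRange

lemma numRange_lie_eq_of_eq_smul_unitary_conj {A B A' B' U : H →L[ℂ] H}
    (hU : U ∈ unitary (H →L[ℂ] H)) {s c s' c' : ℝ} (hs : |s| = 1) (hs' : |s'| = 1)
    (hA : A' = (s : ℂ) • (U * A * star U) + (c : ℂ) • 1)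
    (hB : B' = (s' : ℂ) • (U * B * star U) + (c' : ℂ) • 1)
    (h : s = s' ∨ A ∈ DSet H ∨ B ∈ DSet H) : numRange ⁅A, B⁆ = numRange ⁅A', B'⁆ := by
  have hconj : ⁅U * A * star U, U * B * star U⁆ = U * ⁅A, B⁆ * star U := by
    simpa only [conjugate_eq_of_mem_unitary] using
      lie_conjugate (Unitary.linearIsometryEquiv ⟨U, hU⟩) A B
  have hsymm : A ∈ DSet H ∨ B ∈ DSet H → -numRange ⁅A, B⁆ = numRange ⁅A, B⁆ := by
    rintro (hA | hB)
    · exact (numRange_lie_eq_neg_of_mem_DSet hA B).symm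
    · have hskew : ⁅A, B⁆ = -⁅B, A⁆ := (neg_sub _ _).symm
      rw [hskew, numRange_neg, neg_neg]
      exact numRange_lie_eq_neg_of_mem_DSet hB A
  have hsign : s * s' = 1 ∨ s * s' = -1 :=
    eq_or_eq_neg_of_abs_eq (by rw [abs_mul, hs, hs', one_mul])
  rw [hA, hB, lie_smul_add_smul_one, hconj, ← Complex.ofReal_mul]
  rcases hsign with hss | hss
  · rw [hss, Complex.ofReal_one, one_smul, numRange_unitary_conj hU]
  · have hne : s ≠ s' := by rintro rfl; nlinarith
    rw [hss, Complex.ofReal_neg, Complex.ofReal_one, neg_smul, one_smul, numRange_neg,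
      numRange_unitary_conj hU, hsymm (h.resolve_left hne)]

end GlobalSign

theorem stmt_3_general {H : Type*} [NormedAddCommGroup H] [InnerProductSpace ℂ H] [CompleteSpace H]
    (hdim : 3 ≤ Module.rank ℂ H)
    (Φ : {T : H →L[ℂ] H // IsSelfAdjoint T} → {T : H →L[ℂ] H // IsSelfAdjoint T})
    (hsurj : Function.Surjective Φ) :
    (∀ A B : {T : H →L[ℂ] H // IsSelfAdjoint T},
        numRange ((A : H →L[ℂ] H) * (B : H →L[ℂ] H) - (B : H →L[ℂ] H) * (A : H →L[ℂ] H)) =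
          numRange ((Φ A : H →L[ℂ] H) * (Φ B : H →L[ℂ] H) -
            (Φ B : H →L[ℂ] H) * (Φ A : H →L[ℂ] H))) ↔
      ∃ U : H →L[ℂ] H, U ∈ unitary (H →L[ℂ] H) ∧
        ∃ ε : ℝ, (ε = 1 ∨ ε = -1) ∧
          ∃ S : Set {T : H →L[ℂ] H // IsSelfAdjoint T},
            (∀ A ∈ S, (A : H →L[ℂ] H) ∈ DSet H) ∧
            ∃ f : {T : H →L[ℂ] H // IsSelfAdjoint T} → ℝ,
              ∀ A : {T : H →L[ℂ] H // IsSelfAdjoint T},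
                (A ∉ S → (Φ A : H →L[ℂ] H) =
                  (ε : ℂ) • (U * (A : H →L[ℂ] H) * star U) + (f A : ℂ) • 1) ∧
                (A ∈ S → (Φ A : H →L[ℂ] H) =
                  (-ε : ℂ) • (U * (A : H →L[ℂ] H) * star U) + (f A : ℂ) • 1) := by
  simp only [← abs_eq zero_le_one]
  constructor
  · intro hW
    obtain ⟨U, hU, ε, hε, s, c, hs, hsε, hΦ⟩ :=
      PreservesCommutatorRange.exists_eq_smul_unitary_conj ⟨hsurj, hW⟩ hdim
    refine ⟨U, hU, ε, hε, {A | s A ≠ ε}, fun A hA => not_imp_comm.1 (hsε A) hA, c, fun A =>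
      ⟨fun hA => ?_, fun hA => ?_⟩⟩
    · rw [hΦ, not_not.1 hA]
    · rw [hΦ, (abs_eq_abs.1 ((hs A).trans hε.symm)).resolve_left hA, Complex.ofReal_neg]
  · rintro ⟨U, hU, ε, hε, S, hS, f, hΦ⟩ A B
    have hsign : ∀ A : SelfAdjointOp H, ∃ s : ℝ, |s| = 1 ∧ (s = ε ∨ (A : H →L[ℂ] H) ∈ DSet H) ∧
        (Φ A : H →L[ℂ] H) = (s : ℂ) • (U * (A : H →L[ℂ] H) * star U) + (f A : ℂ) • 1 := by
      intro A
      by_cases hA : A ∈ S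
      · exact ⟨-ε, by rwa [abs_neg], .inr (hS A hA), by rw [(hΦ A).2 hA, Complex.ofReal_neg]⟩
      · exact ⟨ε, hε, .inl rfl, (hΦ A).1 hA⟩
    obtain ⟨s, hs, hsA, hA⟩ := hsign A
    obtain ⟨s', hs', hsB, hB⟩ := hsign B
    refine numRange_lie_eq_of_eq_smul_unitary_conj hU hs hs' hA hB ?_
    rcases hsA with rfl | hA
    · exact hsB.imp Eq.symm .inr
    · exact .inr (.inl hA)

theorem stmt_3 {H : Type*} [NormedAddCommGroup H] [InnerProductSpace ℂ H] [CompleteSpace H]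
    [TopologicalSpace.SeparableSpace H] (hdim : 3 ≤ Module.rank ℂ H)
    (Φ : {T : H →L[ℂ] H // IsSelfAdjoint T} → {T : H →L[ℂ] H // IsSelfAdjoint T})
    (hsurj : Function.Surjective Φ) :
    (∀ A B : {T : H →L[ℂ] H // IsSelfAdjoint T},
        numRange ((A : H →L[ℂ] H) * (B : H →L[ℂ] H) - (B : H →L[ℂ] H) * (A : H →L[ℂ] H)) =
          numRange ((Φ A : H →L[ℂ] H) * (Φ B : H →L[ℂ] H) -
            (Φ B : H →L[ℂ] H) * (Φ A : H →L[ℂ] H))) ↔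
      ∃ U : H →L[ℂ] H, U ∈ unitary (H →L[ℂ] H) ∧
        ∃ ε : ℝ, (ε = 1 ∨ ε = -1) ∧
          ∃ S : Set {T : H →L[ℂ] H // IsSelfAdjoint T},
            (∀ A ∈ S, (A : H →L[ℂ] H) ∈ DSet H) ∧
            ∃ f : {T : H →L[ℂ] H // IsSelfAdjoint T} → ℝ,
              ∀ A : {T : H →L[ℂ] H // IsSelfAdjoint T},
                (A ∉ S → (Φ A : H →L[ℂ] H) =
                  (ε : ℂ) • (U * (A : H →L[ℂ] H) * star U) + (f A : ℂ) • 1) ∧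
                (A ∈ S → (Φ A : H →L[ℂ] H) =
                  (-ε : ℂ) • (U * (A : H →L[ℂ] H) * star U) + (f A : ℂ) • 1) :=
  stmt_3_general hdim Φ hsurj
end

section
/- Let H be a complex Hilbert space of dimension at least 3, U a unitary operator on H, ε ∈ {1, −1}, S a subset of D(H), and f : B_s(H) → ℝ a functional. Define Φ : B_s(H) → B_s(H) by Φ(A) = ε·U A U* + f(A)·I if A ∉ S and Φ(A) = −ε·U A U* + f(A)·I if A ∈ S. Then W(Φ(A)Φ(B) − Φ(B)Φ(A)) = W(AB − BA) for all A, B ∈ B_s(H). -/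
open scoped InnerProductSpace

/-!
Scalars are central and `ε² = 1`, so `[Φ A, Φ B]` is the conjugate by `U` of `±[A, B]`, where the
sign is `-` exactly when one of `A` and `B` lies in `S` and the other does not. The numerical range
is invariant under unitary conjugation, so only the sign has to be removed. If `A = αP + δI`, then
`[A, B] = [P, αB]`. The symmetry `V = 2P - I` is unitary and `VP = P = PV`, so `V[P, C]V = PCV - VCP
= -[P, C]` for every `C`.
-/

section Commutator

variable {A : Type*} [Ring A]

theorem lie_smul_add_smul_one_s4 {R : Type*} [CommRing R] [Algebra R A] (s t a b : R) (X Y : A) :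
    ⁅s • X + a • (1 : A), t • Y + b • (1 : A)⁆ = (s * t) • ⁅X, Y⁆ := by
  simp only [Ring.lie_def, add_mul, mul_add, smul_mul_assoc, mul_smul_comm, one_mul, mul_one]
  module

theorem lie_conj_of_mem_unitary [StarMul A] {u : A} (hu : u ∈ unitary A) (X Y : A) :
    ⁅u * X * star u, u * Y * star u⁆ = u * ⁅X, Y⁆ * star u := by
  let conj := Unitary.conjStarAlgAut ℤ A ⟨u, hu⟩
  have map_lie : conj ⁅X, Y⁆ = ⁅conj X, conj Y⁆ := by simp only [Ring.lie_def, map_sub, map_mul]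
  exact map_lie.symm

theorem two_mul_sub_one_conj_lie_of_isIdempotentElem {p : A} (hp : IsIdempotentElem p) (c : A) :
    (2 * p - 1) * ⁅p, c⁆ * (2 * p - 1) = -⁅p, c⁆ := by
  have symmetry_mul : (2 * p - 1) * p = p := by
    rw [sub_mul, mul_assoc, hp.eq, one_mul, two_mul, add_sub_cancel_right]
  have mul_symmetry : p * (2 * p - 1) = p := by
    rw [mul_sub, two_mul, mul_add, hp.eq, mul_one, add_sub_cancel_right]
  calc (2 * p - 1) * ⁅p, c⁆ * (2 * p - 1)
      = (2 * p - 1) * p * c * (2 * p - 1) - (2 * p - 1) * c * (p * (2 * p - 1)) := by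
        rw [Ring.lie_def]; noncomm_ring
    _ = p * c * (2 * p - 1) - (2 * p - 1) * c * p := by rw [symmetry_mul, mul_symmetry]
    _ = -⁅p, c⁆ := by rw [Ring.lie_def]; noncomm_ring

end Commutator

section NumericalRange

variable {H K : Type*} [NormedAddCommGroup H] [InnerProductSpace ℂ H]
  [NormedAddCommGroup K] [InnerProductSpace ℂ K]

theorem numRange_conjContinuousAlgEquiv (e : H ≃ₗᵢ[ℂ] K) (T : H →L[ℂ] H) :
    numRange (e.toContinuousLinearEquiv.conjContinuousAlgEquiv T) = numRange T := by
  ext z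
  refine e.symm.toEquiv.exists_congr fun y => ?_
  simp [e.symm.inner_map_eq_flip]

variable [CompleteSpace H]

theorem numRange_conj_of_mem_unitary {U : H →L[ℂ] H} (hU : U ∈ unitary (H →L[ℂ] H))
    (T : H →L[ℂ] H) : numRange (U * T * star U) = numRange T :=
  numRange_conjContinuousAlgEquiv (Unitary.linearIsometryEquiv ⟨U, hU⟩) T

theorem numRange_neg_lie_of_isStarProjection {P : H →L[ℂ] H} (hP : IsStarProjection P)
    (B : H →L[ℂ] H) : numRange (-⁅P, B⁆) = numRange ⁅P, B⁆ := by
  have symmetry_selfAdjoint : IsSelfAdjoint (2 * P - 1) := by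
    simpa only [two_mul] using (hP.isSelfAdjoint.add hP.isSelfAdjoint).sub (.one _)
  rw [← numRange_conj_of_mem_unitary hP.two_mul_sub_one_mem_unitary ⁅P, B⁆, symmetry_selfAdjoint.star_eq,
    two_mul_sub_one_conj_lie_of_isIdempotentElem hP.isIdempotentElem]

theorem numRange_neg_lie_of_mem_DSet {A : H →L[ℂ] H} (hA : A ∈ DSet H) (B : H →L[ℂ] H) :
    numRange (-⁅A, B⁆) = numRange ⁅A, B⁆ := by
  obtain ⟨P, α, δ, hP, hPP, rfl⟩ := hA
  have lie_eq : ⁅(α : ℂ) • P + (δ : ℂ) • (1 : H →L[ℂ] H), B⁆ = ⁅P, (α : ℂ) • B⁆ := by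
    calc _ = ⁅(α : ℂ) • P + (δ : ℂ) • (1 : H →L[ℂ] H), (1 : ℂ) • B + (0 : ℂ) • 1⁆ := by simp
      _ = (α : ℂ) • ⁅P, B⁆ := by rw [lie_smul_add_smul_one_s4, mul_one]
      _ = ⁅P, (α : ℂ) • B⁆ := by simp only [Ring.lie_def, smul_sub, mul_smul_comm, smul_mul_assoc]
  rw [lie_eq, numRange_neg_lie_of_isStarProjection ⟨hPP, hP⟩]

theorem numRange_lie_smul_conj_add_smul_one {U : H →L[ℂ] H} (hU : U ∈ unitary (H →L[ℂ] H))
    (A B : H →L[ℂ] H) (s t a b : ℂ) :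
    numRange ⁅s • (U * A * star U) + a • (1 : H →L[ℂ] H),
        t • (U * B * star U) + b • (1 : H →L[ℂ] H)⁆ = numRange ((s * t) • ⁅A, B⁆) := by
  rw [lie_smul_add_smul_one_s4, lie_conj_of_mem_unitary hU, ← smul_mul_assoc, ← mul_smul_comm,
    numRange_conj_of_mem_unitary hU]

theorem stmt_4_general {U : H →L[ℂ] H} (hU : U ∈ unitary (H →L[ℂ] H))
    {ε : ℂ} (hε : ε = 1 ∨ ε = -1) {𝒜 : Set (H →L[ℂ] H)} {S : Set 𝒜}
    (hS : ∀ A ∈ S, (A : H →L[ℂ] H) ∈ DSet H) (f : 𝒜 → ℂ) (Φ : 𝒜 → H →L[ℂ] H)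
    (hΦ : ∀ A : 𝒜,
      (A ∉ S → Φ A = ε • (U * (A : H →L[ℂ] H) * star U) + f A • 1) ∧
      (A ∈ S → Φ A = -ε • (U * (A : H →L[ℂ] H) * star U) + f A • 1)) (A B : 𝒜) :
    numRange ⁅Φ A, Φ B⁆ = numRange ⁅(A : H →L[ℂ] H), (B : H →L[ℂ] H)⁆ := by
  have hεε : ε * ε = 1 := mul_self_eq_one_iff.mpr hε
  by_cases hA : A ∈ S <;> by_cases hB : B ∈ S
  · rw [(hΦ A).2 hA, (hΦ B).2 hB, numRange_lie_smul_conj_add_smul_one hU, neg_mul_neg, hεε,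
      one_smul]
  · rw [(hΦ A).2 hA, (hΦ B).1 hB, numRange_lie_smul_conj_add_smul_one hU, neg_mul, hεε,
      neg_one_smul, numRange_neg_lie_of_mem_DSet (hS A hA)]
  · have lie_swap : ⁅(A : H →L[ℂ] H), (B : H →L[ℂ] H)⁆ = -⁅(B : H →L[ℂ] H), (A : H →L[ℂ] H)⁆ :=
      (neg_sub _ _).symm
    rw [(hΦ A).1 hA, (hΦ B).2 hB, numRange_lie_smul_conj_add_smul_one hU, mul_neg, hεε,
      neg_one_smul, lie_swap, neg_neg, numRange_neg_lie_of_mem_DSet (hS B hB)]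
  · rw [(hΦ A).1 hA, (hΦ B).1 hB, numRange_lie_smul_conj_add_smul_one hU, hεε, one_smul]

end NumericalRange

theorem stmt_4 {H : Type*} [NormedAddCommGroup H] [InnerProductSpace ℂ H] [CompleteSpace H]
    (hdim : 3 ≤ Module.rank ℂ H)
    (U : H →L[ℂ] H) (hU : U ∈ unitary (H →L[ℂ] H))
    (ε : ℝ) (hε : ε = 1 ∨ ε = -1)
    (S : Set {T : H →L[ℂ] H // IsSelfAdjoint T})
    (hS : ∀ A ∈ S, (A : H →L[ℂ] H) ∈ DSet H)
    (f : {T : H →L[ℂ] H // IsSelfAdjoint T} → ℝ)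
    (Φ : {T : H →L[ℂ] H // IsSelfAdjoint T} → {T : H →L[ℂ] H // IsSelfAdjoint T})
    (hΦ : ∀ A : {T : H →L[ℂ] H // IsSelfAdjoint T},
      (A ∉ S → (Φ A : H →L[ℂ] H) =
        (ε : ℂ) • (U * (A : H →L[ℂ] H) * star U) + (f A : ℂ) • 1) ∧
      (A ∈ S → (Φ A : H →L[ℂ] H) =
        (-ε : ℂ) • (U * (A : H →L[ℂ] H) * star U) + (f A : ℂ) • 1)) :
    ∀ A B : {T : H →L[ℂ] H // IsSelfAdjoint T},
      numRange ((Φ A : H →L[ℂ] H) * (Φ B : H →L[ℂ] H) -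
          (Φ B : H →L[ℂ] H) * (Φ A : H →L[ℂ] H)) =
        numRange ((A : H →L[ℂ] H) * (B : H →L[ℂ] H) - (B : H →L[ℂ] H) * (A : H →L[ℂ] H)) := by
  exact stmt_4_general (𝒜 := {T | IsSelfAdjoint T}) hU (by exact_mod_cast hε) hS
    (fun A => f A) (fun A => Φ A) hΦ
end

section
/- Let H be a complex Hilbert space with dim H ≥ 3 and let A be a bounded self-adjoint operator on H. The following statements are equivalent: (1) A ∈ D(H), i.e. A = αP + δI for some orthogonal projection P and reals α, δ; (2) W(AB − BA) = −W(AB − BA) for every bounded self-adjoint operator B on H; (3) W(AB − BA) = −W(AB − BA) for every bounded self-adjoint operator B on H of rank at most 2. -/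
open scoped InnerProductSpace

/-!
If `A = α P + δ`, the unitary `2 P - 1` anticommutes with every commutator `[A, B]`, so it carries
each value of the quadratic form of `[A, B]` to its negative.

Conversely, for `B = i (u ⊗ (A u)* - A u ⊗ u*)` the commutator is `-i T` with
`T = u ⊗ (A² u)* + A² u ⊗ u* - 2 A u ⊗ (A u)*`, which is self-adjoint of trace zero. If `u`, `A u`,
`A² u` were independent, `T` would be invertible on their three-dimensional span; but there the
symmetry of `W(T)` forces the extreme eigenvalues to be opposite, so the middle one is zero.
Hence `u`, `A u`, `A² u` are dependent for every `u`. Each vector then lies in a finite-dimensional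
invariant subspace and is a sum of eigenvectors, and three distinct eigenvalues are excluded by
the Vandermonde determinant, so `(A - l) (A - m) = 0` for some reals `l ≠ m`.
-/

open Module Module.End Polynomial

section LinearAlgebra

variable {K V : Type*} [Field K] [AddCommGroup V] [Module K V] {n : ℕ}

theorem linearIndependent_pow_apply_sum_of_hasEigenvector (f : End K V) {μ : Fin n → K}
    (hμ : Function.Injective μ) {v : Fin n → V} (hv : ∀ i, f.HasEigenvector (μ i) (v i)) :
    LinearIndependent K fun k : Fin n ↦ (f ^ (k : ℕ)) (∑ i, v i) := by
  have hv_indep : LinearIndependent K v := eigenvectors_linearIndependent' f μ hμ v hv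
  rw [Fintype.linearIndependent_iff]
  intro c hc
  have hcoeff : ∑ i, (∑ k : Fin n, μ i ^ (k : ℕ) * c k) • v i = 0 := by
    rw [← hc]
    simp only [map_sum, Finset.smul_sum, Finset.sum_smul, (hv _).pow_apply, smul_smul]
    rw [Finset.sum_comm]
    simp only [mul_comm]
  exact congrFun <| Matrix.eq_zero_of_forall_index_sum_pow_mul_eq_zero hμ
    (Fintype.linearIndependent_iff.1 hv_indep _ hcoeff)

theorem encard_setOf_hasEigenvalue_lt {f : End K V}
    (h : ∀ x, ¬LinearIndependent K fun k : Fin n ↦ (f ^ (k : ℕ)) x) :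
    {μ | f.HasEigenvalue μ}.encard < n := by
  by_contra! hn
  obtain ⟨s, hs, hsn⟩ := Set.exists_subset_encard_eq hn
  have : Finite s := Set.finite_of_encard_eq_coe hsn
  let e : s ≃ Fin n := Finite.equivFinOfCardEq (by simp [Nat.card_coe_set_eq, Set.ncard, hsn])
  choose v hv using fun i ↦ HasEigenvalue.exists_hasEigenvector (hs (e.symm i).2)
  exact h _ (linearIndependent_pow_apply_sum_of_hasEigenvector f
    (Subtype.val_injective.comp e.symm.injective) hv)

theorem exists_pow_apply_mem_span_of_not_linearIndependent {f : End K V} {x : V}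
    (h : ¬LinearIndependent K fun k : Fin n ↦ (f ^ (k : ℕ)) x) :
    ∃ m, (f ^ m) x ∈ Submodule.span K (Set.range fun k : Fin m ↦ (f ^ (k : ℕ)) x) := by
  induction n with
  | zero => exact absurd linearIndependent_empty_type h
  | succ n ih =>
    by_cases hn : LinearIndependent K fun k : Fin n ↦ (f ^ (k : ℕ)) x
    · refine ⟨n, ?_⟩
      by_contra hmem
      exact h (linearIndependent_finSucc'.2 ⟨hn, hmem⟩)
    · exact ih hn

theorem exists_finiteDimensional_invariant_of_not_linearIndependent {f : End K V} {x : V}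
    (h : ¬LinearIndependent K fun k : Fin n ↦ (f ^ (k : ℕ)) x) :
    ∃ S : Submodule K V, FiniteDimensional K S ∧ x ∈ S ∧ ∀ y ∈ S, f y ∈ S := by
  obtain ⟨m, hm⟩ := exists_pow_apply_mem_span_of_not_linearIndependent h
  set S := Submodule.span K (Set.range fun k : Fin m ↦ (f ^ (k : ℕ)) x)
  have hpow : ∀ k ≤ m, (f ^ k) x ∈ S := fun k hk ↦
    hk.lt_or_eq.elim (fun hk ↦ Submodule.subset_span ⟨⟨k, hk⟩, rfl⟩) (fun hk ↦ hk ▸ hm)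
  have hinvariant : S ≤ S.comap f := by
    refine Submodule.span_le.2 ?_
    rintro _ ⟨k, rfl⟩
    rw [SetLike.mem_coe, Submodule.mem_comap, ← End.mul_apply, ← pow_succ']
    exact hpow _ k.2
  exact ⟨S, FiniteDimensional.span_of_finite K (Set.finite_range _), hpow 0 m.zero_le,
    fun y hy ↦ hinvariant hy⟩

theorem aeval_eq_zero_of_forall_hasEigenvalue_isRoot {f : End K V} {p : K[X]}
    (hf : ⨆ μ, eigenspace f μ = ⊤) (hp : ∀ μ, f.HasEigenvalue μ → p.IsRoot μ) :
    aeval f p = 0 := by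
  rw [← LinearMap.ker_eq_top, eq_top_iff, ← hf, iSup_le_iff]
  intro μ x hx
  obtain rfl | hx0 := eq_or_ne x 0
  · exact zero_mem _
  have hvec : f.HasEigenvector μ x := ⟨hx, hx0⟩
  rw [LinearMap.mem_ker, aeval_apply_of_hasEigenvector hvec,
    (hp μ (hasEigenvalue_of_hasEigenvector hvec)).eq_zero, zero_smul]

end LinearAlgebra

section SymmetricOperators

variable {𝕜 E : Type*} [RCLike 𝕜] [NormedAddCommGroup E] [InnerProductSpace 𝕜 E] {T : E →ₗ[𝕜] E}

theorem le_iSup_eigenspace_of_isSymmetric (hT : T.IsSymmetric) {S : Submodule 𝕜 E}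
    [FiniteDimensional 𝕜 S] (hS : ∀ x ∈ S, T x ∈ S) : S ≤ ⨆ μ, eigenspace T μ := by
  have htop : ⨆ μ, eigenspace (T.restrict hS) μ = ⊤ :=
    Submodule.orthogonal_eq_bot_iff.1
      (hT.restrict_invariant hS).orthogonalComplement_iSup_eigenspaces_eq_bot
  calc S = (⊤ : Submodule 𝕜 S).map S.subtype := (Submodule.map_subtype_top S).symm
    _ = ⨆ μ, (eigenspace (T.restrict hS) μ).map S.subtype := by rw [← htop, Submodule.map_iSup]
    _ ≤ ⨆ μ, eigenspace T μ := iSup_mono fun μ ↦ eigenspace_restrict_le_eigenspace T hS μ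

theorem iSup_eigenspace_eq_top_of_not_linearIndependent (hT : T.IsSymmetric) {n : ℕ}
    (h : ∀ x, ¬LinearIndependent 𝕜 fun k : Fin n ↦ (T ^ (k : ℕ)) x) :
    ⨆ μ, eigenspace T μ = ⊤ := by
  refine eq_top_iff.2 fun x _ ↦ ?_
  obtain ⟨S, _, hxS, hS⟩ := exists_finiteDimensional_invariant_of_not_linearIndependent (h x)
  exact le_iSup_eigenspace_of_isSymmetric hT hS hxS

theorem exists_ne_forall_hasEigenvalue_eq_or_eq (hT : T.IsSymmetric)
    (h : {μ | HasEigenvalue T μ}.encard ≤ 2) :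
    ∃ l m : ℝ, l ≠ m ∧ ∀ μ, HasEigenvalue T μ → μ = l ∨ μ = m := by
  obtain ⟨s, hs, -, hs2⟩ := Set.exists_superset_subset_encard_eq
    (Set.subset_univ (RCLike.re '' {μ | HasEigenvalue T μ}))
    ((Set.encard_image_le _ _).trans h) (by simp)
  obtain ⟨l, m, hlm, rfl⟩ := Set.encard_eq_two.1 hs2
  refine ⟨l, m, hlm, fun μ hμ ↦ ?_⟩
  rw [← RCLike.conj_eq_iff_re.1 (hT.conj_eigenvalue_eq_self hμ)]
  exact_mod_cast hs ⟨μ, hμ, rfl⟩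

variable [FiniteDimensional 𝕜 E] {n : ℕ} (hn : finrank 𝕜 E = n)

theorem inner_apply_self_eq_sum_eigenvalues (hT : T.IsSymmetric) (x : E) :
    ⟪x, T x⟫_𝕜 =
      ((∑ i, hT.eigenvalues hn i * ‖⟪hT.eigenvectorBasis hn i, x⟫_𝕜‖ ^ 2 : ℝ) : 𝕜) := by
  rw [← (hT.eigenvectorBasis hn).sum_inner_mul_inner, RCLike.ofReal_sum]
  refine Finset.sum_congr rfl fun i _ ↦ ?_
  rw [← hT, hT.apply_eigenvectorBasis, inner_smul_left, RCLike.conj_ofReal, mul_left_comm,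
    ← inner_conj_symm x, RCLike.conj_mul]
  push_cast
  rfl

theorem re_inner_apply_self_le_of_eigenvalues_le (hT : T.IsSymmetric) {M : ℝ}
    (hM : ∀ i, hT.eigenvalues hn i ≤ M) (x : E) : RCLike.re ⟪x, T x⟫_𝕜 ≤ M * ‖x‖ ^ 2 := by
  rw [inner_apply_self_eq_sum_eigenvalues hn hT, RCLike.ofReal_re,
    ← (hT.eigenvectorBasis hn).sum_sq_norm_inner_right, Finset.mul_sum]
  gcongr
  exact hM _

theorem le_re_inner_apply_self_of_le_eigenvalues (hT : T.IsSymmetric) {m : ℝ}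
    (hm : ∀ i, m ≤ hT.eigenvalues hn i) (x : E) : m * ‖x‖ ^ 2 ≤ RCLike.re ⟪x, T x⟫_𝕜 := by
  rw [inner_apply_self_eq_sum_eigenvalues hn hT, RCLike.ofReal_re,
    ← (hT.eigenvectorBasis hn).sum_sq_norm_inner_right, Finset.mul_sum]
  gcongr
  exact hm _

theorem hasEigenvalue_zero_of_trace_eq_zero (hT : T.IsSymmetric) (hE : finrank 𝕜 E = 3)
    (htrace : LinearMap.trace 𝕜 E T = 0)
    (hneg : ∀ x : E, ‖x‖ = 1 → ∃ y : E, ‖y‖ ≤ 1 ∧ ⟪y, T y⟫_𝕜 = -⟪x, T x⟫_𝕜) :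
    HasEigenvalue T 0 := by
  set l := hT.eigenvalues hE with hl
  set e := hT.eigenvectorBasis hE
  have hanti : Antitone l := hT.eigenvalues_antitone hE
  have hsum : l 0 + l 1 + l 2 = 0 := by
    rw [← Fin.sum_univ_three]
    exact_mod_cast (hT.trace_eq_sum_eigenvalues hE).symm.trans htrace
  have h01 : l 1 ≤ l 0 := hanti (by decide)
  have h12 : l 2 ≤ l 1 := hanti (by decide)
  have hattained : ∀ i, ∃ y : E, ‖y‖ ^ 2 ≤ 1 ∧ RCLike.re ⟪y, T y⟫_𝕜 = -l i := by
    intro i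
    obtain ⟨y, hy, hyi⟩ := hneg (e i) (e.norm_eq_one i)
    refine ⟨y, pow_le_one₀ (norm_nonneg y) hy, ?_⟩
    rw [hyi, hT.apply_eigenvectorBasis, inner_smul_right, inner_self_eq_norm_sq_to_K,
      e.norm_eq_one]
    simp [hl]
  have hle : -l 2 ≤ l 0 := by
    obtain ⟨y, hy, hy2⟩ := hattained 2
    calc -l 2 = RCLike.re ⟪y, T y⟫_𝕜 := hy2.symm
      _ ≤ l 0 * ‖y‖ ^ 2 :=
        re_inner_apply_self_le_of_eigenvalues_le hE hT (fun i ↦ hanti (Fin.zero_le i)) y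
      _ ≤ l 0 := mul_le_of_le_one_right (by linarith) hy
  have hge : l 2 ≤ -l 0 := by
    obtain ⟨y, hy, hy0⟩ := hattained 0
    calc l 2 ≤ l 2 * ‖y‖ ^ 2 := le_mul_of_le_one_right (by linarith) hy
      _ ≤ RCLike.re ⟪y, T y⟫_𝕜 :=
        le_re_inner_apply_self_of_le_eigenvalues hE hT (fun i ↦ hanti (Fin.le_last i)) y
      _ = -l 0 := hy0
  have hl1 : l 1 = 0 := by linarith
  simpa [← hl, hl1] using hT.hasEigenvalue_eigenvalues hE 1

end SymmetricOperators

section AntidiagonalOp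

open InnerProductSpace

variable (𝕜 : Type*) {E : Type*} [RCLike 𝕜] [NormedAddCommGroup E] [InnerProductSpace 𝕜 E]

/-- The operator `u ⊗ w* + w ⊗ u* - 2 v ⊗ v*`, where `u ⊗ w*` denotes `x ↦ ⟪w, x⟫ u`. For
`(u, v, w) = (x, A x, A² x)` it is a commutator of the self-adjoint operator `A`, up to a scalar. -/
noncomputable def antidiagonalOp (u v w : E) : E →L[𝕜] E :=
  rankOne 𝕜 u w + rankOne 𝕜 w u - (2 : 𝕜) • rankOne 𝕜 v v

theorem antidiagonalOp_apply (u v w x : E) :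
    antidiagonalOp 𝕜 u v w x = ⟪w, x⟫_𝕜 • u + ⟪u, x⟫_𝕜 • w - (2 * ⟪v, x⟫_𝕜) • v := by
  simp [antidiagonalOp, smul_smul]

theorem isSymmetric_antidiagonalOp (u v w : E) :
    (antidiagonalOp 𝕜 u v w : E →ₗ[𝕜] E).IsSymmetric := by
  intro x y
  simp only [ContinuousLinearMap.coe_coe, antidiagonalOp_apply, inner_add_left, inner_sub_left,
    inner_add_right, inner_sub_right, inner_smul_left, inner_smul_right, map_mul,
    inner_conj_symm, map_ofNat]
  ring

theorem trace_antidiagonalOp [FiniteDimensional 𝕜 E] (u v w : E) :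
    LinearMap.trace 𝕜 E (antidiagonalOp 𝕜 u v w : E →L[𝕜] E) =
      (2 * (RCLike.re ⟪u, w⟫_𝕜 - ‖v‖ ^ 2) : ℝ) := by
  have hre : ⟪w, u⟫_𝕜 + ⟪u, w⟫_𝕜 = 2 * (RCLike.re ⟪u, w⟫_𝕜 : 𝕜) := by
    rw [← inner_conj_symm w, add_comm, RCLike.add_conj]
  simp only [antidiagonalOp, ContinuousLinearMap.toLinearMap_sub,
    ContinuousLinearMap.toLinearMap_add, ContinuousLinearMap.toLinearMap_smul, map_sub, map_add,
    map_smul, trace_rankOne, inner_self_eq_norm_sq_to_K, smul_eq_mul, hre]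
  push_cast
  ring

theorem antidiagonalOp_basis_injective (b : Basis (Fin 3) 𝕜 E) :
    Function.Injective (antidiagonalOp 𝕜 (b 0) (b 1) (b 2)) := by
  refine (injective_iff_map_eq_zero _).2 fun x hx ↦ ?_
  have hcoeff := Fintype.linearIndependent_iff.1 b.linearIndependent
    ![⟪b 2, x⟫_𝕜, -(2 * ⟪b 1, x⟫_𝕜), ⟪b 0, x⟫_𝕜] (by
      rw [antidiagonalOp_apply] at hx
      rw [← hx, Fin.sum_univ_three]
      simp only [Matrix.cons_val]
      module)
  have horth : ∀ i, ⟪b i, x⟫_𝕜 = 0 := by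
    simpa [Fin.forall_fin_succ, and_comm, and_assoc] using hcoeff
  exact ext_inner_left_basis b fun i ↦ (horth i).trans (inner_zero_right _).symm

theorem inner_antidiagonalOp_coe (S : Submodule 𝕜 E) [S.HasOrthogonalProjection] (u v w : S)
    (x : E) :
    ⟪x, antidiagonalOp 𝕜 (u : E) v w x⟫_𝕜 =
      ⟪S.orthogonalProjectionOnto x,
        antidiagonalOp 𝕜 u v w (S.orthogonalProjectionOnto x)⟫_𝕜 := by
  simp only [antidiagonalOp_apply, inner_sub_right, inner_add_right, inner_smul_right,
    Submodule.inner_orthogonalProjectionOnto_eq_of_mem_left,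
    Submodule.inner_orthogonalProjectionOnto_eq_of_mem_right]

end AntidiagonalOp

section HermitianWedge

open InnerProductSpace

variable {H : Type*} [NormedAddCommGroup H] [InnerProductSpace ℂ H]

/-- The self-adjoint operator `i (u ⊗ v* - v ⊗ u*)`, of rank two for independent `u` and `v`; the
choice `v = A u` gives the operators against which `A` is tested. -/
noncomputable def hermitianWedge (u v : H) : H →L[ℂ] H :=
  Complex.I • (rankOne ℂ u v - rankOne ℂ v u)

theorem rank_hermitianWedge_le_two (u v : H) : (hermitianWedge u v).toLinearMap.rank ≤ 2 := by
  have hrange : (hermitianWedge u v).toLinearMap.range ≤ Submodule.span ℂ {u, v} := by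
    rintro _ ⟨x, rfl⟩
    refine Submodule.mem_span_pair.2 ⟨Complex.I * ⟪v, x⟫_ℂ, -(Complex.I * ⟪u, x⟫_ℂ), ?_⟩
    simp only [hermitianWedge, ContinuousLinearMap.coe_coe, smul_apply, sub_apply, rankOne_apply]
    module
  calc (hermitianWedge u v).toLinearMap.rank ≤ Module.rank ℂ (Submodule.span ℂ {u, v}) :=
        Submodule.rank_mono hrange
    _ ≤ Cardinal.mk ({u, v} : Set H) := rank_span_le _
    _ ≤ Cardinal.mk ({v} : Set H) + 1 := Cardinal.mk_insert_le
    _ = 2 := by rw [Cardinal.mk_singleton, one_add_one_eq_two]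

variable [CompleteSpace H]

theorem isSelfAdjoint_hermitianWedge (u v : H) : IsSelfAdjoint (hermitianWedge u v) := by
  simp only [IsSelfAdjoint, hermitianWedge, star_smul, star_sub,
    ContinuousLinearMap.star_eq_adjoint, adjoint_rankOne, RCLike.star_def, Complex.conj_I]
  module

theorem commutator_hermitianWedge {A : H →L[ℂ] H} (hA : IsSelfAdjoint A) (u : H) :
    A * hermitianWedge u (A u) - hermitianWedge u (A u) * A =
      -Complex.I • antidiagonalOp ℂ u (A u) (A (A u)) := by
  simp only [hermitianWedge, antidiagonalOp, mul_smul_comm, smul_mul_assoc, mul_sub, sub_mul,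
    ContinuousLinearMap.mul_def, comp_rankOne, rankOne_comp, hA.adjoint_eq]
  module

end HermitianWedge

theorem commutator_mul_two_mul_sub_one {R : Type*} [Ring R] {p : R} (hp : IsIdempotentElem p)
    (b : R) : (p * b - b * p) * (2 * p - 1) = -((2 * p - 1) * (p * b - b * p)) := by
  have hleft : p * (p * b) = p * b := by rw [← mul_assoc, hp.eq]
  have hright : b * p * p = b * p := by rw [mul_assoc, hp.eq]
  linear_combination (norm := noncomm_ring) 2 * hleft - 2 * hright

section NumericalRange

variable {H : Type*} [NormedAddCommGroup H] [InnerProductSpace ℂ H]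

theorem numRange_eq_neg_iff {T : H →L[ℂ] H} :
    numRange T = -numRange T ↔
      ∀ x : H, ‖x‖ = 1 → ∃ y : H, ‖y‖ = 1 ∧ ⟪y, T y⟫_ℂ = -⟪x, T x⟫_ℂ := by
  constructor
  · intro h x hx
    have hmem : ⟪x, T x⟫_ℂ ∈ -numRange T := h ▸ ⟨x, hx, rfl⟩
    exact hmem
  · intro h
    have hsub : numRange T ⊆ -numRange T := by
      rintro _ ⟨x, hx, rfl⟩
      exact h x hx
    exact hsub.antisymm (Set.neg_subset.2 hsub)

theorem numRange_smul_eq_neg_iff {c : ℂ} (hc : c ≠ 0) {T : H →L[ℂ] H} :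
    numRange (c • T) = -numRange (c • T) ↔ numRange T = -numRange T := by
  simp only [numRange_eq_neg_iff, smul_apply, inner_smul_right, ← mul_neg, mul_right_inj' hc]

theorem not_linearIndependent_of_numRange_antidiagonalOp {u v w : H}
    (huw : RCLike.re ⟪u, w⟫_ℂ = ‖v‖ ^ 2)
    (hW : numRange (antidiagonalOp ℂ u v w : H →L[ℂ] H) =
      -numRange (antidiagonalOp ℂ u v w : H →L[ℂ] H)) :
    ¬LinearIndependent ℂ ![u, v, w] := by
  intro hindep
  set S := Submodule.span ℂ (Set.range ![u, v, w])
  let b : Basis (Fin 3) ℂ S := Basis.span hindep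
  have hb (i : Fin 3) : (b i : H) = ![u, v, w] i :=
    congrArg Subtype.val (Basis.span_apply hindep i)
  have hb0 : (b 0 : H) = u := hb 0
  have hb1 : (b 1 : H) = v := hb 1
  have hb2 : (b 2 : H) = w := hb 2
  have : FiniteDimensional ℂ S := b.finiteDimensional_of_finite
  have htrace : LinearMap.trace ℂ S (antidiagonalOp ℂ (b 0) (b 1) (b 2) : S →L[ℂ] S) = 0 := by
    rw [trace_antidiagonalOp, Submodule.coe_inner, Submodule.coe_norm, hb0, hb1, hb2, huw]
    simp
  have hneg (x : S) (hx : ‖x‖ = 1) : ∃ y : S, ‖y‖ ≤ 1 ∧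
      ⟪y, antidiagonalOp ℂ (b 0) (b 1) (b 2) y⟫_ℂ =
        -⟪x, antidiagonalOp ℂ (b 0) (b 1) (b 2) x⟫_ℂ := by
    obtain ⟨y, hy, hxy⟩ := numRange_eq_neg_iff.1 hW x hx
    rw [← hb0, ← hb1, ← hb2, inner_antidiagonalOp_coe, inner_antidiagonalOp_coe,
      Submodule.orthogonalProjectionOnto_mem_subspace_eq_self] at hxy
    exact ⟨_, (S.norm_orthogonalProjectionOnto_apply_le y).trans hy.le, hxy⟩
  obtain ⟨x, hx⟩ := (hasEigenvalue_zero_of_trace_eq_zero (isSymmetric_antidiagonalOp ℂ _ _ _)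
    (by simp [finrank_eq_card_basis b]) htrace hneg).exists_hasEigenvector
  refine hx.2 (antidiagonalOp_basis_injective ℂ b ?_)
  simpa using hx.apply_eq_smul

variable [CompleteSpace H]

theorem numRange_eq_neg_of_unitary_anticommute {U T : H →L[ℂ] H}
    (hU : U ∈ unitary (H →L[ℂ] H)) (hUT : T * U = -(U * T)) : numRange T = -numRange T := by
  refine numRange_eq_neg_iff.2 fun x hx ↦
    ⟨U x, (ContinuousLinearMap.norm_map_of_mem_unitary hU x).trans hx, ?_⟩
  calc ⟪U x, T (U x)⟫_ℂ = ⟪U x, -U (T x)⟫_ℂ := congrArg (⟪U x, · x⟫_ℂ) hUT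
    _ = -⟪x, T x⟫_ℂ := by
      rw [inner_neg_right, ContinuousLinearMap.inner_map_map_of_mem_unitary hU]

theorem numRange_commutator_eq_neg_of_mem_DSet {A : H →L[ℂ] H} (hA : A ∈ DSet H)
    (B : H →L[ℂ] H) : numRange (A * B - B * A) = -numRange (A * B - B * A) := by
  obtain ⟨P, α, δ, hPself, hPidem, rfl⟩ := hA
  have hP : IsStarProjection P := ⟨hPidem, hPself⟩
  have hcomm : ((α : ℂ) • P + (δ : ℂ) • 1) * B - B * ((α : ℂ) • P + (δ : ℂ) • 1) =
      (α : ℂ) • (P * B - B * P) := by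
    simp only [add_mul, mul_add, smul_mul_assoc, mul_smul_comm, one_mul, mul_one]
    module
  refine numRange_eq_neg_of_unitary_anticommute hP.two_mul_sub_one_mem_unitary ?_
  rw [hcomm, smul_mul_assoc, mul_smul_comm, commutator_mul_two_mul_sub_one hPidem, smul_neg]

theorem mem_DSet_of_sub_mul_sub_eq_zero {A : H →L[ℂ] H} (hA : IsSelfAdjoint A) {l m : ℝ}
    (hlm : l ≠ m) (h : (A - (l : ℂ) • 1) * (A - (m : ℂ) • 1) = 0) : A ∈ DSet H := by
  have hd : ((l - m : ℝ) : ℂ) ≠ 0 := Complex.ofReal_ne_zero.2 (sub_ne_zero.2 hlm)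
  have hsq : (A - (m : ℂ) • 1) * (A - (m : ℂ) • 1) =
      ((l - m : ℝ) : ℂ) • (A - (m : ℂ) • 1) := by
    have hsplit : A - (m : ℂ) • 1 = (A - (l : ℂ) • 1) + ((l - m : ℝ) : ℂ) • 1 := by
      push_cast
      module
    nth_rw 1 [hsplit]
    rw [add_mul, h, zero_add, smul_one_mul]
  have hreal (r : ℝ) : IsSelfAdjoint (r : ℂ) := Complex.conj_ofReal r
  refine ⟨((l - m : ℝ) : ℂ)⁻¹ • (A - (m : ℂ) • 1), l - m, m, ?_, ?_, ?_⟩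
  · exact .smul (hreal _).inv₀ (hA.sub (.smul (hreal m) (.one _)))
  · rw [smul_mul_smul_comm, hsq, smul_smul, mul_assoc, inv_mul_cancel₀ hd, mul_one]
  · rw [smul_inv_smul₀ hd, sub_add_cancel]

theorem mem_DSet_of_not_linearIndependent {A : H →L[ℂ] H} (hA : IsSelfAdjoint A)
    (h : ∀ x, ¬LinearIndependent ℂ ![x, A x, A (A x)]) : A ∈ DSet H := by
  have hT : A.toLinearMap.IsSymmetric := hA.isSymmetric
  have hpow (x : H) : ¬LinearIndependent ℂ fun k : Fin 3 ↦ (A.toLinearMap ^ (k : ℕ)) x := by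
    convert! h x using 3 with k
    fin_cases k <;> simp [pow_two]
  obtain ⟨l, m, hlm, hroots⟩ := exists_ne_forall_hasEigenvalue_eq_or_eq hT
    (ENat.lt_add_one_iff (by simp) |>.1 (encard_setOf_hasEigenvalue_lt hpow))
  have hpoly : aeval A.toLinearMap ((X - C (l : ℂ)) * (X - C (m : ℂ))) = 0 :=
    aeval_eq_zero_of_forall_hasEigenvalue_isRoot
      (iSup_eigenspace_eq_top_of_not_linearIndependent hT hpow)
      fun μ hμ ↦ by simpa [sub_eq_zero] using hroots μ hμ
  refine mem_DSet_of_sub_mul_sub_eq_zero hA hlm (ContinuousLinearMap.ext fun x ↦ ?_)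
  simpa [Algebra.algebraMap_eq_smul_one] using LinearMap.congr_fun hpoly x

theorem mem_DSet_of_numRange_commutator_eq_neg {A : H →L[ℂ] H} (hA : IsSelfAdjoint A)
    (h : ∀ B : H →L[ℂ] H, IsSelfAdjoint B → LinearMap.rank B.toLinearMap ≤ 2 →
      numRange (A * B - B * A) = -numRange (A * B - B * A)) : A ∈ DSet H := by
  refine mem_DSet_of_not_linearIndependent hA fun u ↦
    not_linearIndependent_of_numRange_antidiagonalOp ?_ ?_
  · rw [← ContinuousLinearMap.coe_coe A, ← hA.isSymmetric]
    exact inner_self_eq_norm_sq _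
  · have hW := h _ (isSelfAdjoint_hermitianWedge u (A u)) (rank_hermitianWedge_le_two u (A u))
    rwa [commutator_hermitianWedge hA, numRange_smul_eq_neg_iff (by simp)] at hW

end NumericalRange

theorem stmt_5_general {H : Type*} [NormedAddCommGroup H] [InnerProductSpace ℂ H]
    [CompleteSpace H] (A : H →L[ℂ] H) (hA : IsSelfAdjoint A) :
    (A ∈ DSet H ↔
      ∀ B : H →L[ℂ] H, IsSelfAdjoint B →
        numRange (A * B - B * A) = -numRange (A * B - B * A)) ∧
    ((∀ B : H →L[ℂ] H, IsSelfAdjoint B →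
        numRange (A * B - B * A) = -numRange (A * B - B * A)) ↔
      ∀ B : H →L[ℂ] H, IsSelfAdjoint B → LinearMap.rank (B.toLinearMap) ≤ 2 →
        numRange (A * B - B * A) = -numRange (A * B - B * A)) :=
  ⟨⟨fun hD B _ ↦ numRange_commutator_eq_neg_of_mem_DSet hD B,
      fun h ↦ mem_DSet_of_numRange_commutator_eq_neg hA fun B hB _ ↦ h B hB⟩,
    ⟨fun h B hB _ ↦ h B hB, fun h B _ ↦
      numRange_commutator_eq_neg_of_mem_DSet (mem_DSet_of_numRange_commutator_eq_neg hA h) B⟩⟩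

theorem stmt_5 {H : Type*} [NormedAddCommGroup H] [InnerProductSpace ℂ H] [CompleteSpace H]
    (hdim : 3 ≤ Module.rank ℂ H) (A : H →L[ℂ] H) (hA : IsSelfAdjoint A) :
    (A ∈ DSet H ↔
      ∀ B : H →L[ℂ] H, IsSelfAdjoint B →
        numRange (A * B - B * A) = -numRange (A * B - B * A)) ∧
    ((∀ B : H →L[ℂ] H, IsSelfAdjoint B →
        numRange (A * B - B * A) = -numRange (A * B - B * A)) ↔
      ∀ B : H →L[ℂ] H, IsSelfAdjoint B → LinearMap.rank (B.toLinearMap) ≤ 2 →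
        numRange (A * B - B * A) = -numRange (A * B - B * A)) :=
  stmt_5_general A hA
end

section
/- Let H be a complex Hilbert space of dimension at least 2 and let A, B be bounded self-adjoint operators on H such that ⟨A²x, x⟩ − ⟨Ax, x⟩² = ⟨B²x, x⟩ − ⟨Bx, x⟩² for every unit vector x ∈ H. Then ⟨Ay, z⟩² = ⟨By, z⟩² for every pair of orthonormal vectors y, z ∈ H. -/
open scoped InnerProductSpace

/-!
For `x ≠ 0`, the variance of `T` in the state `x / ‖x‖`, multiplied by `‖x‖ ^ 4`, is
`⟪x, x⟫ * ⟪x, T (T x)⟫ - ⟪x, T x⟫ ^ 2`, which makes sense for every `x`. Along `x = y + u • z` with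
`|u| = 1` and `y ⟂ z` the factor `⟪x, x⟫` is constant, so the first product contains only the
frequencies `-1, 0, 1` in `u`, while the frequencies `2` and `-2` come from the square and have
coefficients `-⟪y, T z⟫ ^ 2` and `-⟪z, T y⟫ ^ 2`. The variance therefore determines both squares.
-/

section Polarization

variable {V : Type*} [AddCommGroup V] [Module ℂ V]

/-- The alternating sum of `q` over `y + u • z`, where `u` runs through the fourth roots of unity
and is weighted by `u ^ 2`. When `q (y + u • z)` has frequencies
from `-2` to `2` in `u`, only those of frequency `±2` survive. -/
def alternatingPhaseSum (q : V → ℂ) (y z : V) : ℂ :=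
  q (y + z) - q (y + Complex.I • z) + q (y - z) - q (y - Complex.I • z)

lemma alternatingPhaseSum_sub (p q : V → ℂ) (y z : V) :
    alternatingPhaseSum (fun x ↦ p x - q x) y z =
      alternatingPhaseSum p y z - alternatingPhaseSum q y z := by
  unfold alternatingPhaseSum
  ring

lemma alternatingPhaseSum_mul (f g : V →ₗ⋆[ℂ] V →ₗ[ℂ] ℂ) (y z : V) :
    alternatingPhaseSum (fun x ↦ f x x * g x x) y z =
      4 * (f y z * g y z + f z y * g z y) := by
  simp only [alternatingPhaseSum, map_add, map_sub, LinearMap.map_smulₛₗ, LinearMap.add_apply,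
    LinearMap.sub_apply, LinearMap.smul_apply, RingHom.id_apply, smul_eq_mul, Complex.conj_I]
  ring_nf
  simp only [Complex.I_sq, Complex.I_pow_four]
  ring

end Polarization

section Variance

variable {E : Type*} [NormedAddCommGroup E] [InnerProductSpace ℂ E]

/-- The variance of `T` in the state `x`, made homogeneous of degree four: it is the usual
`⟪x, T (T x)⟫ - ⟪x, T x⟫ ^ 2` when `‖x‖ = 1`, and a quartic form in `x` in general. -/
noncomputable def homogVariance (T : E →ₗ[ℂ] E) (x : E) : ℂ :=
  ⟪x, x⟫_ℂ * ⟪x, T (T x)⟫_ℂ - ⟪x, T x⟫_ℂ ^ 2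

lemma homogVariance_of_norm_eq_one (T : E →ₗ[ℂ] E) {x : E} (hx : ‖x‖ = 1) :
    homogVariance T x = ⟪x, T (T x)⟫_ℂ - ⟪x, T x⟫_ℂ ^ 2 := by
  rw [homogVariance, inner_self_eq_one_of_norm_eq_one hx, one_mul]

lemma homogVariance_smul (T : E →ₗ[ℂ] E) (c : ℂ) (x : E) :
    homogVariance T (c • x) = (starRingEnd ℂ c * c) ^ 2 * homogVariance T x := by
  simp only [homogVariance, map_smul, inner_smul_left, inner_smul_right]
  ring

lemma homogVariance_eq_of_forall_norm_eq_one {A B : E →ₗ[ℂ] E}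
    (h : ∀ x, ‖x‖ = 1 → homogVariance A x = homogVariance B x) :
    homogVariance A = homogVariance B := by
  funext x
  rcases eq_or_ne x 0 with rfl | hx
  · simp [homogVariance]
  · have hunit : ‖(‖x‖⁻¹ : ℂ) • x‖ = 1 := norm_smul_inv_norm hx
    have hscale : (‖x‖ : ℂ) • (‖x‖⁻¹ : ℂ) • x = x :=
      smul_inv_smul₀ (Complex.ofReal_ne_zero.mpr (norm_ne_zero_iff.mpr hx)) x
    rw [← hscale, homogVariance_smul A, homogVariance_smul B, h _ hunit]

lemma alternatingPhaseSum_homogVariance (T : E →ₗ[ℂ] E) {y z : E} (hyz : ⟪y, z⟫_ℂ = 0) :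
    alternatingPhaseSum (homogVariance T) y z = -4 * (⟪y, T z⟫_ℂ ^ 2 + ⟪z, T y⟫_ℂ ^ 2) := by
  have hzy : ⟪z, y⟫_ℂ = 0 := inner_eq_zero_symm.mp hyz
  let form (S : E →ₗ[ℂ] E) : E →ₗ⋆[ℂ] E →ₗ[ℂ] ℂ := (innerₛₗ ℂ).compl₂ S
  have hprod : alternatingPhaseSum (fun x ↦ ⟪x, x⟫_ℂ * ⟪x, T (T x)⟫_ℂ) y z = 0 :=
    (alternatingPhaseSum_mul (innerₛₗ ℂ) (form (T ∘ₗ T)) y z).trans (by simp [hyz, hzy])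
  have hsq : alternatingPhaseSum (fun x ↦ ⟪x, T x⟫_ℂ ^ 2) y z =
      4 * (⟪y, T z⟫_ℂ ^ 2 + ⟪z, T y⟫_ℂ ^ 2) := by
    simp only [sq]
    exact alternatingPhaseSum_mul (form T) (form T) y z
  calc alternatingPhaseSum (homogVariance T) y z
      = alternatingPhaseSum (fun x ↦ ⟪x, x⟫_ℂ * ⟪x, T (T x)⟫_ℂ) y z -
          alternatingPhaseSum (fun x ↦ ⟪x, T x⟫_ℂ ^ 2) y z := alternatingPhaseSum_sub _ _ y z
    _ = -4 * (⟪y, T z⟫_ℂ ^ 2 + ⟪z, T y⟫_ℂ ^ 2) := by rw [hprod, hsq]; ring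

/- Since `(1 + I) ^ 2 = 2 * I`, replacing `z` by `(1 + I) • z` multiplies `⟪y, T z⟫ ^ 2` by `2 * I`
and `⟪z, T y⟫ ^ 2` by `-2 * I`, which separates the two squares. -/
lemma inner_map_sq_eq_alternatingPhaseSum (T : E →ₗ[ℂ] E) {y z : E} (hyz : ⟪y, z⟫_ℂ = 0) :
    ⟪z, T y⟫_ℂ ^ 2 = -(2 * alternatingPhaseSum (homogVariance T) y z +
      Complex.I * alternatingPhaseSum (homogVariance T) y ((1 + Complex.I) • z)) / 16 := by
  have hyz' : ⟪y, (1 + Complex.I) • z⟫_ℂ = 0 := by rw [inner_smul_right, hyz, mul_zero]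
  have hsq : (1 + Complex.I) ^ 2 = 2 * Complex.I := by linear_combination Complex.I_sq
  have hconj_sq : (1 - Complex.I) ^ 2 = -2 * Complex.I := by linear_combination Complex.I_sq
  rw [alternatingPhaseSum_homogVariance T hyz, alternatingPhaseSum_homogVariance T hyz', map_smul,
    inner_smul_left, inner_smul_right, map_add, map_one, Complex.conj_I, ← sub_eq_add_neg,
    mul_pow, mul_pow, hsq, hconj_sq]
  linear_combination (⟪z, T y⟫_ℂ ^ 2 - ⟪y, T z⟫_ℂ ^ 2) / 2 * Complex.I_sq

theorem stmt_10_general {A B : E →ₗ[ℂ] E}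
    (hvar : ∀ x : E, ‖x‖ = 1 →
      ⟪x, A (A x)⟫_ℂ - ⟪x, A x⟫_ℂ ^ 2 = ⟪x, B (B x)⟫_ℂ - ⟪x, B x⟫_ℂ ^ 2)
    {y z : E} (hyz : ⟪y, z⟫_ℂ = 0) :
    ⟪z, A y⟫_ℂ ^ 2 = ⟪z, B y⟫_ℂ ^ 2 := by
  have hAB : homogVariance A = homogVariance B :=
    homogVariance_eq_of_forall_norm_eq_one fun x hx ↦ by
      simpa only [homogVariance_of_norm_eq_one _ hx] using hvar x hx
  rw [inner_map_sq_eq_alternatingPhaseSum A hyz, hAB,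
    ← inner_map_sq_eq_alternatingPhaseSum B hyz]

end Variance

theorem stmt_10 {H : Type*} [NormedAddCommGroup H] [InnerProductSpace ℂ H] [CompleteSpace H]
    (hdim : 2 ≤ Module.rank ℂ H)
    (A B : H →L[ℂ] H) (hA : IsSelfAdjoint A) (hB : IsSelfAdjoint B)
    (hvar : ∀ x : H, ‖x‖ = 1 →
      ⟪x, A (A x)⟫_ℂ - ⟪x, A x⟫_ℂ ^ 2 = ⟪x, B (B x)⟫_ℂ - ⟪x, B x⟫_ℂ ^ 2) :
    ∀ y z : H, ‖y‖ = 1 → ‖z‖ = 1 → ⟪y, z⟫_ℂ = 0 →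
      ⟪z, A y⟫_ℂ ^ 2 = ⟪z, B y⟫_ℂ ^ 2 :=
  fun _ _ _ _ hyz ↦ stmt_10_general (A := A.toLinearMap) (B := B.toLinearMap) hvar hyz
end
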